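/- arXiv:2206.04247 — 6 statements merged into one kernel-verified Lean document; each statement's English description precedes it below -/
import Mathlib

section
/- Let N ≥ 2, μ₁ ∈ ℝ and μ₂ > -(N-2-μ₁)²/4. Set τ₊ = ((2-N+μ₁) + √((2-N+μ₁)² + 4μ₂))/2 and τ₋ = ((2-N+μ₁) - √((2-N+μ₁)² + 4μ₂))/2. Then for every ξ ∈ C²_c(ℝ^N) one has ∫_{ℝ^N} |x|^{τ₋} · ( -Δξ(x) + (μ₁ - 2τ₊)|x|^{-2} x·∇ξ(x) ) · |x|^{τ₊-μ₁} dx = √((2-N+μ₁)² + 4μ₂) · |𝕊^{N-1}| · ξ(0), where |𝕊^{N-1}| is the surface measure of the unit sphere in ℝ^N. -/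
open MeasureTheory Filter Metric Set Topology

noncomputable section

/-- Euclidean space `ℝ^N`. -/
abbrev E (N : ℕ) := EuclideanSpace ℝ (Fin N)

/-- The Laplacian, as the sum of second derivatives in the coordinate directions. -/
def lap (N : ℕ) (u : E N → ℝ) (x : E N) : ℝ :=
  ∑ i, fderiv ℝ (fun y => fderiv ℝ u y (EuclideanSpace.single i 1)) x (EuclideanSpace.single i 1)

/-- The CKN operator `ℒ_{μ₁,μ₂} u = -Δu + μ₁|x|⁻² x·∇u + μ₂|x|⁻² u`. -/
def ckn (N : ℕ) (μ₁ μ₂ : ℝ) (u : E N → ℝ) (x : E N) : ℝ :=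
  -lap N u x + μ₁ / ‖x‖ ^ 2 * fderiv ℝ u x x + μ₂ / ‖x‖ ^ 2 * u x

/-- `τ₊(μ₁,μ₂)`. -/
def tauPlus (N : ℕ) (μ₁ μ₂ : ℝ) : ℝ :=
  ((2 - (N : ℝ) + μ₁) + Real.sqrt ((2 - (N : ℝ) + μ₁) ^ 2 + 4 * μ₂)) / 2

/-- `τ₋(μ₁,μ₂)`. -/
def tauMinus (N : ℕ) (μ₁ μ₂ : ℝ) : ℝ :=
  ((2 - (N : ℝ) + μ₁) - Real.sqrt ((2 - (N : ℝ) + μ₁) ^ 2 + 4 * μ₂)) / 2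

/-- Surface measure of the unit sphere `𝕊^{N-1}` in `ℝ^N`. -/
def sphereArea (N : ℕ) : ℝ := N * (volume (ball (0 : E N) 1)).toReal

/-- Local β-Hölder continuity of `f` on a set `s`. -/
def LocHolderOn (N : ℕ) (β : ℝ) (f : E N → ℝ) (s : Set (E N)) : Prop :=
  ∀ x ∈ s, ∃ t ∈ nhdsWithin x s, ∃ C : NNReal, HolderOnWith C β.toNNReal f t

lemma int_aux (N : ℕ) (hN : 2 ≤ N) (p : ℝ) (hp : p < N) (h : E N → ℝ) (hc : Continuous h)
    (hs : HasCompactSupport h) : Integrable (fun x : E N => ‖x‖ ^ (-p) * h x) := by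
  have : Nonempty (Fin N) := ⟨⟨0, by omega⟩⟩
  obtain ⟨C, hC⟩ := hc.bounded_above_of_compact_support hs
  obtain ⟨R, hR⟩ := hs.isCompact.isBounded.subset_ball (0 : E N)
  have h1 : IntegrableOn (fun x : E N => ‖x‖ ^ (-p)) (ball (0 : E N) R) := by
    refine (integrableOn_fun_norm_addHaar (E := E N) volume (f := fun r => r ^ (-p)) (r := R)).2 ?_
    have h2 : IntegrableOn (fun r : ℝ => r ^ ((N : ℝ) - 1 - p)) (Ioo 0 R) :=
      by
      rcases lt_or_ge 0 R with hR0 | hR0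
      · exact (intervalIntegral.integrableOn_Ioo_rpow_iff hR0).2 (by linarith)
      · rw [Ioo_eq_empty (by linarith)]; exact integrableOn_empty
    refine h2.congr_fun (fun r hr => ?_) measurableSet_Ioo
    have : 0 < r := hr.1
    simp only [finrank_euclideanSpace, Fintype.card_fin, smul_eq_mul]
    rw [← Real.rpow_natCast, ← Real.rpow_add this, Nat.cast_sub (by omega)]
    congr 1; push_cast; ring
  have h3 : IntegrableOn (fun x : E N => ‖x‖ ^ (-p) * h x) (ball (0 : E N) R) :=
    h1.mul_bdd (c := C) hc.aestronglyMeasurable (Eventually.of_forall hC)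
  refine (integrableOn_iff_integrable_of_support_subset ?_).1 h3
  intro x hx
  exact hR (subset_tsupport _ (right_ne_zero_of_mul hx))

lemma int_aux' (N : ℕ) (hN : 2 ≤ N) (g : E N → (E N →L[ℝ] ℝ)) (hc : Continuous g)
    (hs : HasCompactSupport g) : Integrable (fun x : E N => ‖x‖ ^ (-(N : ℝ)) * g x x) := by
  refine (int_aux N hN (N - 1) (by linarith) (fun x => ‖g x‖) hc.norm hs.norm).mono' ?_ ?_
  · refine AEStronglyMeasurable.mul ?_ ?_
    · exact (measurable_norm.pow_const _).aestronglyMeasurable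
    · exact (hc.clm_apply continuous_id).aestronglyMeasurable
  · have : Nonempty (Fin N) := ⟨⟨0, by omega⟩⟩
    have : ∀ᵐ x : E N, x ≠ 0 := by simp [ae_iff]
    filter_upwards [this] with x hx
    have hx' : 0 < ‖x‖ := norm_pos_iff.2 hx
    rw [norm_mul, Real.norm_of_nonneg (by positivity)]
    have e : ‖x‖ ^ (-((N : ℝ) - 1)) = ‖x‖ ^ (-(N : ℝ)) * ‖x‖ := by
      rw [show -((N : ℝ) - 1) = -(N : ℝ) + 1 by ring, Real.rpow_add hx', Real.rpow_one]
    rw [e, mul_assoc, mul_comm ‖x‖]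
    gcongr
    exact (g x).le_opNorm x

lemma polar (N : ℕ) (hN : 2 ≤ N) (F : E N → ℝ) (hF : Integrable F) :
    ∫ x, F x = ∫ s : sphere (0 : E N) 1, (∫ r in Ioi (0 : ℝ), r ^ (N - 1) * F (r • s.1))
      ∂(volume : Measure (E N)).toSphere := by
  have : Nonempty (Fin N) := ⟨⟨0, by omega⟩⟩
  set μ : Measure (E N) := volume
  have hd : Module.finrank ℝ (E N) = N := by simp
  have mp := μ.measurePreserving_homeomorphUnitSphereProd
  rw [hd] at mp
  let G : sphere (0 : E N) 1 × Ioi (0 : ℝ) → ℝ := fun q => F (q.2.1 • q.1.1)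
  have hG : ∀ x : ({0}ᶜ : Set (E N)), G (homeomorphUnitSphereProd (E N) x) = F x := by
    intro x
    have : ‖x.1‖ ≠ 0 := norm_ne_zero_iff.2 x.2
    simp [G, smul_smul, this]
  have hi : Integrable G (μ.toSphere.prod (.volumeIoiPow (N - 1))) := by
    rw [← mp.integrable_comp_emb (Homeomorph.measurableEmbedding _)]
    have : G ∘ (homeomorphUnitSphereProd (E N)) = F ∘ Subtype.val := funext hG
    rw [this, ← integrableOn_iff_comap_subtypeVal (by measurability)]
    exact hF.integrableOn
  calc ∫ x, F x = ∫ x : ({(0)}ᶜ : Set (E N)), F x ∂(μ.comap (↑)) := by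
        rw [integral_subtype_comap (measurableSet_singleton _).compl F,
          restrict_compl_singleton]
    _ = ∫ x : ({(0)}ᶜ : Set (E N)), G (homeomorphUnitSphereProd (E N) x) ∂(μ.comap (↑)) := by
        simp_rw [hG]
    _ = ∫ q, G q ∂(μ.toSphere.prod (.volumeIoiPow (N - 1))) :=
        mp.integral_comp (Homeomorph.measurableEmbedding _) G
    _ = _ := by
      rw [integral_prod _ hi]
      congr 1
      ext s
      simp only [Measure.volumeIoiPow, ENNReal.ofReal]
      rw [integral_withDensity_eq_integral_smul, 
        integral_subtype_comap measurableSet_Ioi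
          fun a : ℝ ↦ Real.toNNReal (a ^ (N - 1)) • F (a • s.1),
        setIntegral_congr_fun measurableSet_Ioi fun x hx ↦ ?_]
      · rw [NNReal.smul_def, Real.coe_toNNReal _ (pow_nonneg hx.out.le _), smul_eq_mul]
      · exact (measurable_subtype_coe.pow_const _).real_toNNReal

lemma lemA (N : ℕ) (hN : 2 ≤ N) (ξ : E N → ℝ) (hξ : ContDiff ℝ 2 ξ) (hξc : HasCompactSupport ξ) :
    ∫ x : E N, ‖x‖ ^ (-(N : ℝ)) * fderiv ℝ ξ x x = - sphereArea N * ξ 0 := by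
  have : Nonempty (Fin N) := ⟨⟨0, by omega⟩⟩
  have hI := int_aux' N hN (fderiv ℝ ξ) (hξ.continuous_fderiv (by norm_num)) (hξc.fderiv (𝕜 := ℝ))
  rw [polar N hN _ hI]
  have key : ∀ s : sphere (0 : E N) 1,
      ∫ r in Ioi (0 : ℝ), r ^ (N - 1) * (‖r • s.1‖ ^ (-(N : ℝ)) * fderiv ℝ ξ (r • s.1) (r • s.1))
        = - ξ 0 := by
    intro s
    have hs : ‖s.1‖ = 1 := by simp
    have hs0 : s.1 ≠ 0 := by intro h; simp [h] at hs
    have h1 : ContDiff ℝ 1 (fun r : ℝ => ξ (r • s.1)) :=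
      (hξ.of_le (by norm_num)).comp (contDiff_id.smul contDiff_const)
    have h2 : HasCompactSupport (fun r : ℝ => ξ (r • s.1)) :=
      hξc.comp_isClosedEmbedding (isClosedEmbedding_smul_left hs0)
    have h3 := h2.integral_Ioi_deriv_eq h1 0
    rw [zero_smul] at h3
    rw [← h3]
    refine setIntegral_congr_fun measurableSet_Ioi fun r hr => ?_
    have hr : 0 < r := hr
    have hd : HasDerivAt (fun r : ℝ => ξ (r • s.1)) (fderiv ℝ ξ (r • s.1) s.1) r := by
      have := ((hξ.differentiable (by norm_num)) (r • s.1)).hasFDerivAt.comp_hasDerivAt r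
        ((hasDerivAt_id r).smul_const s.1)
      rw [one_smul] at this
      exact this
    rw [hd.deriv, norm_smul, hs, mul_one, Real.norm_of_nonneg hr.le, map_smul, smul_eq_mul,
      Real.rpow_neg hr.le, Real.rpow_natCast, show r ^ N = r ^ (N - 1) * r by
        rw [← pow_succ]; congr 1; omega]
    field_simp
  simp_rw [key]
  simp [sphereArea, measureReal_def]

lemma lemB (N : ℕ) (hN : 2 ≤ N) (g : E N → ℝ) (hg : ContDiff ℝ 1 g) (hgc : HasCompactSupport g)
    (i : Fin N) :
    ∫ x : E N, ‖x‖ ^ (2 - (N : ℝ)) * fderiv ℝ g x (EuclideanSpace.single i 1)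
      = ((N : ℝ) - 2) * ∫ x : E N, ‖x‖ ^ (-(N : ℝ)) * (x i * g x) := by
  have : Nonempty (Fin N) := ⟨⟨0, by omega⟩⟩
  have hN' : (2 : ℝ) ≤ N := by exact_mod_cast hN
  have ae0 : ∀ᵐ x : E N, x ≠ 0 := by simp [ae_iff]
  set v : E N := EuclideanSpace.single i 1
  have hgd : Continuous (fun x => fderiv ℝ g x v) :=
    (hg.continuous_fderiv (by norm_num)).clm_apply continuous_const
  have hgdc : HasCompactSupport (fun x => fderiv ℝ g x v) := hgc.fderiv_apply (𝕜 := ℝ) v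
  have hxg : Continuous (fun x : E N => x i * g x) := by
    have := hg.continuous
    fun_prop
  have hxgc : HasCompactSupport (fun x : E N => x i * g x) := hgc.mul_left
  -- smooth identity
  have reg : ∀ ε : ℝ, 0 < ε →
      ∫ x : E N, (‖x‖ ^ 2 + ε) ^ ((2 - (N : ℝ)) / 2) * fderiv ℝ g x v
      = ((N : ℝ) - 2) * ∫ x : E N, (‖x‖ ^ 2 + ε) ^ (-(N : ℝ) / 2) * (x i * g x) := by
    intro ε hε
    have pos : ∀ x : E N, 0 < ‖x‖ ^ 2 + ε := fun x => by positivity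
    have cr : ∀ a : ℝ, Continuous (fun x : E N => (‖x‖ ^ 2 + ε) ^ a) := fun a =>
      Continuous.rpow_const (by fun_prop) fun x => Or.inl (pos x).ne'
    have hd : ∀ x : E N, HasFDerivAt (fun x : E N => (‖x‖ ^ 2 + ε) ^ ((2 - (N : ℝ)) / 2))
        ((((2 - (N : ℝ)) / 2) * (‖x‖ ^ 2 + ε) ^ ((2 - (N : ℝ)) / 2 - 1)) •
          (2 • innerSL ℝ x)) x := fun x =>
      ((hasStrictFDerivAt_norm_sq x).hasFDerivAt.add_const ε).rpow_const (Or.inl (pos x).ne')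
    have hdv : ∀ x : E N, fderiv ℝ (fun x : E N => (‖x‖ ^ 2 + ε) ^ ((2 - (N : ℝ)) / 2)) x v
        = (2 - (N : ℝ)) * ((‖x‖ ^ 2 + ε) ^ (-(N : ℝ) / 2) * x i) := by
      intro x
      rw [(hd x).fderiv, show (2 - (N : ℝ)) / 2 - 1 = -(N : ℝ) / 2 by ring]
      simp [v, EuclideanSpace.inner_single_right]
      ring
    rw [integral_mul_fderiv_eq_neg_fderiv_mul_of_integrable]
    · simp_rw [hdv]
      rw [← integral_const_mul, ← integral_neg]
      congr 1; ext x; ring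
    · simp_rw [hdv]
      have : Continuous fun x : E N => (2 - (N : ℝ)) * ((‖x‖ ^ 2 + ε) ^ (-(N : ℝ) / 2)) * (x i * g x) :=
        (continuous_const.mul (cr _)).mul hxg
      refine (this.integrable_of_hasCompactSupport hxgc.mul_left).congr ?_
      exact Eventually.of_forall fun x => by simp only; ring
    · exact ((cr _).mul hgd).integrable_of_hasCompactSupport hgdc.mul_left
    · exact ((cr _).mul hg.continuous).integrable_of_hasCompactSupport hgc.mul_left
    · exact fun x _ => (hd x).differentiableAt
    · exact fun x _ => hg.differentiable (by norm_num) x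
  -- limits
  have lim : ∀ (a : ℝ) (h : E N → ℝ), 0 ≤ a → Continuous h →
      Integrable (fun x : E N => ‖x‖ ^ (-a) * h x) →
      Tendsto (fun ε : ℝ => ∫ x : E N, (‖x‖ ^ 2 + ε) ^ (-a / 2) * h x) (𝓝[>] 0)
        (𝓝 (∫ x : E N, ‖x‖ ^ (-a) * h x)) := by
    intro a h ha hc hi
    have sq : ∀ x : E N, ‖x‖ ^ (-a) = (‖x‖ ^ 2) ^ (-a / 2) := by
      intro x
      rw [← Real.rpow_natCast, ← Real.rpow_mul (norm_nonneg x)]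
      congr 1; push_cast; ring
    refine tendsto_integral_filter_of_dominated_convergence (fun x => ‖‖x‖ ^ (-a) * h x‖) ?_ ?_
      hi.norm ?_
    · refine Eventually.of_forall fun ε => AEStronglyMeasurable.mul ?_ hc.aestronglyMeasurable
      exact (((measurable_norm.pow_const 2).add_const ε).pow_const _).aestronglyMeasurable
    · filter_upwards [self_mem_nhdsWithin] with ε hε
      have hε : 0 < ε := hε
      filter_upwards [ae0] with x hx
      have hx' : 0 < ‖x‖ := norm_pos_iff.2 hx
      rw [norm_mul, norm_mul, sq, Real.norm_of_nonneg (by positivity : 0 ≤ (‖x‖ ^ 2 + ε) ^ (-a / 2)),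
        Real.norm_of_nonneg (by positivity : 0 ≤ (‖x‖ ^ 2) ^ (-a / 2))]
      refine mul_le_mul_of_nonneg_right ?_ (norm_nonneg _)
      exact Real.rpow_le_rpow_of_nonpos (by positivity) (by linarith) (by linarith)
    · filter_upwards [ae0] with x hx
      have hx' : 0 < ‖x‖ := norm_pos_iff.2 hx
      refine Tendsto.mul_const _ ?_
      rw [sq]
      have : Tendsto (fun ε : ℝ => ‖x‖ ^ 2 + ε) (𝓝[>] 0) (𝓝 (‖x‖ ^ 2)) := by
        have h : Continuous (fun ε : ℝ => ‖x‖ ^ 2 + ε) := by fun_prop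
        simpa using (h.tendsto 0).mono_left nhdsWithin_le_nhds
      exact this.rpow_const (Or.inl (by positivity))
  have l1 := lim ((N : ℝ) - 2) _ (by linarith) hgd (int_aux N hN _ (by linarith) _ hgd hgdc)
  have i2 : Integrable (fun x : E N => ‖x‖ ^ (-(N : ℝ)) * (x i * g x)) := by
    have := int_aux' N hN (fun x => g x • (EuclideanSpace.proj i : E N →L[ℝ] ℝ))
      (hg.continuous.smul continuous_const) hgc.smul_right
    refine this.congr (Eventually.of_forall fun x => ?_)
    simp [mul_comm]
  have l2 := (lim (N : ℝ) _ (by linarith) hxg i2).const_mul ((N : ℝ) - 2)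
  rw [show -((N : ℝ) - 2) = 2 - N by ring] at l1
  refine tendsto_nhds_unique l1 (l2.congr' ?_)
  filter_upwards [self_mem_nhdsWithin] with ε hε
  exact (reg ε hε).symm

/-- weighted distributional identity for the fundamental solution
`Φ(x) = |x|^{τ₋}` in the non-critical case `μ₂ > -(N-2-μ₁)²/4`. -/
theorem stmt0 (N : ℕ) (hN : 2 ≤ N) (μ₁ μ₂ : ℝ)
    (hμ₂ : -((N : ℝ) - 2 - μ₁) ^ 2 / 4 < μ₂)
    (ξ : E N → ℝ) (hξ : ContDiff ℝ 2 ξ) (hξc : HasCompactSupport ξ) :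
    ∫ x : E N, ‖x‖ ^ tauMinus N μ₁ μ₂ *
        (-lap N ξ x + (μ₁ - 2 * tauPlus N μ₁ μ₂) / ‖x‖ ^ 2 * fderiv ℝ ξ x x) *
        ‖x‖ ^ (tauPlus N μ₁ μ₂ - μ₁) =
      Real.sqrt ((2 - (N : ℝ) + μ₁) ^ 2 + 4 * μ₂) * sphereArea N * ξ 0 := by
  have : Nonempty (Fin N) := ⟨⟨0, by omega⟩⟩
  have ae0 : ∀ᵐ x : E N, x ≠ 0 := by simp [ae_iff]
  set s := Real.sqrt ((2 - (N : ℝ) + μ₁) ^ 2 + 4 * μ₂) with hs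
  have hsum : tauMinus N μ₁ μ₂ + (tauPlus N μ₁ μ₂ - μ₁) = 2 - N := by
    unfold tauMinus tauPlus; ring
  have hcoef : μ₁ - 2 * tauPlus N μ₁ μ₂ = N - 2 - s := by
    unfold tauPlus; rw [← hs]; ring
  set v : Fin N → E N := fun i => EuclideanSpace.single i 1 with hv
  have hC1 : ∀ i, ContDiff ℝ 1 (fun y => fderiv ℝ ξ y (v i)) := fun i =>
    (hξ.fderiv_right (by norm_num)).clm_apply contDiff_const
  have hCs : ∀ i, HasCompactSupport (fun y => fderiv ℝ ξ y (v i)) := fun i =>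
    hξc.fderiv_apply (𝕜 := ℝ) (v i)
  have hIA := int_aux' N hN (fderiv ℝ ξ) (hξ.continuous_fderiv (by norm_num)) (hξc.fderiv (𝕜 := ℝ))
  have hIB : ∀ i, Integrable (fun x : E N => ‖x‖ ^ (2 - (N : ℝ)) *
      fderiv ℝ (fun y => fderiv ℝ ξ y (v i)) x (v i)) := fun i => by
    have := int_aux N hN (N - 2) (by linarith)
      (fun x => fderiv ℝ (fun y => fderiv ℝ ξ y (v i)) x (v i))
      (((hC1 i).continuous_fderiv (by norm_num)).clm_apply continuous_const)
      ((hCs i).fderiv_apply (𝕜 := ℝ) (v i))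
    rwa [show -((N : ℝ) - 2) = 2 - N by ring] at this
  have hIC : ∀ i, Integrable (fun x : E N => ‖x‖ ^ (-(N : ℝ)) * (x i * fderiv ℝ ξ x (v i))) := by
    intro i
    have := int_aux' N hN (fun x => fderiv ℝ ξ x (v i) • (EuclideanSpace.proj i : E N →L[ℝ] ℝ))
      ((hC1 i).continuous.smul continuous_const) (hCs i).smul_right
    refine this.congr (Eventually.of_forall fun x => ?_)
    simp [mul_comm]
  have hexp : ∀ x : E N, fderiv ℝ ξ x x = ∑ i, x i * fderiv ℝ ξ x (v i) := by
    intro x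
    have : x = ∑ i, x i • v i := by
      ext j
      simp [v, Pi.single_apply]
    conv_lhs => rw [this, map_sum]
    simp only [map_smul, smul_eq_mul, ← this]
  have hlap : ∫ x : E N, ‖x‖ ^ (2 - (N : ℝ)) * lap N ξ x
      = ((N : ℝ) - 2) * ∫ x : E N, ‖x‖ ^ (-(N : ℝ)) * fderiv ℝ ξ x x := by
    simp_rw [hexp, lap, Finset.mul_sum]
    rw [integral_finsetSum _ fun i _ => hIB i, integral_finsetSum _ fun i _ => hIC i, Finset.mul_sum]
    exact Finset.sum_congr rfl fun i _ => lemB N hN _ (hC1 i) (hCs i) i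
  have hIL : Integrable (fun x : E N => ‖x‖ ^ (2 - (N : ℝ)) * lap N ξ x) := by
    simp_rw [lap, Finset.mul_sum]
    exact integrable_finsetSum _ fun i _ => hIB i
  have hcongr : ∫ x : E N, ‖x‖ ^ tauMinus N μ₁ μ₂ *
        (-lap N ξ x + (μ₁ - 2 * tauPlus N μ₁ μ₂) / ‖x‖ ^ 2 * fderiv ℝ ξ x x) *
        ‖x‖ ^ (tauPlus N μ₁ μ₂ - μ₁) =
      ∫ x : E N, (((N : ℝ) - 2 - s) * (‖x‖ ^ (-(N : ℝ)) * fderiv ℝ ξ x x)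
        - ‖x‖ ^ (2 - (N : ℝ)) * lap N ξ x) := by
    refine integral_congr_ae ?_
    filter_upwards [ae0] with x hx
    have hx' : 0 < ‖x‖ := norm_pos_iff.2 hx
    have e1 : ‖x‖ ^ tauMinus N μ₁ μ₂ * ‖x‖ ^ (tauPlus N μ₁ μ₂ - μ₁) = ‖x‖ ^ (2 - (N : ℝ)) := by
      rw [← Real.rpow_add hx', hsum]
    have e2 : ‖x‖ ^ (2 - (N : ℝ)) = ‖x‖ ^ 2 * ‖x‖ ^ (-(N : ℝ)) := by
      rw [sub_eq_add_neg, Real.rpow_add hx']; norm_num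
    rw [mul_right_comm, e1, hcoef, e2]
    field_simp
    ring
  rw [hcongr, integral_sub (hIA.const_mul _) hIL, integral_const_mul, hlap, lemA N hN ξ hξ hξc]
  ring
end
end

section
/- Let N ≥ 2, μ₁ ∈ ℝ and μ₂ = -(N-2-μ₁)²/4. Set τ₀ = (2-N+μ₁)/2 (so that τ₊ = τ₋ = τ₀) and Φ(x) = -|x|^{τ₀} ln|x|. Then for every ξ ∈ C²_c(ℝ^N) one has ∫_{ℝ^N} Φ(x) · ( -Δξ(x) + (μ₁ - 2τ₀)|x|^{-2} x·∇ξ(x) ) · |x|^{τ₀-μ₁} dx = |𝕊^{N-1}| · ξ(0), where |𝕊^{N-1}| is the surface measure of the unit sphere in ℝ^N. -/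
open MeasureTheory Filter Metric Set Topology

noncomputable section

lemma line_zero (n : ℕ) (hn : 1 ≤ n) (i : Fin (n + 1)) (f f' : E (n + 1) → ℝ)
    (hd : ∀ x, x ≠ 0 → HasLineDerivAt ℝ f (f' x) x (EuclideanSpace.single i 1))
    (hf : Integrable f) (hf' : Integrable f') : ∫ x, f' x = 0 := by
  have e1 := (PiLp.volume_preserving_toLp (Fin (n + 1)))
  have emb1 : MeasurableEmbedding (WithLp.toLp 2 : (Fin (n + 1) → ℝ) → E (n + 1)) :=
    (MeasurableEquiv.toLp 2 (Fin (n + 1) → ℝ)).measurableEmbedding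
  have e2 := (volume_preserving_piFinSuccAbove (fun _ : Fin (n + 1) => ℝ) i).symm
  have emb2 := (MeasurableEquiv.piFinSuccAbove (fun _ : Fin (n + 1) => ℝ) i).symm.measurableEmbedding
  have e := e1.comp e2
  have emb := emb1.comp emb2
  have hI := (e.integrable_comp_emb emb).2 hf
  have hI' := (e.integrable_comp_emb emb).2 hf'
  rw [← e.integral_comp emb]
  rw [Measure.volume_eq_prod] at hI hI' ⊢
  have h1 := hI.prod_left_ae
  have h1' := hI'.prod_left_ae
  refine (integral_prod_symm _ hI').trans ?_
  have : Nonempty (Fin n) := ⟨⟨0, hn⟩⟩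
  have hne : ∀ᵐ y : (Fin n → ℝ), y ≠ 0 := by
    simp [ae_iff]
  apply integral_eq_zero_of_ae
  filter_upwards [h1, h1', hne] with y hy hy' hy0
  refine integral_eq_zero_of_hasDerivAt_of_integrable (fun t => ?_) hy' hy
  have hx : (WithLp.toLp 2 (i.insertNth t y : Fin (n + 1) → ℝ) : E (n + 1)) ≠ 0 := by
    intro h
    apply hy0
    funext j
    have := congrArg (fun z : E (n + 1) => z (i.succAbove j)) h
    simpa using this
  have := hd _ hx
  unfold HasLineDerivAt at this
  have h2 : HasDerivAt (fun s : ℝ => s - t) 1 t := (hasDerivAt_id t).sub_const t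
  have h3 := HasDerivAt.comp (h₂ := fun s : ℝ => f ((WithLp.toLp 2 (i.insertNth t y : Fin (n + 1) → ℝ) : E (n + 1)) + s • EuclideanSpace.single i 1)) t (by simpa using this) h2
  rw [mul_one] at h3
  refine h3.congr_of_eventuallyEq (Eventually.of_forall fun s => ?_)
  change f (WithLp.toLp 2 (i.insertNth s y : Fin (n + 1) → ℝ)) =
    f (WithLp.toLp 2 (i.insertNth t y : Fin (n + 1) → ℝ) + (s - t) • EuclideanSpace.single i 1)
  congr 1
  ext j
  refine Fin.succAboveCases i ?_ (fun k => ?_) j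
  · simp
  · simp

lemma sing_integrable (N : ℕ) (hN : 2 ≤ N) (g : E N → ℝ) (C R : ℝ) (hC : 0 ≤ C) (hR : 0 < R)
    (hg : ContinuousOn g {0}ᶜ)
    (hb : ∀ x, x ≠ 0 → |g x| ≤ C * (‖x‖ ^ (1 - (N : ℝ)) * (1 + |Real.log ‖x‖|)))
    (hz : ∀ x, R ≤ ‖x‖ → g x = 0) : Integrable g := by
  have hN0 : NeZero N := ⟨by omega⟩
  have : Nontrivial (E N) := by infer_instance
  have hm : AEStronglyMeasurable g := by
    have := hg.aestronglyMeasurable (μ := (volume : Measure (E N))) (measurableSet_singleton _).compl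
    rwa [restrict_compl_singleton] at this
  have key : IntegrableOn (fun x : E N => C * (R ^ (1/2:ℝ) + 2 * R + 2) * ‖x‖ ^ (1/2 - (N : ℝ))) (ball 0 R) := by
    apply Integrable.const_mul
    have := (integrableOn_fun_norm_addHaar (volume : Measure (E N)) (f := fun r => r ^ (1/2 - (N : ℝ))) (r := R)).2
    apply this
    have h2 : IntegrableOn (fun r : ℝ => r ^ (-1/2 : ℝ)) (Ioo 0 R) := by
      rw [intervalIntegral.integrableOn_Ioo_rpow_iff hR]; norm_num
    refine h2.congr_fun (fun r hr => ?_) measurableSet_Ioo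
    have hr0 : 0 < r := hr.1
    simp only [finrank_euclideanSpace, Fintype.card_fin, smul_eq_mul]
    rw [← Real.rpow_natCast, ← Real.rpow_add hr0, Nat.cast_sub (by omega)]
    congr 1
    push_cast; ring
  rw [← integrableOn_iff_integrable_of_support_subset (s := ball 0 R)]
  · refine Integrable.mono' key hm.restrict ?_
    have hae : ∀ᵐ x : E N, x ≠ 0 := by simp [ae_iff]
    filter_upwards [ae_restrict_of_ae hae, ae_restrict_mem measurableSet_ball] with x hx hxR
    have hr : 0 < ‖x‖ := norm_pos_iff.2 hx
    have hrR : ‖x‖ < R := by simpa using hxR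
    rw [Real.norm_eq_abs]
    refine (hb x hx).trans ?_
    rw [mul_assoc]
    apply mul_le_mul_of_nonneg_left _ hC
    generalize ‖x‖ = r at *
    have hs : r ^ (1 - (N : ℝ)) = r ^ (1/2 - (N : ℝ)) * r ^ (1/2 : ℝ) := by
      rw [← Real.rpow_add hr]; congr 1; ring
    rw [hs, mul_assoc, mul_comm _ (r ^ (1/2 - (N : ℝ)))]
    apply mul_le_mul_of_nonneg_left _ (by positivity)
    have l1 := Real.log_le_rpow_div hr.le (ε := 1/2) (by norm_num)
    have l2 := Real.log_le_rpow_div (x := r⁻¹) (by positivity) (ε := 1/2) (by norm_num)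
    rw [Real.log_inv, Real.inv_rpow hr.le] at l2
    have hq : 0 < r ^ (1/2 : ℝ) := by positivity
    have hq2 : r ^ (1/2 : ℝ) * r ^ (1/2 : ℝ) = r := by
      rw [← Real.rpow_add hr]; norm_num
    have hqR : r ^ (1/2 : ℝ) ≤ R ^ (1/2 : ℝ) := Real.rpow_le_rpow hr.le hrR.le (by norm_num)
    generalize r ^ (1/2 : ℝ) = q at *
    have habs : |Real.log r| ≤ 2 * q + 2 * q⁻¹ := by
      rw [abs_le]
      have : 0 < q⁻¹ := by positivity
      constructor <;> linarith
    calc q * (1 + |Real.log r|) ≤ q * (1 + (2 * q + 2 * q⁻¹)) := by gcongr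
      _ = q + 2 * (q * q) + 2 := by field_simp; ring
      _ ≤ _ := by rw [hq2]; linarith
  · intro x hx
    by_contra h
    exact hx (hz x (by simpa using h))

lemma polar_s1 (N : ℕ) (hN : 2 ≤ N) (ξ : E N → ℝ) (hξ : ContDiff ℝ 2 ξ) (hξc : HasCompactSupport ξ)
    (hgi : Integrable (fun x : E N => ‖x‖ ^ (-(N : ℝ)) * fderiv ℝ ξ x x)) :
    ∫ x : E N, ‖x‖ ^ (-(N : ℝ)) * fderiv ℝ ξ x x = - (sphereArea N * ξ 0) := by
  have hN0 : NeZero N := ⟨by omega⟩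
  have : Nontrivial (E N) := by infer_instance
  set g : E N → ℝ := fun x => ‖x‖ ^ (-(N : ℝ)) * fderiv ℝ ξ x x with hg
  let μ : Measure (E N) := volume
  have mp := μ.measurePreserving_homeomorphUnitSphereProd
  have emb := (homeomorphUnitSphereProd (E N)).symm.measurableEmbedding
  have mps := mp.symm (homeomorphUnitSphereProd (E N)).toMeasurableEquiv
  have hgi' : Integrable (fun x : ({0}ᶜ : Set (E N)) => g x) (μ.comap (↑)) := by
    have := (integrableOn_iff_comap_subtypeVal (μ := μ) (f := g) (measurableSet_singleton (0 : E N)).compl).1 hgi.integrableOn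
    exact this
  have hprod := (mps.integrable_comp_emb emb).2 hgi'
  calc ∫ x, g x = ∫ x : ({0}ᶜ : Set (E N)), g x ∂(μ.comap (↑)) := by
        rw [integral_subtype_comap (measurableSet_singleton _).compl g, restrict_compl_singleton]
    _ = ∫ p, ((fun x : ({0}ᶜ : Set (E N)) => g x) ∘ (homeomorphUnitSphereProd (E N)).symm) p
          ∂(μ.toSphere.prod (.volumeIoiPow (Module.finrank ℝ (E N) - 1))) := by
        exact (mps.integral_comp emb (fun x : ({0}ᶜ : Set (E N)) => g x)).symm
    _ = ∫ ω, ∫ r, ((fun x : ({0}ᶜ : Set (E N)) => g x) ∘ (homeomorphUnitSphereProd (E N)).symm) (ω, r)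
          ∂(.volumeIoiPow (Module.finrank ℝ (E N) - 1)) ∂μ.toSphere := integral_prod _ hprod
    _ = ∫ ω : sphere (0 : E N) 1, - ξ 0 ∂μ.toSphere := by
        congr 1
        funext ω
        have hω : ‖(ω : E N)‖ = 1 := by simp
        have hω0 : (ω : E N) ≠ 0 := by intro h; simp [h] at hω
        simp only [Function.comp, homeomorphUnitSphereProd_symm_apply_coe]
        simp only [Measure.volumeIoiPow, ENNReal.ofReal]
        rw [integral_withDensity_eq_integral_smul]
        · rw [integral_subtype_comap measurableSet_Ioi (fun a : ℝ => Real.toNNReal (a ^ (Module.finrank ℝ (E N) - 1)) • g (a • (ω : E N)))]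
          have hcd : ContDiff ℝ 1 (fun r : ℝ => ξ (r • (ω : E N))) :=
            (hξ.of_le (by norm_num)).comp (contDiff_id.smul contDiff_const)
          have hcs : HasCompactSupport (fun r : ℝ => ξ (r • (ω : E N))) :=
            hξc.comp_isClosedEmbedding (isClosedEmbedding_smul_left hω0)
          have := hcs.integral_Ioi_deriv_eq hcd 0
          rw [zero_smul] at this
          rw [← this]
          refine setIntegral_congr_fun measurableSet_Ioi fun r hr => ?_
          have hr0 : 0 < r := hr
          have hd : deriv (fun r : ℝ => ξ (r • (ω : E N))) r = fderiv ℝ ξ (r • (ω : E N)) ω := by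
            have h1 := (hξ.differentiable (by norm_num) (r • (ω : E N))).hasFDerivAt
            have h2 : HasDerivAt (fun r : ℝ => r • (ω : E N)) (ω : E N) r := by
              simpa using (hasDerivAt_id r).smul_const (ω : E N)
            exact (h1.comp_hasDerivAt r h2).deriv
          simp only [hd, hg, NNReal.smul_def]
          rw [Real.coe_toNNReal _ (pow_nonneg hr0.le _), norm_smul, hω, mul_one, Real.norm_of_nonneg hr0.le]
          simp only [map_smul, smul_eq_mul, finrank_euclideanSpace, Fintype.card_fin]
          rw [Real.rpow_neg hr0.le, Real.rpow_natCast]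
          obtain ⟨k, rfl⟩ : ∃ k, N = k + 1 := ⟨N - 1, by omega⟩
          simp only [Nat.add_sub_cancel, pow_succ]
          field_simp
        · exact (measurable_subtype_coe.pow_const _).real_toNNReal
    _ = _ := by
        rw [integral_const, μ.toSphere_real_apply_univ]
        simp [sphereArea, Measure.real, μ]

lemma sing_mul_integrable (N : ℕ) (hN : 2 ≤ N) (u h : E N → ℝ) (C : ℝ) (hC : 0 ≤ C)
    (hu : ContinuousOn u {0}ᶜ)
    (hb : ∀ x, x ≠ 0 → |u x| ≤ C * (1 + ‖x‖) * (‖x‖ ^ (1 - (N : ℝ)) * (1 + |Real.log ‖x‖|)))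
    (hh : Continuous h) (hc : HasCompactSupport h) : Integrable (fun x => u x * h x) := by
  obtain ⟨K, hK⟩ := hc.exists_bound_of_continuous hh
  obtain ⟨R, hR0, hR⟩ := hc.isCompact.isBounded.subset_ball_lt 0 0
  have hz : ∀ x, R ≤ ‖x‖ → h x = 0 := by
    intro x hx
    by_contra h0
    have := hR (subset_tsupport h h0)
    simp at this
    linarith
  have hK0 : 0 ≤ K := (norm_nonneg _).trans (hK 0)
  refine sing_integrable N hN _ (C * (1 + R) * K) R (by positivity) hR0 (hu.mul hh.continuousOn) ?_ ?_
  · intro x hx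
    rcases le_or_gt R ‖x‖ with h1 | h1
    · rw [hz x h1, mul_zero, abs_zero]; positivity
    · rw [abs_mul]
      calc |u x| * |h x| ≤ (C * (1 + ‖x‖) * (‖x‖ ^ (1 - (N : ℝ)) * (1 + |Real.log ‖x‖|))) * K :=
            mul_le_mul (hb x hx) (hK x) (abs_nonneg _) (by positivity)
        _ ≤ (C * (1 + R) * (‖x‖ ^ (1 - (N : ℝ)) * (1 + |Real.log ‖x‖|))) * K := by gcongr
        _ = _ := by ring
  · intro x hx
    simp [hz x hx]

lemma phi_deriv (N : ℕ) (x : E N) (hx : x ≠ 0) (i : Fin N) :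
    HasLineDerivAt ℝ (fun y : E N => Real.log ‖y‖ * ‖y‖ ^ (2 - (N : ℝ)))
      ((1 + (2 - (N : ℝ)) * Real.log ‖x‖) * ‖x‖ ^ (-(N : ℝ)) * x i) x (EuclideanSpace.single i 1) := by
  have hr : 0 < ‖x‖ := norm_pos_iff.2 hx
  have h1 := ((hasStrictFDerivAt_norm_sq x).hasFDerivAt.sqrt (by positivity)).hasLineDerivAt (EuclideanSpace.single i 1)
  simp only [Real.sqrt_sq (norm_nonneg _)] at h1
  have h1' : HasDerivAt (fun t : ℝ => ‖x + t • (EuclideanSpace.single i 1 : E N)‖) (x i / ‖x‖) 0 := by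
    refine HasDerivAt.congr_deriv h1 ?_
    have hin : inner ℝ x (EuclideanSpace.single i 1 : E N) = x i := by
      rw [EuclideanSpace.inner_single_right]; simp
    simp
    field_simp
    exact hin
  unfold HasLineDerivAt
  have hx0 : ‖x + (0 : ℝ) • (EuclideanSpace.single i 1 : E N)‖ = ‖x‖ := by simp
  have h2 := (h1'.log (by rw [hx0]; exact hr.ne')).mul (h1'.rpow_const (p := 2 - (N : ℝ)) (Or.inl (by rw [hx0]; exact hr.ne')))
  refine HasDerivAt.congr_deriv h2 ?_
  rw [hx0]
  have e1 : ‖x‖ ^ (2 - (N : ℝ)) = ‖x‖ ^ (-(N : ℝ)) * ‖x‖ ^ 2 := by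
    rw [← Real.rpow_natCast, ← Real.rpow_add hr]; congr 1; push_cast; ring
  have e2 : ‖x‖ ^ (2 - (N : ℝ) - 1) = ‖x‖ ^ (-(N : ℝ)) * ‖x‖ := by
    nth_rewrite 3 [← Real.rpow_one ‖x‖]
    rw [← Real.rpow_add hr]; congr 1; ring
  rw [e1, e2]
  field_simp

lemma main_aux (n : ℕ) (hn : 1 ≤ n) (ξ : E (n + 1) → ℝ) (hξ : ContDiff ℝ 2 ξ)
    (hξc : HasCompactSupport ξ) :
    ∫ x : E (n + 1), (Real.log ‖x‖ * ‖x‖ ^ (2 - ((n + 1 : ℕ) : ℝ))) * lap (n + 1) ξ x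
      + (2 - ((n + 1 : ℕ) : ℝ)) * Real.log ‖x‖ * ‖x‖ ^ (-((n + 1 : ℕ) : ℝ)) * fderiv ℝ ξ x x
      = sphereArea (n + 1) * ξ 0 := by
  have hN : 2 ≤ n + 1 := by omega
  generalize hNN : n + 1 = N at *
  set D : Fin N → E N → ℝ := fun i y => fderiv ℝ ξ y (EuclideanSpace.single i 1) with hD
  set DD : Fin N → E N → ℝ := fun i y => fderiv ℝ (D i) y (EuclideanSpace.single i 1) with hDD
  have hDc : ∀ i, ContDiff ℝ 1 (D i) := fun i =>
    (hξ.fderiv_right (m := 1) (by norm_num)).clm_apply contDiff_const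
  have hDs : ∀ i, HasCompactSupport (D i) := fun i => hξc.fderiv_apply (𝕜 := ℝ) _
  have hDDc : ∀ i, Continuous (DD i) := fun i =>
    ((hDc i).continuous_fderiv (by norm_num)).clm_apply continuous_const
  have hDDs : ∀ i, HasCompactSupport (DD i) := fun i => (hDs i).fderiv_apply (𝕜 := ℝ) _
  have hlog : ContinuousOn (fun x : E N => Real.log ‖x‖) {0}ᶜ :=
    continuous_norm.continuousOn.log (fun x hx => norm_ne_zero_iff.2 hx)
  have hpow : ∀ p : ℝ, ContinuousOn (fun x : E N => ‖x‖ ^ p) {0}ᶜ := fun p =>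
    continuous_norm.continuousOn.rpow_const (fun x hx => Or.inl (norm_ne_zero_iff.2 hx))
  have hco : ∀ i, ContinuousOn (fun x : E N => x i) {0}ᶜ := fun i => by fun_prop
  have hphib : ∀ x : E N, x ≠ 0 → |Real.log ‖x‖ * ‖x‖ ^ (2 - (N : ℝ))| ≤
      1 * (1 + ‖x‖) * (‖x‖ ^ (1 - (N : ℝ)) * (1 + |Real.log ‖x‖|)) := by
    intro x hx
    have hr : 0 < ‖x‖ := norm_pos_iff.2 hx
    have e : ‖x‖ ^ (2 - (N : ℝ)) = ‖x‖ * ‖x‖ ^ (1 - (N : ℝ)) := by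
      nth_rewrite 2 [← Real.rpow_one ‖x‖]
      rw [← Real.rpow_add hr]; congr 1; ring
    have hp : 0 < ‖x‖ ^ (1 - (N : ℝ)) := by positivity
    rw [e, abs_mul, abs_of_pos (mul_pos hr hp), one_mul]
    calc |Real.log ‖x‖| * (‖x‖ * ‖x‖ ^ (1 - (N : ℝ))) = ‖x‖ * (‖x‖ ^ (1 - (N : ℝ)) * |Real.log ‖x‖|) := by ring
      _ ≤ _ := by gcongr <;> linarith
  have hxb : ∀ (i) (x : E N), x ≠ 0 → ‖x‖ ^ (-(N : ℝ)) * |x i| ≤ ‖x‖ ^ (1 - (N : ℝ)) := by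
    intro i x hx
    have hr : 0 < ‖x‖ := norm_pos_iff.2 hx
    have e : ‖x‖ ^ (1 - (N : ℝ)) = ‖x‖ ^ (-(N : ℝ)) * ‖x‖ := by
      nth_rewrite 3 [← Real.rpow_one ‖x‖]
      rw [← Real.rpow_add hr]; congr 1; ring
    rw [e]
    gcongr
    exact PiLp.norm_apply_le x i
  have i1 : ∀ i, Integrable (fun x : E N => (Real.log ‖x‖ * ‖x‖ ^ (2 - (N : ℝ))) * D i x) := fun i =>
    sing_mul_integrable N hN _ _ 1 zero_le_one (hlog.mul (hpow _)) hphib (hDc i).continuous (hDs i)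
  have i2 : ∀ i, Integrable (fun x : E N => (Real.log ‖x‖ * ‖x‖ ^ (2 - (N : ℝ))) * DD i x) := fun i =>
    sing_mul_integrable N hN _ _ 1 zero_le_one (hlog.mul (hpow _)) hphib (hDDc i) (hDDs i)
  have i3 : ∀ (i) (a b : ℝ), Integrable (fun x : E N =>
      ((a + b * Real.log ‖x‖) * ‖x‖ ^ (-(N : ℝ)) * x i) * D i x) := by
    intro i a b
    refine sing_mul_integrable N hN _ _ (|a| + |b|) (by positivity)
      (((continuousOn_const.add (continuousOn_const.mul hlog)).mul (hpow _)).mul (hco i)) ?_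
      (hDc i).continuous (hDs i)
    intro x hx
    have hr : 0 < ‖x‖ := norm_pos_iff.2 hx
    have hp : 0 < ‖x‖ ^ (-(N : ℝ)) := by positivity
    have h0 : |a + b * Real.log ‖x‖| ≤ (|a| + |b|) * (1 + |Real.log ‖x‖|) := by
      refine (abs_add_le _ _).trans ?_
      rw [abs_mul]
      nlinarith [abs_nonneg a, abs_nonneg b, abs_nonneg (Real.log ‖x‖), mul_nonneg (abs_nonneg a) (abs_nonneg (Real.log ‖x‖))]
    rw [abs_mul, abs_mul, abs_of_pos hp, mul_assoc]
    calc |a + b * Real.log ‖x‖| * (‖x‖ ^ (-(N : ℝ)) * |x i|)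
        ≤ ((|a| + |b|) * (1 + |Real.log ‖x‖|)) * ‖x‖ ^ (1 - (N : ℝ)) :=
          mul_le_mul h0 (hxb i x hx) (by positivity) (by positivity)
      _ = (|a| + |b|) * 1 * (‖x‖ ^ (1 - (N : ℝ)) * (1 + |Real.log ‖x‖|)) := by ring
      _ ≤ _ := by gcongr; linarith
  have hsum : ∀ x : E N, fderiv ℝ ξ x x = ∑ i, x i * D i x := by
    intro x
    have hx : x = ∑ i, x i • (EuclideanSpace.single i 1 : E N) := by
      ext j
      simp [Pi.single_apply]
    conv_lhs => rw [hx, map_sum]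
    rw [← hx]
    simp [hD]
  have hzero : ∀ i, ∫ x : E N, ((1 + (2 - (N : ℝ)) * Real.log ‖x‖) * ‖x‖ ^ (-(N : ℝ)) * x i) * D i x
      + (Real.log ‖x‖ * ‖x‖ ^ (2 - (N : ℝ))) * DD i x = 0 := by
    intro i
    subst hNN
    refine line_zero n hn i _ _ ?_ (i1 i) ((i3 i _ _).add (i2 i))
    intro x hx
    have h1 := phi_deriv _ x hx i
    have h2 := ((hDc i).differentiable (by norm_num) x).hasFDerivAt.hasLineDerivAt (EuclideanSpace.single i 1)
    unfold HasLineDerivAt at h1 h2 ⊢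
    refine HasDerivAt.congr_deriv (h1.mul h2) ?_
    simp [hDD]
  have hI : Integrable (fun x : E N => ‖x‖ ^ (-(N : ℝ)) * fderiv ℝ ξ x x) := by
    have := integrable_finsetSum Finset.univ (fun i _ => i3 i 1 0)
    refine this.congr (Eventually.of_forall fun x => ?_)
    simp only [hsum, Finset.mul_sum]
    refine Finset.sum_congr rfl fun i _ => ?_
    ring
  have hp := polar_s1 N hN ξ hξ hξc hI
  have hS : ∫ x : E N, ∑ i, (((1 + (2 - (N : ℝ)) * Real.log ‖x‖) * ‖x‖ ^ (-(N : ℝ)) * x i) * D i x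
      + (Real.log ‖x‖ * ‖x‖ ^ (2 - (N : ℝ))) * DD i x) = 0 := by
    refine (integral_finsetSum _ (fun i _ => (i3 i 1 (2 - (N : ℝ))).add (i2 i))).trans ?_
    exact Finset.sum_eq_zero fun i _ => hzero i
  have hSI := integrable_finsetSum Finset.univ (fun i _ => (i3 i 1 (2 - (N : ℝ))).add (i2 i))
  have hsub := integral_sub hSI hI
  simp only [Pi.add_apply] at hsub
  rw [hS, hp] at hsub
  rw [zero_sub, neg_neg] at hsub
  rw [← hsub]
  congr 1
  funext x
  rw [hsum x]
  simp only [lap, Finset.mul_sum]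
  rw [← Finset.sum_add_distrib, ← Finset.sum_sub_distrib]
  refine Finset.sum_congr rfl fun i _ => ?_
  simp only [hDD, hD]
  ring

/-- weighted distributional identity for the fundamental solution
`Φ(x) = -|x|^{τ₀} ln|x|` in the critical case `μ₂ = -(N-2-μ₁)²/4`. -/
theorem stmt1 (N : ℕ) (hN : 2 ≤ N) (μ₁ μ₂ : ℝ)
    (hμ₂ : μ₂ = -((N : ℝ) - 2 - μ₁) ^ 2 / 4)
    (ξ : E N → ℝ) (hξ : ContDiff ℝ 2 ξ) (hξc : HasCompactSupport ξ) :
    ∫ x : E N, (-(‖x‖ ^ ((2 - (N : ℝ) + μ₁) / 2) * Real.log ‖x‖)) *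
        (-lap N ξ x + (μ₁ - 2 * ((2 - (N : ℝ) + μ₁) / 2)) / ‖x‖ ^ 2 * fderiv ℝ ξ x x) *
        ‖x‖ ^ ((2 - (N : ℝ) + μ₁) / 2 - μ₁) =
      sphereArea N * ξ 0 := by
  obtain ⟨n, rfl⟩ : ∃ n, N = n + 1 := ⟨N - 1, by omega⟩
  rw [← main_aux n (by omega) ξ hξ hξc]
  have hae : ∀ᵐ x : E (n + 1), x ≠ 0 := by simp [ae_iff]
  refine integral_congr_ae ?_
  filter_upwards [hae] with x hx
  have hr : 0 < ‖x‖ := norm_pos_iff.2 hx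
  generalize ((n + 1 : ℕ) : ℝ) = M
  have e0 : ‖x‖ ^ ((2 - M + μ₁) / 2) * ‖x‖ ^ ((2 - M + μ₁) / 2 - μ₁) = ‖x‖ ^ (2 - M) := by
    rw [← Real.rpow_add hr]; congr 1; ring
  have e1 : ‖x‖ ^ (2 - M) = ‖x‖ ^ (-M) * ‖x‖ ^ 2 := by
    rw [← Real.rpow_natCast, ← Real.rpow_add hr]; congr 1; push_cast; ring
  calc _ = -(‖x‖ ^ ((2 - M + μ₁) / 2) * ‖x‖ ^ ((2 - M + μ₁) / 2 - μ₁)) * Real.log ‖x‖ *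
        (-lap (n + 1) ξ x + (M - 2) / ‖x‖ ^ 2 * fderiv ℝ ξ x x) := by ring
    _ = _ := by
      rw [e0, e1]
      field_simp
      ring
end
end

section
/- Let N ≥ 3, μ₁ < N-2 and -(N-2-μ₁)²/4 ≤ μ₂ < 0. Let Ω ⊂ ℝ^N be a bounded domain containing the origin, let θ > -2 and let Q ∈ C^β_loc(ℝ^N \ {0}) for some β ∈ (0,1) be a positive function with liminf_{|x|→0⁺} Q(x)|x|^{-θ} > 0. Set τ₊ = ((2-N+μ₁) + √((2-N+μ₁)² + 4μ₂))/2 (which is negative) and p^# = 1 + (2+θ)/(-τ₊). Then for every p ≥ p^# there is no positive function u ∈ C²(Ω \ {0}) satisfying ℒ_{μ₁,μ₂}u(x) ≥ Q(x)·u(x)^p for all x ∈ Ω \ {0} together with u ≥ 0 on ∂Ω. -/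
open MeasureTheory Filter Metric Set Topology

noncomputable section

lemma oneD (m : ℝ → ℝ) (S c p : ℝ) (hS : 1 ≤ S) (hc : 0 < c) (hp : 1 < p)
    (hm : ∀ s, S ≤ s → 0 < m s)
    (H : ∀ s1 s3 α β γ : ℝ, S ≤ s1 → s1 ≤ s3 → ∃ t ∈ Icc s1 s3,
      (∀ s ∈ Icc s1 s3, m t - (α + β * t + γ * t ^ 2) ≤ m s - (α + β * s + γ * s ^ 2)) ∧
      (s1 < t → t < s3 → c * m t ^ p + γ * t ^ 2 ≤ 0)) : False := by
  -- no affine function touches from below at an interior point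
  have aff : ∀ s1 s2 s3 α β : ℝ, S ≤ s1 → s1 ≤ s2 → s2 ≤ s3 → m s2 ≤ α + β * s2 →
      α + β * s1 < m s1 → α + β * s3 < m s3 → False := by
    intro s1 s2 s3 α β h1 h12 h23 e2 e1 e3
    obtain ⟨t, ht, hmin, hint⟩ := H s1 s3 α β 0 h1 (h12.trans h23)
    have k2 := hmin s2 ⟨h12, h23⟩
    have ht1 : s1 < t := by
      rcases ht.1.lt_or_eq with h | h
      · exact h
      · subst h; linarith
    have ht3 : t < s3 := by
      rcases ht.2.lt_or_eq with h | h
      · exact h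
      · subst h; linarith
    have := hint ht1 ht3
    have hpos := mul_pos hc (Real.rpow_pos_of_pos (hm t (by linarith)) p)
    linarith
  have mono : ∀ s1 s2 : ℝ, S ≤ s1 → s1 ≤ s2 → m s1 ≤ m s2 := by
    intro s1 s2 h1 h12
    by_contra! hlt
    have hne : s1 < s2 := by
      rcases h12.lt_or_eq with h | h
      · exact h
      · subst h; exact absurd hlt (lt_irrefl _)
    have hd : 0 < s2 - s1 := by linarith
    set δ := (m s1 - m s2) / (2 * (s2 - s1)) with hδ
    have hδ0 : 0 < δ := div_pos (by linarith) (by linarith)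
    have hδe : δ * (s2 - s1) = (m s1 - m s2) / 2 := by
      rw [hδ]; field_simp
    have hm2 := hm s2 (by linarith)
    have hq : 0 < m s2 / δ := div_pos hm2 hδ0
    have hqe : δ * (m s2 / δ) = m s2 := by field_simp
    refine aff s1 s2 (s2 + m s2 / δ) (m s2 + δ * s2) (-δ) h1 h12 (by linarith) (by linarith)
      (by nlinarith) ?_
    have := hm (s2 + m s2 / δ) (by linarith)
    nlinarith
  have dbl : ∀ R : ℝ, 2 * S ≤ R → m (2 * R) ≤ 3 * m R := by
    intro R hR
    by_contra! hlt
    have hR0 : 0 < R := by linarith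
    have hmR := hm R (by linarith)
    set d := (m (2 * R) / 2 + m R / 2) / R with hd
    have hde : d * R = m (2 * R) / 2 + m R / 2 := by rw [hd]; field_simp
    have hd0 : 0 < d := by
      rw [hd]; apply div_pos _ hR0; linarith
    have hmS := hm S le_rfl
    refine aff S R (2 * R) (m R - d * R) d le_rfl (by linarith) (by linarith) (by linarith) ?_ ?_
    · nlinarith
    · nlinarith
  have inc : ∀ R : ℝ, 2 * S ≤ R → m R + c * m R ^ p / 8 ≤ m (2 * R) := by
    intro R hR
    have hR0 : 0 < R := by linarith
    have hmR := hm R (by linarith)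
    have hMp := Real.rpow_pos_of_pos hmR p
    set g := c * m R ^ p / (16 * R ^ 2) with hg
    have hg0 : 0 < g := by positivity
    have hge : g * (16 * R ^ 2) = c * m R ^ p := by rw [hg]; field_simp
    obtain ⟨t, ht, hmin, hint⟩ := H R (4 * R) (-4 * g * R ^ 2) (5 * g * R) (-g)
      (by linarith) (by linarith)
    have k2 := hmin (2 * R) ⟨by linarith, by linarith⟩
    have hmt := mono R t (by linarith) ht.1
    have hte : t = R ∨ t = 4 * R := by
      by_contra! hne
      have h1 : R < t := lt_of_le_of_ne ht.1 (Ne.symm hne.1)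
      have h3 : t < 4 * R := lt_of_le_of_ne ht.2 hne.2
      have := hint h1 h3
      have hpw : m R ^ p ≤ m t ^ p := Real.rpow_le_rpow hmR.le hmt (by linarith)
      have ht2 : t ^ 2 < 16 * R ^ 2 := by nlinarith
      nlinarith
    rcases hte with h | h
    · rw [h] at k2; nlinarith
    · rw [h] at k2 hmt; nlinarith
  have hm0 := hm (2 * S) (by linarith)
  have hM0 := Real.rpow_pos_of_pos hm0 p
  set δ := c * m (2 * S) ^ p / 8 with hδ
  have hδ0 : 0 < δ := by positivity
  have grow : ∀ k : ℕ, k * δ ≤ m (2 ^ k * (2 * S)) := by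
    intro k
    induction k with
    | zero => simp; exact hm0.le
    | succ k ih =>
      have h1 : (1:ℝ) ≤ 2 ^ k := one_le_pow₀ (by norm_num)
      have h2 : 2 * S ≤ 2 ^ k * (2 * S) := by nlinarith
      have h3 := inc _ h2
      have h4 := mono (2 * S) _ (by linarith) h2
      have h5 : m (2 * S) ^ p ≤ m (2 ^ k * (2 * S)) ^ p :=
        Real.rpow_le_rpow hm0.le h4 (by linarith)
      have h6 : δ ≤ c * m (2 ^ k * (2 * S)) ^ p / 8 := by rw [hδ]; gcongr
      have h7 : (2:ℝ) ^ (k + 1) * (2 * S) = 2 * (2 ^ k * (2 * S)) := by ring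
      rw [h7]; push_cast; linarith
  have bdd : ∀ R : ℝ, 2 * S ≤ R → m R ^ (p - 1) ≤ 16 / c := by
    intro R hR
    have hmR := hm R (by linarith)
    have h1 := inc R hR
    have h2 := dbl R hR
    have h3 : m R ^ p = m R ^ (p - 1) * m R := by
      rw [← Real.rpow_add_one hmR.ne']; ring_nf
    rw [le_div_iff₀ hc]
    rw [h3] at h1
    have h4 : (c * m R ^ (p - 1)) * m R ≤ 16 * m R := by nlinarith
    have := le_of_mul_le_mul_right h4 hmR
    linarith
  have ht : Tendsto (fun k : ℕ => ((k : ℝ) * δ) ^ (p - 1)) atTop atTop :=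
    (tendsto_rpow_atTop (by linarith)).comp
      (tendsto_natCast_atTop_atTop.atTop_mul_const hδ0)
  obtain ⟨k, hk⟩ := (ht.eventually_gt_atTop (16 / c)).exists
  have h1 : (1:ℝ) ≤ 2 ^ k := one_le_pow₀ (by norm_num)
  have h2 : 2 * S ≤ 2 ^ k * (2 * S) := by nlinarith
  have h3 := bdd _ h2
  have h4 : ((k:ℝ) * δ) ^ (p - 1) ≤ m (2 ^ k * (2 * S)) ^ (p - 1) :=
    Real.rpow_le_rpow (by positivity) (grow k) (by linarith)
  linarith

lemma oneDset {X : Type*} (σ W : X → ℝ) (S c p : ℝ) (hS : 1 ≤ S) (hc : 0 < c) (hp : 1 < p)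
    (hm : ∀ x, S ≤ σ x → 0 < W x)
    (H : ∀ s1 s3 α β γ : ℝ, S ≤ s1 → s1 ≤ s3 → ∃ x, σ x ∈ Icc s1 s3 ∧
      (∀ y, σ y ∈ Icc s1 s3 → W x - (α + β * σ x + γ * σ x ^ 2) ≤
        W y - (α + β * σ y + γ * σ y ^ 2)) ∧
      (s1 < σ x → σ x < s3 → c * W x ^ p + γ * σ x ^ 2 ≤ 0)) : False := by
  have h : ∀ s, ∃ x, S ≤ s → (σ x = s ∧ ∀ y, σ y = s → W x ≤ W y) := by
    intro s
    by_cases hs : S ≤ s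
    · obtain ⟨x, hx, hmin, -⟩ := H s s 0 0 0 hs le_rfl
      have hxs : σ x = s := le_antisymm hx.2 hx.1
      refine ⟨x, fun _ => ⟨hxs, fun y hy => ?_⟩⟩
      have := hmin y ⟨hy.ge, hy.le⟩
      linarith
    · obtain ⟨x, -⟩ := H S S 0 0 0 le_rfl le_rfl
      exact ⟨x, fun h => absurd h hs⟩
  choose f hf using h
  refine oneD (fun s => W (f s)) S c p hS hc hp (fun s hs => hm _ ((hf s hs).1.symm ▸ hs)) ?_
  intro s1 s3 α β γ h1 h13
  obtain ⟨x, hx, hmin, hint⟩ := H s1 s3 α β γ h1 h13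
  have hSx : S ≤ σ x := h1.trans hx.1
  obtain ⟨e1, e2⟩ := hf (σ x) hSx
  have e3 : W (f (σ x)) = W x := by
    apply le_antisymm (e2 x rfl)
    have := hmin (f (σ x)) (by rw [e1]; exact hx)
    rw [e1] at this
    linarith
  refine ⟨σ x, hx, ?_, ?_⟩
  · intro s hs
    have hs' := hf s (h1.trans hs.1)
    have := hmin (f s) (by rw [hs'.1]; exact hs)
    rw [hs'.1] at this
    simp only [e3]
    exact this
  · simp only [e3]
    exact hint

lemma second_min (f f' : ℝ → ℝ) (f'' : ℝ) (h1 : ∀ᶠ t in 𝓝 (0:ℝ), HasDerivAt f (f' t) t)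
    (h2 : HasDerivAt f' f'' 0) (hmin : IsLocalMin f 0) : f' 0 = 0 ∧ 0 ≤ f'' := by
  have h0 : f' 0 = 0 := hmin.hasDerivAt_eq_zero h1.self_of_nhds
  refine ⟨h0, ?_⟩
  by_contra! hneg
  have hd : deriv f =ᶠ[𝓝 0] f' := h1.mono fun t ht => ht.deriv
  have hdd : deriv (deriv f) 0 = f'' := by rw [hd.deriv_eq, h2.deriv]
  have hmax : IsLocalMax f 0 := isLocalMax_of_deriv_deriv_neg (by rw [hdd]; exact hneg)
    (by rw [h1.self_of_nhds.deriv, h0]) h1.self_of_nhds.continuousAt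
  have hc : f =ᶠ[𝓝 0] fun _ => f 0 := by
    filter_upwards [hmin, hmax] with t a b
    exact le_antisymm b a
  have h3 : deriv f =ᶠ[𝓝 0] fun _ => 0 := by
    have := hc.deriv
    simpa using this
  have : deriv (deriv f) 0 = 0 := by rw [h3.deriv_eq]; simp
  linarith

lemma touch_dir {N : ℕ} (u : E N → ℝ) (x0 v : E N) (hx0 : x0 ≠ 0) (hu : ContDiffAt ℝ 2 u x0)
    (G G1 G2 : ℝ → ℝ) (hG : ∀ ρ, 0 < ρ → HasDerivAt G (G1 ρ) ρ)
    (hG1 : ∀ ρ, 0 < ρ → HasDerivAt G1 (G2 ρ) ρ)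
    (hmin : IsLocalMin (fun x => u x - G (‖x‖ ^ 2)) x0) :
    fderiv ℝ u x0 v = G1 (‖x0‖ ^ 2) * (2 * inner ℝ x0 v) ∧
    G2 (‖x0‖ ^ 2) * (2 * inner ℝ x0 v) ^ 2 + G1 (‖x0‖ ^ 2) * (2 * ‖v‖ ^ 2) ≤
      fderiv ℝ (fun y => fderiv ℝ u y v) x0 v := by
  have hline : ∀ t : ℝ, HasDerivAt (fun t : ℝ => x0 + t • v) v t := by
    intro t
    simpa using ((hasDerivAt_id t).smul_const v).const_add x0
  have hlc : Continuous (fun t : ℝ => x0 + t • v) := by fun_prop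
  have hl0 : x0 + (0:ℝ) • v = x0 := by simp
  have htend : Tendsto (fun t : ℝ => x0 + t • v) (𝓝 0) (𝓝 x0) := by
    have := hlc.tendsto 0
    rwa [hl0] at this
  have hnorm : ∀ t : ℝ, HasDerivAt (fun t : ℝ => ‖x0 + t • v‖ ^ 2)
      (2 * inner ℝ (x0 + t • v) v) t := fun t => (hline t).norm_sq
  have hinner : HasDerivAt (fun t : ℝ => 2 * inner ℝ (x0 + t • v) v) (2 * ‖v‖ ^ 2) 0 := by
    have h := ((hline 0).inner ℝ (hasDerivAt_const (0:ℝ) v)).const_mul 2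
    simpa [real_inner_self_eq_norm_sq] using h
  have hdu : ∀ᶠ y in 𝓝 x0, DifferentiableAt ℝ u y :=
    (hu.eventually (by simp)).mono fun y hy => hy.differentiableAt (by norm_num)
  have hd2 : DifferentiableAt ℝ (fun y => fderiv ℝ u y v) x0 := by
    have h1 : ContDiffAt ℝ 1 (fderiv ℝ u) x0 := hu.fderiv_right (by norm_num)
    exact (h1.differentiableAt (by norm_num)).clm_apply (differentiableAt_const v)
  have hne : ∀ᶠ y in 𝓝 x0, y ≠ 0 := isOpen_ne.mem_nhds hx0
  have hpos0 : 0 < ‖x0‖ ^ 2 := by positivity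
  have key := second_min (fun t => u (x0 + t • v) - G (‖x0 + t • v‖ ^ 2))
    (fun t => fderiv ℝ u (x0 + t • v) v - G1 (‖x0 + t • v‖ ^ 2) * (2 * inner ℝ (x0 + t • v) v))
    (fderiv ℝ (fun y => fderiv ℝ u y v) x0 v -
      (G2 (‖x0‖ ^ 2) * (2 * inner ℝ x0 v) * (2 * inner ℝ x0 v)
        + G1 (‖x0‖ ^ 2) * (2 * ‖v‖ ^ 2))) ?_ ?_ ?_
  · simp only [hl0] at key
    constructor
    · linarith [key.1]
    · nlinarith [key.2]
  · filter_upwards [htend.eventually hdu, htend.eventually hne] with t h1 h2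
    have hp : 0 < ‖x0 + t • v‖ ^ 2 := by positivity
    exact (h1.hasFDerivAt.comp_hasDerivAt t (hline t)).sub ((hG _ hp).comp t (hnorm t))
  · have a1 : HasDerivAt (fun t : ℝ => fderiv ℝ u (x0 + t • v) v)
        (fderiv ℝ (fun y => fderiv ℝ u y v) x0 v) 0 := by
      have := hd2.hasFDerivAt
      rw [← hl0] at this
      have := this.comp_hasDerivAt (0:ℝ) (hline 0)
      simpa [hl0, Function.comp_def] using this
    have a2 : HasDerivAt (fun t : ℝ => G1 (‖x0 + t • v‖ ^ 2))
        (G2 (‖x0‖ ^ 2) * (2 * inner ℝ x0 v)) 0 := by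
      have h := hG1 _ hpos0
      have h' : HasDerivAt G1 (G2 (‖x0‖ ^ 2)) (‖x0 + (0:ℝ) • v‖ ^ 2) := by rw [hl0]; exact h
      have := h'.comp (0:ℝ) (hnorm 0)
      rw [hl0] at this
      exact this
    have a3 := a2.mul hinner
    simp only [hl0] at a3
    exact a1.sub a3
  · filter_upwards [htend.eventually hmin] with t ht
    simpa using ht

lemma touch {N : ℕ} (μ₁ μ₂ : ℝ) (u : E N → ℝ) (x0 : E N) (hx0 : x0 ≠ 0)
    (hu : ContDiffAt ℝ 2 u x0)
    (G G1 G2 : ℝ → ℝ) (hG : ∀ ρ, 0 < ρ → HasDerivAt G (G1 ρ) ρ)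
    (hG1 : ∀ ρ, 0 < ρ → HasDerivAt G1 (G2 ρ) ρ)
    (hmin : IsLocalMin (fun x => u x - G (‖x‖ ^ 2)) x0) (heq : u x0 = G (‖x0‖ ^ 2)) :
    ckn N μ₁ μ₂ u x0 ≤ -(4 * ‖x0‖ ^ 2 * G2 (‖x0‖ ^ 2) + 2 * N * G1 (‖x0‖ ^ 2))
      + 2 * μ₁ * G1 (‖x0‖ ^ 2) + μ₂ / ‖x0‖ ^ 2 * G (‖x0‖ ^ 2) := by
  have h := fun v => touch_dir u x0 v hx0 hu G G1 G2 hG hG1 hmin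
  have hpos0 : 0 < ‖x0‖ ^ 2 := by positivity
  have h1 := (h x0).1
  rw [real_inner_self_eq_norm_sq] at h1
  have h2 : 4 * ‖x0‖ ^ 2 * G2 (‖x0‖ ^ 2) + 2 * N * G1 (‖x0‖ ^ 2) ≤ lap N u x0 := by
    have hs : ∑ i : Fin N, (G2 (‖x0‖ ^ 2) * (2 * inner ℝ x0 (EuclideanSpace.single i (1:ℝ))) ^ 2
        + G1 (‖x0‖ ^ 2) * (2 * ‖(EuclideanSpace.single i (1:ℝ) : E N)‖ ^ 2)) ≤ lap N u x0 :=
      Finset.sum_le_sum fun i _ => (h _).2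
    refine le_trans (le_of_eq ?_) hs
    have e : ‖x0‖ ^ 2 = ∑ i, x0 i ^ 2 := by
      rw [EuclideanSpace.norm_sq_eq]; simp
    simp only [EuclideanSpace.inner_single_right, PiLp.norm_single]
    simp only [Finset.sum_add_distrib, mul_pow, ← Finset.mul_sum]
    simp only [conj_trivial, ← e]
    simp
    ring
  unfold ckn
  rw [h1, heq]
  have h3 : μ₁ / ‖x0‖ ^ 2 * (G1 (‖x0‖ ^ 2) * (2 * ‖x0‖ ^ 2)) = 2 * μ₁ * G1 (‖x0‖ ^ 2) := by
    field_simp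
  rw [h3]
  linarith

lemma touch_log {N : ℕ} (μ₁ μ₂ b κ : ℝ) (hb : b ^ 2 + (N - 2 - μ₁) * b - μ₂ = 0)
    (hκ : κ = 2 * b + N - 2 - μ₁) (u : E N → ℝ) (x0 : E N) (hx0 : x0 ≠ 0)
    (hu : ContDiffAt ℝ 2 u x0)
    (ψ ψ1 ψ2 : ℝ → ℝ) (h1 : ∀ t, HasDerivAt ψ (ψ1 t) t) (h2 : ∀ t, HasDerivAt ψ1 (ψ2 t) t)
    (hmin : IsLocalMin (fun x => u x - ‖x‖ ^ b * ψ (Real.log (‖x‖ ^ 2))) x0)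
    (heq : u x0 = ‖x0‖ ^ b * ψ (Real.log (‖x0‖ ^ 2))) :
    ckn N μ₁ μ₂ u x0 ≤ -(‖x0‖ ^ (b - 2) *
      (4 * ψ2 (Real.log (‖x0‖ ^ 2)) + 2 * κ * ψ1 (Real.log (‖x0‖ ^ 2)))) := by
  have hpw : ∀ (y : E N) (q : ℝ), (‖y‖ ^ 2) ^ (q / 2) = ‖y‖ ^ q := by
    intro y q
    rw [← Real.rpow_natCast, ← Real.rpow_mul (norm_nonneg y)]
    congr 1; push_cast; ring
  have hpos0 : 0 < ‖x0‖ ^ 2 := by positivity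
  have key := touch μ₁ μ₂ u x0 hx0 hu (fun ρ => ρ ^ (b / 2) * ψ (Real.log ρ))
    (fun ρ => ρ ^ (b / 2 - 1) * (b / 2 * ψ (Real.log ρ) + ψ1 (Real.log ρ)))
    (fun ρ => ρ ^ (b / 2 - 1 - 1) * ((b / 2 - 1) * (b / 2 * ψ (Real.log ρ) + ψ1 (Real.log ρ))
      + (b / 2 * ψ1 (Real.log ρ) + ψ2 (Real.log ρ)))) ?_ ?_ ?_ ?_
  · refine key.trans (le_of_eq ?_)
    have e0 : ‖x0‖ ^ (b - 2) = (‖x0‖ ^ 2) ^ (b / 2 - 1) := by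
      rw [← hpw]; congr 1; ring
    rw [e0]
    generalize ‖x0‖ ^ 2 = ρ at *
    have e1 : ρ ^ (b / 2 - 1) = ρ ^ (b / 2 - 1 - 1) * ρ := by
      rw [← Real.rpow_add_one hpos0.ne']; ring_nf
    have e2 : ρ ^ (b / 2) = ρ ^ (b / 2 - 1 - 1) * ρ * ρ := by
      rw [← e1, ← Real.rpow_add_one hpos0.ne']; ring_nf
    rw [e2, e1]
    generalize ρ ^ (b / 2 - 1 - 1) = A
    generalize ψ (Real.log ρ) = a
    generalize ψ1 (Real.log ρ) = a1
    generalize ψ2 (Real.log ρ) = a2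
    have hμ : μ₂ = b ^ 2 + (N - 2 - μ₁) * b := by linarith
    subst hμ hκ
    field_simp
    ring
  · intro ρ hρ
    have a1 := Real.hasDerivAt_rpow_const (x := ρ) (p := b / 2) (Or.inl hρ.ne')
    have a2 := (h1 (Real.log ρ)).comp ρ (Real.hasDerivAt_log hρ.ne')
    refine (a1.mul a2).congr_deriv ?_
    have e2 : ρ ^ (b / 2) = ρ ^ (b / 2 - 1) * ρ := by
      rw [← Real.rpow_add_one hρ.ne']; ring_nf
    simp only [Function.comp, e2]
    field_simp
  · intro ρ hρ
    have a1 := Real.hasDerivAt_rpow_const (x := ρ) (p := b / 2 - 1) (Or.inl hρ.ne')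
    have a2 := ((h1 (Real.log ρ)).comp ρ (Real.hasDerivAt_log hρ.ne')).const_mul (b / 2)
    have a3 := (h2 (Real.log ρ)).comp ρ (Real.hasDerivAt_log hρ.ne')
    refine (a1.mul (a2.add a3)).congr_deriv ?_
    have e2 : ρ ^ (b / 2 - 1) = ρ ^ (b / 2 - 1 - 1) * ρ := by
      rw [← Real.rpow_add_one hρ.ne']; ring_nf
    simp only [Function.comp, e2, Pi.add_apply]
    field_simp
  · simpa only [hpw] using hmin
  · simpa only [hpw] using heq

set_option maxHeartbeats 1000000 in
lemma core {N : ℕ} (hN : 0 < N) (μ₁ μ₂ b κ : ℝ) (hb : b ^ 2 + (N - 2 - μ₁) * b - μ₂ = 0)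
    (hκ : κ = 2 * b + N - 2 - μ₁) (s d d2 : ℝ → ℝ)
    (hs : ∀ t, HasDerivAt s (d t) t) (hd : ∀ t, HasDerivAt d (d2 t) t)
    (hode : ∀ t, 4 * d2 t + 2 * κ * d t = 0) (hanti : StrictAnti s)
    (htop : Tendsto s atBot atTop) (C : ℝ) (hC : 0 < C)
    (hdC : ∀ t, 1 ≤ s t → 8 * d t ^ 2 ≤ C * s t ^ 2)
    (R0 c0 θ p : ℝ) (hR0 : 0 < R0) (hR1 : R0 ≤ 1) (hc0 : 0 < c0) (hp : 1 < p)
    (hexp : θ + 2 + b * (p - 1) ≤ 0) (u : E N → ℝ)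
    (hu : ∀ x : E N, x ≠ 0 → ‖x‖ ≤ R0 → ContDiffAt ℝ 2 u x)
    (hupos : ∀ x : E N, x ≠ 0 → ‖x‖ ≤ R0 → 0 < u x)
    (hineq : ∀ x : E N, x ≠ 0 → ‖x‖ ≤ R0 → c0 * ‖x‖ ^ θ * u x ^ p ≤ ckn N μ₁ μ₂ u x) :
    False := by
  have hcont : Continuous s := continuous_iff_continuousAt.2 fun t => (hs t).continuousAt
  have hball : ∀ x : E N, x ≠ 0 → s (Real.log (R0 ^ 2)) ≤ s (Real.log (‖x‖ ^ 2)) → ‖x‖ ≤ R0 := by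
    intro x hx h
    have h1 : Real.log (‖x‖ ^ 2) ≤ Real.log (R0 ^ 2) := hanti.le_iff_ge.1 h
    have h2 := (Real.log_le_log_iff (by positivity) (by positivity)).1 h1
    exact le_of_sq_le_sq h2 hR0.le
  set S := max 1 (s (Real.log (R0 ^ 2))) with hS
  have hsurj : ∀ q, S ≤ q → ∃ t, s t = q := by
    intro q hq
    obtain ⟨t, ht⟩ := (htop.eventually_ge_atTop q).exists
    exact mem_range_of_exists_le_of_exists_ge hcont ⟨_, (le_max_right _ _).trans hq⟩ ⟨t, ht⟩
  refine oneDset (X := {x : E N // x ≠ 0}) (fun x => s (Real.log (‖x.1‖ ^ 2)))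
    (fun x => u x.1 * ‖x.1‖ ^ (-b)) S (c0 / C) p (le_max_left _ _) (by positivity) hp ?_ ?_
  · rintro ⟨x, hx⟩ h
    have hn : 0 < ‖x‖ := norm_pos_iff.2 hx
    exact mul_pos (hupos x hx (hball x hx ((le_max_right _ _).trans h)))
      (Real.rpow_pos_of_pos hn _)
  intro s1 s3 α β γ h1 h13
  obtain ⟨τ1, hτ1⟩ := hsurj s1 h1
  obtain ⟨τ3, hτ3⟩ := hsurj s3 (h1.trans h13)
  have hτ : τ3 ≤ τ1 := by
    rw [← hτ1, ← hτ3] at h13; exact hanti.le_iff_ge.1 h13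
  set K : Set (E N) := {x | ‖x‖ ^ 2 ∈ Icc (Real.exp τ3) (Real.exp τ1)} with hK
  have hK0 : ∀ x ∈ K, x ≠ 0 := by
    rintro x hx rfl
    have := hx.1
    simp at this
    exact absurd this (not_le.2 (Real.exp_pos _))
  have hKiff : ∀ x : E N, x ≠ 0 → (s (Real.log (‖x‖ ^ 2)) ∈ Icc s1 s3 ↔ x ∈ K) := by
    intro x hx
    have hn : 0 < ‖x‖ ^ 2 := by positivity
    rw [← hτ1, ← hτ3]
    simp only [hK, mem_Icc, mem_ofPred_eq, hanti.le_iff_ge]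
    rw [Real.log_le_iff_le_exp hn, Real.le_log_iff_exp_le hn, and_comm]
  have hKc : IsCompact K := by
    apply Metric.isCompact_of_isClosed_isBounded
    · exact isClosed_Icc.preimage (by fun_prop)
    · refine (Metric.isBounded_closedBall (x := (0 : E N)) (r := Real.exp τ1 + 1)).subset ?_
      intro x hx
      rw [mem_closedBall_zero_iff]
      have := hx.2
      nlinarith [sq_nonneg (‖x‖ - 1), Real.exp_pos τ1]
  have hKne : K.Nonempty := by
    refine ⟨EuclideanSpace.single (⟨0, hN⟩ : Fin N) (Real.exp (τ1 / 2)), ?_⟩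
    have : Real.exp (τ1 / 2) ^ 2 = Real.exp τ1 := by
      rw [← Real.exp_nat_mul]; congr 1; push_cast; ring
    simp only [hK, mem_ofPred_eq, PiLp.norm_single, Real.norm_eq_abs, sq_abs, this]
    exact ⟨Real.exp_le_exp.2 hτ, le_rfl⟩
  have hKR : ∀ x ∈ K, ‖x‖ ≤ R0 := fun x hx =>
    hball x (hK0 x hx) ((le_max_right _ _).trans (h1.trans ((hKiff x (hK0 x hx)).2 hx).1))
  have hσc : ∀ x : E N, x ≠ 0 → ContinuousAt (fun x : E N => s (Real.log (‖x‖ ^ 2))) x := by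
    intro x hx
    have hn : ‖x‖ ^ 2 ≠ 0 := by positivity
    exact hcont.continuousAt.comp (ContinuousAt.log (by fun_prop) hn)
  have hFc : ContinuousOn (fun x : E N => u x * ‖x‖ ^ (-b) - (α + β * s (Real.log (‖x‖ ^ 2)) +
      γ * s (Real.log (‖x‖ ^ 2)) ^ 2)) K := by
    intro x hx
    have hx0 := hK0 x hx
    have c1 := (hu x hx0 (hKR x hx)).continuousAt
    have c2 : ContinuousAt (fun x : E N => ‖x‖ ^ (-b)) x :=
      ContinuousAt.rpow_const continuous_norm.continuousAt (Or.inl (norm_ne_zero_iff.2 hx0))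
    have c3 := hσc x hx0
    exact ((c1.mul c2).sub ((continuousAt_const.add (continuousAt_const.mul c3)).add
      (continuousAt_const.mul (c3.pow 2)))).continuousWithinAt
  obtain ⟨x0, hx0K, hx0min⟩ := hKc.exists_isMinOn hKne hFc
  have hx0 := hK0 x0 hx0K
  refine ⟨⟨x0, hx0⟩, (hKiff x0 hx0).2 hx0K, ?_, ?_⟩
  · rintro ⟨y, hy⟩ hys
    exact hx0min ((hKiff y hy).1 hys)
  intro hl hr
  simp only at hl hr ⊢
  have hr0 : 0 < ‖x0‖ := norm_pos_iff.2 hx0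
  set v := u x0 * ‖x0‖ ^ (-b) - (α + β * s (Real.log (‖x0‖ ^ 2)) +
      γ * s (Real.log (‖x0‖ ^ 2)) ^ 2) with hv
  have hcancel : ∀ y : E N, y ≠ 0 → ‖y‖ ^ b * (u y * ‖y‖ ^ (-b)) = u y := by
    intro y hy
    have hn : 0 < ‖y‖ := norm_pos_iff.2 hy
    rw [Real.rpow_neg hn.le]
    have := (Real.rpow_pos_of_pos hn b).ne'
    field_simp
  have heq : u x0 = ‖x0‖ ^ b * (α + v + β * s (Real.log (‖x0‖ ^ 2)) +
      γ * s (Real.log (‖x0‖ ^ 2)) ^ 2) := by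
    rw [hv, ← hcancel x0 hx0]
    have := hcancel x0 hx0
    rw [this]
    ring_nf
    ring_nf at this
    rw [this]
  have hloc : IsLocalMin (fun x => u x - ‖x‖ ^ b * (α + v + β * s (Real.log (‖x‖ ^ 2)) +
      γ * s (Real.log (‖x‖ ^ 2)) ^ 2)) x0 := by
    have e1 : ∀ᶠ y in 𝓝 x0, y ≠ 0 := isOpen_ne.mem_nhds hx0
    have e2 : ∀ᶠ y in 𝓝 x0, s (Real.log (‖y‖ ^ 2)) ∈ Icc s1 s3 :=
      (hσc x0 hx0).eventually (Icc_mem_nhds hl hr)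
    filter_upwards [e1, e2] with y hy hys
    have h := hx0min ((hKiff y hy).1 hys)
    simp only [mem_ofPred_eq] at h
    rw [← hv] at h
    rw [← heq, sub_self, sub_nonneg]
    conv_rhs => rw [← hcancel y hy]
    have hn : 0 < ‖y‖ ^ b := Real.rpow_pos_of_pos (norm_pos_iff.2 hy) _
    apply mul_le_mul_of_nonneg_left _ hn.le
    linarith
  have key := touch_log μ₁ μ₂ b κ hb hκ u x0 hx0 (hu x0 hx0 (hKR x0 hx0K))
    (fun t => α + v + β * s t + γ * s t ^ 2) (fun t => β * d t + γ * (2 * s t * d t))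
    (fun t => β * d2 t + γ * (2 * d t * d t + 2 * s t * d2 t)) ?_ ?_ hloc heq
  · have h2 := (hineq x0 hx0 (hKR x0 hx0K)).trans key
    have hss : 1 ≤ s (Real.log (‖x0‖ ^ 2)) := (le_max_left _ _).trans (h1.trans hl.le)
    have ho := hode (Real.log (‖x0‖ ^ 2))
    have hdd := hdC _ hss
    generalize Real.log (‖x0‖ ^ 2) = t at *
    have e3 : 4 * (β * d2 t + γ * (2 * d t * d t + 2 * s t * d2 t)) +
        2 * κ * (β * d t + γ * (2 * s t * d t)) = 8 * γ * d t ^ 2 := by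
      linear_combination (β + 2 * γ * s t) * ho
    rw [e3] at h2
    set W := u x0 * ‖x0‖ ^ (-b) with hW
    have hWpos : 0 < W := mul_pos (hupos x0 hx0 (hKR x0 hx0K)) (Real.rpow_pos_of_pos hr0 _)
    have hWp := Real.rpow_pos_of_pos hWpos p
    have e4 : ‖x0‖ ^ θ * u x0 ^ p = ‖x0‖ ^ (b - 2) * (‖x0‖ ^ (θ + 2 + b * (p - 1)) * W ^ p) := by
      rw [← hcancel x0 hx0, ← hW, Real.mul_rpow (Real.rpow_nonneg hr0.le _) hWpos.le,
        ← Real.rpow_mul hr0.le, ← mul_assoc, ← mul_assoc, ← Real.rpow_add hr0,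
        ← Real.rpow_add hr0]
      congr 2; ring
    have e5 : 1 ≤ ‖x0‖ ^ (θ + 2 + b * (p - 1)) :=
      Real.one_le_rpow_of_pos_of_le_one_of_nonpos hr0 ((hKR x0 hx0K).trans hR1) hexp
    have hA := Real.rpow_pos_of_pos hr0 (b - 2)
    rw [mul_assoc, e4] at h2
    have h3 : ‖x0‖ ^ (b - 2) * (c0 * (‖x0‖ ^ (θ + 2 + b * (p - 1)) * W ^ p) + 8 * γ * d t ^ 2)
        ≤ 0 := by linarith
    have h4 := nonpos_of_mul_nonpos_right h3 hA
    have h5 : c0 * W ^ p ≤ c0 * (‖x0‖ ^ (θ + 2 + b * (p - 1)) * W ^ p) := by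
      apply mul_le_mul_of_nonneg_left _ hc0.le
      exact le_mul_of_one_le_left hWp.le e5
    have h6 : 0 < c0 * W ^ p := by positivity
    have hγ : γ < 0 := by
      by_contra! h
      have : 0 ≤ 8 * γ * d t ^ 2 := by positivity
      linarith
    have h7 : c0 * W ^ p + γ * (C * s t ^ 2) ≤ 0 := by
      have := mul_le_mul_of_nonpos_left hdd hγ.le
      linarith
    have h8 : c0 / C * W ^ p + γ * s t ^ 2 = (c0 * W ^ p + γ * (C * s t ^ 2)) / C := by
      field_simp
    rw [h8]
    exact div_nonpos_of_nonpos_of_nonneg h7 hC.le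
  · intro t
    have := (((hs t).const_mul β).const_add (α + v)).add (((hs t).pow 2).const_mul γ)
    refine this.congr_deriv ?_
    norm_num
  · intro t
    have := ((hd t).const_mul β).add ((((hs t).const_mul 2).mul (hd t)).const_mul γ)
    exact this.congr_deriv (by ring)

/-- nonexistence of positive supersolutions of the Lane–Emden
inequality `ℒ_{μ₁,μ₂} u ≥ Q u^p` in a punctured bounded domain for `p ≥ p^#`. -/
theorem stmt2 (N : ℕ) (hN : 3 ≤ N) (μ₁ μ₂ : ℝ) (hμ₁ : μ₁ < (N : ℝ) - 2)
    (hμ₂l : -((N : ℝ) - 2 - μ₁) ^ 2 / 4 ≤ μ₂) (hμ₂u : μ₂ < 0)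
    (Ω : Set (E N)) (hΩo : IsOpen Ω) (hΩc : IsConnected Ω)
    (hΩb : Bornology.IsBounded Ω) (h0Ω : (0 : E N) ∈ Ω)
    (θ : ℝ) (hθ : -2 < θ) (β : ℝ) (hβ : β ∈ Set.Ioo (0 : ℝ) 1)
    (Q : E N → ℝ) (hQreg : LocHolderOn N β Q ({(0 : E N)}ᶜ))
    (hQpos : ∀ x : E N, x ≠ 0 → 0 < Q x)
    (hQliminf : ∃ c > (0 : ℝ), ∀ᶠ x in nhdsWithin (0 : E N) {(0 : E N)}ᶜ,
      c ≤ Q x * ‖x‖ ^ (-θ))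
    (p : ℝ) (hp : 1 + (2 + θ) / (-tauPlus N μ₁ μ₂) ≤ p) :
    ¬ ∃ u : E N → ℝ, ContDiffOn ℝ 2 u (Ω \ {0}) ∧
        (∀ x ∈ Ω \ {0}, 0 < u x) ∧
        (∀ x ∈ Ω \ {0}, Q x * u x ^ p ≤ ckn N μ₁ μ₂ u x) ∧
        (∀ x ∈ frontier Ω, 0 ≤ u x) := by
  rintro ⟨u, hu, hupos, hineq, -⟩
  set b := tauPlus N μ₁ μ₂ with hbdef
  set κ := Real.sqrt ((2 - (N : ℝ) + μ₁) ^ 2 + 4 * μ₂) with hκdef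
  have hb2 : b = ((2 - (N : ℝ) + μ₁) + κ) / 2 := rfl
  have hκ0 : 0 ≤ κ := Real.sqrt_nonneg _
  have hκsq : κ ^ 2 = (2 - (N : ℝ) + μ₁) ^ 2 + 4 * μ₂ := Real.sq_sqrt (by nlinarith)
  have hbneg : b < 0 := by
    have : κ < (N : ℝ) - 2 - μ₁ := by
      apply lt_of_pow_lt_pow_left₀ 2 (by linarith)
      rw [hκsq]; nlinarith
    rw [hb2]; linarith
  have hb : b ^ 2 + (N - 2 - μ₁) * b - μ₂ = 0 := by
    rw [hb2]; nlinarith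
  have hκ : κ = 2 * b + N - 2 - μ₁ := by rw [hb2]; ring
  have hp1 : 1 < p := by
    have : 0 < (2 + θ) / (-b) := div_pos (by linarith) (by linarith)
    linarith
  have hexp : θ + 2 + b * (p - 1) ≤ 0 := by
    have h1 : (2 + θ) / (-b) ≤ p - 1 := by linarith
    rw [div_le_iff₀ (by linarith)] at h1
    linarith
  obtain ⟨c0, hc0, hQ⟩ := hQliminf
  rw [eventually_nhdsWithin_iff, Metric.eventually_nhds_iff] at hQ
  obtain ⟨ε1, hε1, hQ⟩ := hQ
  obtain ⟨ε2, hε2, hΩ⟩ := Metric.isOpen_iff.1 hΩo 0 h0Ω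
  set R0 := min 1 (min (ε1 / 2) (ε2 / 2)) with hR0def
  have hR0 : 0 < R0 := by positivity
  have hR1 : R0 ≤ 1 := min_le_left _ _
  have hRe1 : R0 < ε1 := by
    have : R0 ≤ ε1 / 2 := (min_le_right _ _).trans (min_le_left _ _)
    linarith
  have hRe2 : R0 < ε2 := by
    have : R0 ≤ ε2 / 2 := (min_le_right _ _).trans (min_le_right _ _)
    linarith
  have hmem : ∀ x : E N, x ≠ 0 → ‖x‖ ≤ R0 → x ∈ Ω \ {0} := fun x hx h =>
    ⟨hΩ (by rw [mem_ball_zero_iff]; linarith), hx⟩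
  have hopen : IsOpen (Ω \ {(0 : E N)}) := hΩo.sdiff isClosed_singleton
  have hu' : ∀ x : E N, x ≠ 0 → ‖x‖ ≤ R0 → ContDiffAt ℝ 2 u x := fun x hx h =>
    hu.contDiffAt (hopen.mem_nhds (hmem x hx h))
  have hineq' : ∀ x : E N, x ≠ 0 → ‖x‖ ≤ R0 →
      c0 * ‖x‖ ^ θ * u x ^ p ≤ ckn N μ₁ μ₂ u x := by
    intro x hx h
    refine le_trans ?_ (hineq x (hmem x hx h))
    have hn : 0 < ‖x‖ := norm_pos_iff.2 hx
    have h1 := hQ (y := x) (by rw [dist_zero_right]; linarith) hx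
    rw [Real.rpow_neg hn.le] at h1
    have hpw := Real.rpow_pos_of_pos hn θ
    have h2 : c0 * ‖x‖ ^ θ ≤ Q x := by
      rwa [← div_eq_mul_inv, le_div_iff₀ hpw] at h1
    exact mul_le_mul_of_nonneg_right h2 (Real.rpow_nonneg (hupos x (hmem x hx h)).le _)
  have hupos' : ∀ x : E N, x ≠ 0 → ‖x‖ ≤ R0 → 0 < u x := fun x hx h => hupos x (hmem x hx h)
  rcases hκ0.eq_or_lt with hk | hk
  · refine core (N := N) (by omega) μ₁ μ₂ b κ hb hκ (fun t => -t) (fun _ => -1) (fun _ => 0)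
      (fun t => hasDerivAt_neg t) (fun t => hasDerivAt_const t _) ?_ ?_ ?_ 8 (by norm_num) ?_
      R0 c0 θ p hR0 hR1 hc0 hp1 hexp u hu' hupos' hineq'
    · intro t; rw [← hk]; ring
    · intro x y h; simpa using h
    · exact tendsto_neg_atBot_atTop
    · intro t ht; nlinarith
  · have hder : ∀ t : ℝ, HasDerivAt (fun t : ℝ => Real.exp (-(κ / 2) * t))
        (-(κ / 2) * Real.exp (-(κ / 2) * t)) t := by
      intro t
      have := ((hasDerivAt_id t).const_mul (-(κ / 2))).exp
      refine this.congr_deriv ?_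
      simp [mul_comm]
    refine core (N := N) (by omega) μ₁ μ₂ b κ hb hκ (fun t => Real.exp (-(κ / 2) * t))
      (fun t => -(κ / 2) * Real.exp (-(κ / 2) * t))
      (fun t => -(κ / 2) * (-(κ / 2) * Real.exp (-(κ / 2) * t)))
      hder (fun t => (hder t).const_mul _) ?_ ?_ ?_ (2 * κ ^ 2) (by positivity) ?_
      R0 c0 θ p hR0 hR1 hc0 hp1 hexp u hu' hupos' hineq'
    · intro t; ring
    · intro x y h
      apply Real.exp_lt_exp.2
      nlinarith
    · apply Real.tendsto_exp_atTop.comp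
      exact tendsto_id.const_mul_atBot_of_neg (by linarith)
    · intro t ht
      apply le_of_eq; ring
end
end

section
/- Let N ≥ 2, μ₁ ∈ ℝ and μ₂ ≥ -(N-2-μ₁)²/4. Let Ω ⊂ ℝ^N be a bounded smooth domain containing the origin and let f ∈ C^γ_loc(Ω̄ \ {0}) for some γ ∈ (0,1) be nonnegative with lim_{r→0⁺} ∫_{Ω \ B_r(0)} f(x) |x|^{τ₊-μ₁} dx = +∞. Then there is no nonnegative classical solution u ∈ C²(Ω \ {0}) of ℒ_{μ₁,μ₂}u = f in Ω \ {0} with u = 0 on ∂Ω. -/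
open MeasureTheory Filter Metric Set Topology

noncomputable section

lemma int_fderiv_zero {N : ℕ} (V : E N → ℝ) (hV : ContDiff ℝ 1 V) (hc : HasCompactSupport V)
    (v : E N) : Integrable (fun x => fderiv ℝ V x v) ∧ ∫ x, fderiv ℝ V x v = 0 := by
  have hi : Integrable (fun x => fderiv ℝ V x v) := by
    refine Continuous.integrable_of_hasCompactSupport ?_ (hc.fderiv_apply ℝ v)
    exact (hV.continuous_fderiv (by norm_num)).clm_apply continuous_const
  refine ⟨hi, ?_⟩
  have h := integral_mul_fderiv_eq_neg_fderiv_mul_of_integrable (μ := volume)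
    (f := V) (g := fun _ => (1 : ℝ)) (v := v) (by simpa using hi) (by simp)
    (by simpa using hV.continuous.integrable_of_hasCompactSupport hc)
    (fun x _ => (hV.differentiable (by norm_num)) x) (fun x _ => by fun_prop)
  simp at h
  exact h

lemma hasFDerivAt_logsq {N : ℕ} (x : E N) (hx : x ≠ 0) :
    HasFDerivAt (fun y : E N => Real.log (‖y‖ ^ 2)) ((2 / ‖x‖ ^ 2) • innerSL ℝ x) x := by
  have h := (hasStrictFDerivAt_norm_sq x).hasFDerivAt.log (by positivity)
  refine h.congr_fderiv ?_
  ext v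
  simp
  ring

lemma green {N : ℕ} (U : Set (E N)) (hU : IsOpen U) (h0 : (0 : E N) ∉ U)
    (u : E N → ℝ) (hu : ContDiffOn ℝ 2 u U)
    (p dp q dq : ℝ → ℝ) (hp : ∀ s, HasDerivAt p (dp s) s) (hq : ∀ s, HasDerivAt q (dq s) s)
    (hdp : Continuous dp) (hdq : Continuous dq) (a b : ℝ)
    (hp0 : ∀ s, s ∉ Icc a b → p s = 0) (hq0 : ∀ s, s ∉ Icc a b → q s = 0)
    (hsub : ∀ x : E N, x ≠ 0 → Real.log (‖x‖ ^ 2) ∈ Icc a b → x ∈ U) :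
    ∃ D : E N → ℝ, Integrable D ∧ ∫ x, D x = 0 ∧ (∀ x, x ∉ U → D x = 0) ∧
      ∀ x ∈ U, D x = lap N u x * p (Real.log (‖x‖ ^ 2)) +
        fderiv ℝ u x x * (2 * dp (Real.log (‖x‖ ^ 2)) / ‖x‖ ^ 2 + q (Real.log (‖x‖ ^ 2))) +
        u x * (N * q (Real.log (‖x‖ ^ 2)) + 2 * dq (Real.log (‖x‖ ^ 2))) := by
  classical
  set L : E N → ℝ := fun y => Real.log (‖y‖ ^ 2) with hL
  let V : Fin N → E N → ℝ := fun i => U.indicator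
    (fun x => fderiv ℝ u x (EuclideanSpace.single i 1) * p (L x) + u x * x i * q (L x))
  set K : Set (E N) := {x | ‖x‖ ^ 2 ∈ Icc (Real.exp a) (Real.exp b)} with hK
  have hKc : IsCompact K := by
    refine Metric.isCompact_of_isClosed_isBounded ?_ ?_
    · exact isClosed_Icc.preimage (by fun_prop : Continuous fun x : E N => ‖x‖ ^ 2)
    · refine (isBounded_closedBall (x := (0 : E N)) (r := Real.exp b + 1)).subset ?_
      intro x hx
      have := hx.2
      simp only [mem_closedBall, dist_zero_right]
      nlinarith [norm_nonneg x, sq_nonneg (‖x‖ - 1), Real.exp_pos b]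
  have hKL : ∀ x : E N, x ≠ 0 → (L x ∈ Icc a b ↔ x ∈ K) := by
    intro x hx
    have : 0 < ‖x‖ ^ 2 := by positivity
    simp only [hL, hK, mem_Icc, mem_ofPred_eq, Real.le_log_iff_exp_le this,
      Real.log_le_iff_le_exp this]
  have hK0 : ∀ x ∈ K, x ≠ 0 := by
    rintro x hx rfl
    have := hx.1
    simp at this
    linarith [Real.exp_pos a]
  have hKU : K ⊆ U := fun x hx => hsub x (hK0 x hx) ((hKL x (hK0 x hx)).2 hx)
  have hVK : ∀ i x, x ∉ K → V i x = 0 := by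
    intro i x hx
    by_cases hxU : x ∈ U
    · have hx0 : x ≠ 0 := fun h => h0 (h ▸ hxU)
      have : L x ∉ Icc a b := fun h => hx ((hKL x hx0).1 h)
      simp [V, hp0 _ this, hq0 _ this]
    · simp [V, hxU]
  have hpC : ContDiff ℝ 1 p := by
    rw [contDiff_one_iff_deriv]
    refine ⟨fun s => (hp s).differentiableAt, ?_⟩
    rwa [show deriv p = dp from funext fun s => (hp s).deriv]
  have hqC : ContDiff ℝ 1 q := by
    rw [contDiff_one_iff_deriv]
    refine ⟨fun s => (hq s).differentiableAt, ?_⟩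
    rwa [show deriv q = dq from funext fun s => (hq s).deriv]
  have huAt : ∀ x ∈ U, ContDiffAt ℝ 2 u x := fun x hx => hu.contDiffAt (hU.mem_nhds hx)
  have hVev : ∀ i, ∀ x ∈ U, V i =ᶠ[𝓝 x] (fun x => fderiv ℝ u x (EuclideanSpace.single i 1) * p (L x)
      + u x * x i * q (L x)) := by
    intro i x hx
    filter_upwards [hU.mem_nhds hx] with y hy
    simp [V, hy]
  have hVC : ∀ i, ContDiff ℝ 1 (V i) := by
    intro i
    rw [contDiff_iff_contDiffAt]
    intro x
    by_cases hx : x ∈ U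
    · have hx0 : x ≠ 0 := fun h => h0 (h ▸ hx)
      refine ContDiffAt.congr_of_eventuallyEq ?_ (hVev i x hx)
      have hLC : ContDiffAt ℝ 1 L x := (contDiff_norm_sq ℝ).contDiffAt.log (by positivity)
      have h1 : ContDiffAt ℝ 1 (fun x => fderiv ℝ u x (EuclideanSpace.single i 1)) x :=
        ((huAt x hx).fderiv_right (m := 1) (by norm_num)).clm_apply contDiffAt_const
      have h2 : ContDiffAt ℝ 1 u x := (huAt x hx).of_le (by norm_num)
      have h3 : ContDiffAt ℝ 1 (fun x : E N => x i) x := by fun_prop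
      exact (h1.mul (hpC.contDiffAt.comp x hLC)).add ((h2.mul h3).mul (hqC.contDiffAt.comp x hLC))
    · have hxK : x ∈ Kᶜ := fun h => hx (hKU h)
      refine ContDiffAt.congr_of_eventuallyEq (contDiffAt_const (c := (0 : ℝ))) ?_
      filter_upwards [hKc.isClosed.isOpen_compl.mem_nhds hxK] with y hy
      exact hVK i y hy
  have hVc : ∀ i, HasCompactSupport (V i) := fun i => HasCompactSupport.intro hKc (hVK i)
  refine ⟨fun x => ∑ i, fderiv ℝ (V i) x (EuclideanSpace.single i 1), ?_, ?_, ?_, ?_⟩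
  · exact integrable_finsetSum _ fun i _ => (int_fderiv_zero _ (hVC i) (hVc i) _).1
  · rw [integral_finsetSum _ fun i _ => (int_fderiv_zero _ (hVC i) (hVc i) _).1]
    exact Finset.sum_eq_zero fun i _ => (int_fderiv_zero _ (hVC i) (hVc i) _).2
  · intro x hx
    refine Finset.sum_eq_zero fun i _ => ?_
    have hxK : x ∈ Kᶜ := fun h => hx (hKU h)
    have : V i =ᶠ[𝓝 x] fun _ => (0 : ℝ) := by
      filter_upwards [hKc.isClosed.isOpen_compl.mem_nhds hxK] with y hy
      exact hVK i y hy
    rw [this.fderiv_eq]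
    simp
  · intro x hx
    have hx0 : x ≠ 0 := fun h => h0 (h ▸ hx)
    have hn : ‖x‖ ^ 2 ≠ 0 := by positivity
    have hLd := hasFDerivAt_logsq x hx0
    have key : ∀ i, fderiv ℝ (V i) x (EuclideanSpace.single i 1) =
        fderiv ℝ (fun y => fderiv ℝ u y (EuclideanSpace.single i 1)) x (EuclideanSpace.single i 1)
          * p (L x) + (x i * fderiv ℝ u x (EuclideanSpace.single i 1)) *
            (2 * dp (L x) / ‖x‖ ^ 2 + q (L x)) + u x * q (L x)
          + (x i ^ 2) * (u x * dq (L x) * 2 / ‖x‖ ^ 2) := by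
      intro i
      rw [(hVev i x hx).fderiv_eq]
      have h1 : HasFDerivAt (fun x => fderiv ℝ u x (EuclideanSpace.single i 1)) _ x :=
        ((((huAt x hx).fderiv_right (m := 1) (by norm_num)).clm_apply
          (contDiffAt_const (c := EuclideanSpace.single i (1:ℝ)))).differentiableAt
            (by norm_num)).hasFDerivAt
      have h2 : HasFDerivAt u (fderiv ℝ u x) x :=
        ((huAt x hx).differentiableAt (by norm_num)).hasFDerivAt
      have h3 : HasFDerivAt (fun x : E N => x i) (EuclideanSpace.proj i : E N →L[ℝ] ℝ) x :=
        (EuclideanSpace.proj i : E N →L[ℝ] ℝ).hasFDerivAt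
      have h4 := (hp (L x)).comp_hasFDerivAt x hLd
      have h5 := (hq (L x)).comp_hasFDerivAt x hLd
      have h6 := (h1.mul h4).add ((h2.mul h3).mul h5)
      have h7 := h6.fderiv
      refine (congrArg (fun A : E N →L[ℝ] ℝ => A (EuclideanSpace.single i 1)) h7).trans ?_
      simp [EuclideanSpace.inner_single_right]
      field_simp
      ring
    have hs : ∑ i, x i * fderiv ℝ u x (EuclideanSpace.single i 1) = fderiv ℝ u x x := by
      have h := (EuclideanSpace.basisFun (Fin N) ℝ).sum_repr x
      have hh := congrArg (fderiv ℝ u x) h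
      rw [map_sum] at hh
      simpa using hh
    simp only [key, Finset.sum_add_distrib, ← Finset.sum_mul, hs, ← EuclideanSpace.real_norm_sq_eq]
    simp only [lap, Finset.sum_const, Finset.card_univ, Fintype.card_fin, nsmul_eq_mul]
    field_simp
    ring

lemma cutoff (s1 : ℝ) : ∃ (c c1 c2 : ℝ → ℝ) (B : ℝ), 0 ≤ B ∧ (∀ s, HasDerivAt c (c1 s) s) ∧
    (∀ s, HasDerivAt c1 (c2 s) s) ∧ Continuous c2 ∧ (∀ s, 0 ≤ c s) ∧
    (∀ s, s ≤ s1 - 1 → c s = 1) ∧ (∀ s, s1 ≤ s → c s = 0) ∧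
    (∀ s, s ∉ Icc (s1 - 1) s1 → c1 s = 0 ∧ c2 s = 0) ∧
    (∀ s, |c1 s| ≤ B ∧ |c2 s| ≤ B) := by
  set c : ℝ → ℝ := fun s => Real.smoothTransition (s1 - s) with hc
  have hC : ContDiff ℝ 2 c :=
    (Real.smoothTransition.contDiff (n := 2)).comp (contDiff_const.sub contDiff_id)
  have hC1 : ContDiff ℝ 1 (deriv c) := by
    have := (contDiff_succ_iff_deriv (n := 1) (f := c)).1 (by norm_num; exact hC)
    exact this.2.2
  have hC2 : Continuous (deriv (deriv c)) := hC1.continuous_deriv (by norm_num)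
  have h1 : ∀ s, s ≤ s1 - 1 → c s = 1 := fun s hs =>
    Real.smoothTransition.one_of_one_le (by linarith)
  have h2 : ∀ s, s1 ≤ s → c s = 0 := fun s hs =>
    Real.smoothTransition.zero_of_nonpos (by linarith)
  have hz : ∀ s, s ∉ Icc (s1 - 1) s1 → deriv c s = 0 ∧ deriv (deriv c) s = 0 := by
    intro s hs
    have : ∃ k : ℝ, c =ᶠ[𝓝 s] fun _ => k := by
      rcases lt_or_ge s (s1 - 1) with h | h
      · exact ⟨1, by filter_upwards [Iio_mem_nhds h] with y hy using h1 y (le_of_lt hy)⟩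
      · have : s1 < s := by
          by_contra hh
          exact hs ⟨h, not_lt.1 hh⟩
        exact ⟨0, by filter_upwards [Ioi_mem_nhds this] with y hy using h2 y (le_of_lt hy)⟩
    obtain ⟨k, hk⟩ := this
    have hd := hk.deriv
    refine ⟨by rw [hk.deriv_eq]; simp, by rw [hd.deriv_eq]; simp⟩
  obtain ⟨B1, hB1⟩ := isCompact_Icc.exists_bound_of_continuousOn (s := Icc (s1-1) s1)
    hC1.continuous.continuousOn
  obtain ⟨B2, hB2⟩ := isCompact_Icc.exists_bound_of_continuousOn (s := Icc (s1-1) s1)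
    hC2.continuousOn
  refine ⟨c, deriv c, deriv (deriv c), max 0 (max B1 B2), le_max_left _ _,
    fun s => ((hC.differentiable (by norm_num)) s).hasDerivAt,
    fun s => ((hC1.differentiable (by norm_num)) s).hasDerivAt, hC2,
    fun s => Real.smoothTransition.nonneg _, h1, h2, hz, ?_⟩
  intro s
  by_cases hs : s ∈ Icc (s1 - 1) s1
  · exact ⟨(hB1 s hs).trans (by simp), (hB2 s hs).trans (by simp)⟩
  · simp [(hz s hs).1, (hz s hs).2]

lemma hasDerivAt_maxpow (n : ℕ) (y : ℝ) :
    HasDerivAt (fun y : ℝ => max y 0 ^ (n + 2)) ((n + 2 : ℝ) * max y 0 ^ (n + 1)) y := by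
  rcases lt_trichotomy y 0 with h | h | h
  · have : (fun y : ℝ => max y 0 ^ (n + 2)) =ᶠ[𝓝 y] fun _ => 0 := by
      filter_upwards [Iio_mem_nhds h] with z hz
      simp [max_eq_right (le_of_lt hz : z ≤ 0)]
    rw [max_eq_right h.le]
    simpa using (hasDerivAt_const y (0:ℝ)).congr_of_eventuallyEq this
  · subst h
    rw [hasDerivAt_iff_isLittleO]
    simp only [max_self, ne_eq, Nat.add_eq_zero_iff, one_ne_zero, and_false, not_false_eq_true,
      zero_pow, mul_zero, sub_zero, smul_zero, OfNat.ofNat_ne_zero]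
    have h1 : (fun y : ℝ => max y 0 ^ (n + 2)) =O[𝓝 0] fun y => y ^ (n + 2) := by
      refine Asymptotics.IsBigO.of_bound 1 (Eventually.of_forall fun y => ?_)
      simp only [norm_pow, one_mul, Real.norm_eq_abs]
      refine pow_le_pow_left₀ (abs_nonneg _) ?_ _
      rw [abs_of_nonneg (le_max_right y 0)]
      exact max_le (le_abs_self y) (abs_nonneg y)
    refine h1.trans_isLittleO ?_
    simpa using Asymptotics.isLittleO_pow_pow (𝕜 := ℝ) (m := 1) (n := n + 2) (by omega)
  · have : (fun y : ℝ => max y 0 ^ (n + 2)) =ᶠ[𝓝 y] fun y => y ^ (n + 2) := by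
      filter_upwards [Ioi_mem_nhds h] with z hz
      simp [max_eq_left (le_of_lt hz : 0 ≤ z)]
    rw [max_eq_left h.le]
    have h3 := (hasDerivAt_pow (n + 2) y).congr_of_eventuallyEq this
    simpa using h3

lemma testfun (N α μ₁ μ₂ s1 : ℝ)
    (h0 : -4 * α ^ 2 - (2 * N + 2 * μ₁ - 4) * α + μ₂ - (N - 2) * μ₁ = 0)
    (h1 : 0 ≤ 8 * α + 2 * N + 2 * μ₁ - 4) :
    ∃ K : ℝ, 0 ≤ K ∧ ∀ ε : ℝ, 0 < ε → ε ≤ 1 → ∃ p dp q dq : ℝ → ℝ,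
      (∀ s, HasDerivAt p (dp s) s) ∧ (∀ s, HasDerivAt q (dq s) s) ∧ Continuous dp ∧ Continuous dq ∧
      (∀ s, s ∉ Icc (-1 / ε) s1 → p s = 0) ∧ (∀ s, s ∉ Icc (-1 / ε) s1 → q s = 0) ∧
      (∀ s, 2 * dp s * Real.exp (-s) + q s = - μ₁ * p s * Real.exp (-s)) ∧
      (∀ s, 0 ≤ p s) ∧
      (∀ s, s ≤ s1 - 1 → p s = Real.exp (α * s) * max (1 + ε * s) 0 ^ 3) ∧
      (∀ s, s ∈ Icc (s1 - 1) s1 → N * q s + 2 * dq s + μ₂ * p s * Real.exp (-s) ≤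
        K * (Real.exp (α * s) * Real.exp (-s))) ∧
      (∀ s, s ∉ Icc (s1 - 1) s1 → N * q s + 2 * dq s + μ₂ * p s * Real.exp (-s) ≤ 0) := by
  obtain ⟨c, c1, c2, B, hB, hc, hc1, hc2, hcn, hcl, hcr, hcz, hcB⟩ := cutoff s1
  set M : ℝ := 2 + |s1| with hM
  set k : ℝ := 8 * α + 2 * N + 2 * μ₁ - 4 with hk
  refine ⟨4 * B * M ^ 3 + 24 * B * M ^ 2 + k * B * M ^ 3, by positivity, ?_⟩
  intro ε hε hε1
  set m : ℝ → ℝ := fun s => max (1 + ε * s) 0 with hm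
  have hm0 : ∀ s, 0 ≤ m s := fun s => le_max_right _ _
  have hmc : Continuous m := by fun_prop
  have hlin : ∀ s, HasDerivAt (fun s : ℝ => 1 + ε * s) ε s := fun s => by
    simpa using ((hasDerivAt_id s).const_mul ε).const_add 1
  have hm3 : ∀ s, HasDerivAt (fun s => m s ^ 3) (3 * ε * m s ^ 2) s := fun s => by
    have := (hasDerivAt_maxpow 1 (1 + ε * s)).comp s (hlin s)
    refine this.congr_deriv ?_
    simp only [hm]; push_cast; ring
  have hm2 : ∀ s, HasDerivAt (fun s => m s ^ 2) (2 * ε * m s) s := fun s => by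
    have := (hasDerivAt_maxpow 0 (1 + ε * s)).comp s (hlin s)
    refine this.congr_deriv ?_
    simp only [hm]; push_cast; ring
  set Y : ℝ → ℝ := fun s => c s * m s ^ 3 with hY
  set Y1 : ℝ → ℝ := fun s => c1 s * m s ^ 3 + c s * (3 * ε * m s ^ 2) with hY1
  set Y2 : ℝ → ℝ := fun s => c2 s * m s ^ 3 + 2 * c1 s * (3 * ε * m s ^ 2)
    + c s * (6 * ε ^ 2 * m s) with hY2
  have hYd : ∀ s, HasDerivAt Y (Y1 s) s := fun s => (hc s).mul (hm3 s)
  have hY1d : ∀ s, HasDerivAt Y1 (Y2 s) s := fun s => by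
    refine (((hc1 s).mul (hm3 s)).add ((hc s).mul ((hm2 s).const_mul (3 * ε)))).congr_deriv ?_
    simp only [hY2]; ring
  have hYc : Continuous Y := continuous_iff_continuousAt.2 fun s => (hYd s).continuousAt
  have hY1c : Continuous Y1 := continuous_iff_continuousAt.2 fun s => (hY1d s).continuousAt
  have hcc : Continuous c := continuous_iff_continuousAt.2 fun s => (hc s).continuousAt
  have hc1c : Continuous c1 := continuous_iff_continuousAt.2 fun s => (hc1 s).continuousAt
  have hY2c : Continuous Y2 := by simp only [hY2]; fun_prop
  have hea : ∀ s, HasDerivAt (fun s => Real.exp (α * s)) (α * Real.exp (α * s)) s := fun s => by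
    have := ((hasDerivAt_id s).const_mul α).exp
    simpa [mul_comm] using this
  have hen : ∀ s : ℝ, HasDerivAt (fun s => Real.exp (-s)) (-Real.exp (-s)) s := fun s => by
    have := (hasDerivAt_id s).neg.exp
    simpa using this
  set p : ℝ → ℝ := fun s => Real.exp (α * s) * Y s with hp
  set p1 : ℝ → ℝ := fun s => Real.exp (α * s) * (α * Y s + Y1 s) with hp1
  set p2 : ℝ → ℝ := fun s => Real.exp (α * s) * (α ^ 2 * Y s + 2 * α * Y1 s + Y2 s) with hp2
  have hpd : ∀ s, HasDerivAt p (p1 s) s := fun s => by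
    refine ((hea s).mul (hYd s)).congr_deriv ?_
    simp only [hp1]; ring
  have hp1d : ∀ s, HasDerivAt p1 (p2 s) s := fun s => by
    refine ((hea s).mul (((hYd s).const_mul α).add (hY1d s))).congr_deriv ?_
    simp only [hp2, Pi.add_apply]; ring
  have hpz : ∀ s, s ∉ Icc (-1 / ε) s1 → Y s = 0 ∧ Y1 s = 0 := by
    intro s hs
    rcases lt_or_ge s1 s with h | h
    · have hh : s ∉ Icc (s1 - 1) s1 := fun hh => absurd hh.2 (not_le.2 h)
      simp [hY, hY1, hcr s h.le, (hcz s hh).1]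
    · have h2 : s < -1 / ε := by
        by_contra hh
        exact hs ⟨not_lt.1 hh, h⟩
      rw [lt_div_iff₀ hε] at h2
      have : m s = 0 := max_eq_right (by linarith)
      simp [hY, hY1, this]
  have hid : ∀ s, N * (-(2 * p1 s + μ₁ * p s) * Real.exp (-s)) + 2 * (-(2 * p2 s + μ₁ * p1 s) *
      Real.exp (-s) + (2 * p1 s + μ₁ * p s) * Real.exp (-s)) + μ₂ * p s * Real.exp (-s)
      = - (Real.exp (α * s) * Real.exp (-s)) * (4 * Y2 s + k * Y1 s) := by
    intro s
    simp only [hp, hp1, hp2, hk]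
    linear_combination (Real.exp (α * s) * Real.exp (-s) * Y s) * h0
  have hlow : ∀ s, 4 * (c2 s * m s ^ 3) + 8 * (c1 s * (3 * ε * m s ^ 2)) + k * (c1 s * m s ^ 3) ≤
      4 * Y2 s + k * Y1 s := by
    intro s
    have a1 : 0 ≤ c s * (6 * ε ^ 2 * m s) := by have := hm0 s; have := hcn s; positivity
    have a2 : 0 ≤ k * (c s * (3 * ε * m s ^ 2)) := by have := hm0 s; have := hcn s; positivity
    simp only [hY1, hY2]
    linarith
  refine ⟨p, p1, fun s => -(2 * p1 s + μ₁ * p s) * Real.exp (-s), fun s =>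
    -(2 * p2 s + μ₁ * p1 s) * Real.exp (-s) + (2 * p1 s + μ₁ * p s) * Real.exp (-s),
    hpd, ?_, by simp only [hp1]; fun_prop, by simp only [hp, hp1, hp2]; fun_prop, ?_, ?_, ?_, ?_, ?_, ?_, ?_⟩
  · intro s
    refine (((((hp1d s).const_mul 2).add ((hpd s).const_mul μ₁)).neg).mul (hen s)).congr_deriv ?_
    simp only [Pi.add_apply, Pi.neg_apply]
    ring
  · intro s hs
    simp [hp, (hpz s hs).1]
  · intro s hs
    simp [hp, hp1, (hpz s hs).1, (hpz s hs).2]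
  · intro s
    ring
  · intro s
    have := hm0 s; have := hcn s
    simp only [hp, hY]; positivity
  · intro s hs
    simp [hp, hY, hcl s hs, hm]
  · intro s hs
    simp only [hid]
    have hE : 0 ≤ Real.exp (α * s) * Real.exp (-s) := by positivity
    have hmM : m s ≤ M := by
      have : |s| ≤ |s1| + 1 := by
        rw [abs_le]
        constructor <;> linarith [hs.1, hs.2, neg_abs_le s1, le_abs_self s1]
      refine max_le ?_ (by positivity)
      nlinarith [le_abs_self s, abs_nonneg s]
    have e3 : m s ^ 3 ≤ M ^ 3 := by have := hm0 s; gcongr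
    have e2 : m s ^ 2 ≤ M ^ 2 := by have := hm0 s; gcongr
    have f3 : 0 ≤ m s ^ 3 := by have := hm0 s; positivity
    have f2 : 0 ≤ m s ^ 2 := by have := hm0 s; positivity
    have b1 := abs_le.1 (hcB s).1
    have b2 := abs_le.1 (hcB s).2
    have g1 : -(B * M ^ 3) ≤ c2 s * m s ^ 3 := by
      nlinarith [mul_le_mul_of_nonneg_left e3 hB, mul_le_mul_of_nonneg_right b2.1 f3]
    have g2 : -(B * M ^ 3) ≤ c1 s * m s ^ 3 := by
      nlinarith [mul_le_mul_of_nonneg_left e3 hB, mul_le_mul_of_nonneg_right b1.1 f3]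
    have g3 : -(B * M ^ 2) ≤ c1 s * (ε * m s ^ 2) := by
      have : ε * m s ^ 2 ≤ M ^ 2 := by nlinarith
      have f4 : 0 ≤ ε * m s ^ 2 := by positivity
      nlinarith [mul_le_mul_of_nonneg_left this hB, mul_le_mul_of_nonneg_right b1.1 f4]
    have g4 := mul_le_mul_of_nonneg_left g2 h1
    have := hlow s
    have hfin : -(4 * Y2 s + k * Y1 s) ≤ 4 * B * M ^ 3 + 24 * B * M ^ 2 + k * B * M ^ 3 := by
      linarith
    nlinarith [mul_le_mul_of_nonneg_left hfin hE]
  · intro s hs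
    simp only [hid]
    have hE : 0 ≤ Real.exp (α * s) * Real.exp (-s) := by positivity
    have := hlow s
    rw [(hcz s hs).1, (hcz s hs).2] at this
    have hh : 0 ≤ 4 * Y2 s + k * Y1 s := by linarith
    nlinarith [mul_nonneg hE hh]

/-- nonexistence of nonnegative solutions of the Poisson problem
when the weighted integral of `f` near the origin blows up. -/
theorem stmt4 (N : ℕ) (hN : 2 ≤ N) (μ₁ μ₂ : ℝ)
    (hμ₂ : -((N : ℝ) - 2 - μ₁) ^ 2 / 4 ≤ μ₂)
    (Ω : Set (E N)) (hΩo : IsOpen Ω) (hΩc : IsConnected Ω)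
    (hΩb : Bornology.IsBounded Ω) (h0Ω : (0 : E N) ∈ Ω)
    (γ : ℝ) (hγ : γ ∈ Set.Ioo (0 : ℝ) 1)
    (f : E N → ℝ) (hfreg : LocHolderOn N γ f (closure Ω \ {0}))
    (hfpos : ∀ x ∈ closure Ω \ {0}, 0 ≤ f x)
    (hfblow : Filter.Tendsto
      (fun r : ℝ => ∫ x in Ω \ ball (0 : E N) r, f x * ‖x‖ ^ (tauPlus N μ₁ μ₂ - μ₁))
      (nhdsWithin (0 : ℝ) (Set.Ioi 0)) Filter.atTop) :
    ¬ ∃ u : E N → ℝ, ContDiffOn ℝ 2 u (Ω \ {0}) ∧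
        (∀ x ∈ Ω \ {0}, 0 ≤ u x) ∧
        (∀ x ∈ Ω \ {0}, ckn N μ₁ μ₂ u x = f x) ∧
        (∀ x ∈ frontier Ω, u x = 0) := by
  rintro ⟨u, hu, hun, hue, -⟩
  set τ := tauPlus N μ₁ μ₂ with hτ
  set α : ℝ := (τ - μ₁) / 2 with hα
  have hD : 0 ≤ (2 - (N : ℝ) + μ₁) ^ 2 + 4 * μ₂ := by nlinarith
  have hsq := Real.sq_sqrt hD
  have hsn := Real.sqrt_nonneg ((2 - (N : ℝ) + μ₁) ^ 2 + 4 * μ₂)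
  set S := Real.sqrt ((2 - (N : ℝ) + μ₁) ^ 2 + 4 * μ₂) with hS
  have hτS : τ = ((2 - (N : ℝ) + μ₁) + S) / 2 := rfl
  have h0 : -4 * α ^ 2 - (2 * (N : ℝ) + 2 * μ₁ - 4) * α + μ₂ - ((N : ℝ) - 2) * μ₁ = 0 := by
    rw [hα, hτS]
    linear_combination (-1 / 4) * hsq
  have h1 : 0 ≤ 8 * α + 2 * (N : ℝ) + 2 * μ₁ - 4 := by
    rw [hα, hτS]
    linarith
  obtain ⟨R, hR, hRΩ⟩ : ∃ R > 0, closedBall (0 : E N) R ⊆ Ω :=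
    Metric.nhds_basis_closedBall.mem_iff.1 (hΩo.mem_nhds h0Ω)
  set s1 : ℝ := Real.log (R ^ 2) with hs1
  have hes1 : Real.exp s1 = R ^ 2 := Real.exp_log (by positivity)
  obtain ⟨K, hK, htest⟩ := testfun (N : ℝ) α μ₁ μ₂ s1 h0 h1
  set U : Set (E N) := Ω \ {0} with hU
  have hUo : IsOpen U := hΩo.sdiff isClosed_singleton
  have hU0 : (0 : E N) ∉ U := by simp [hU]
  have hUne : ∀ x ∈ U, x ≠ 0 := fun x hx => by simpa using hx.2
  have hLU : ∀ x : E N, x ≠ 0 → Real.log (‖x‖ ^ 2) ≤ s1 → x ∈ U := by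
    intro x hx hl
    rw [Real.log_le_iff_le_exp (by positivity), hes1] at hl
    refine ⟨hRΩ ?_, by simpa using hx⟩
    simp only [mem_closedBall, dist_zero_right]
    exact (pow_le_pow_iff_left₀ (norm_nonneg x) hR.le two_ne_zero).1 hl
  -- regularity of `f`
  have hfc : ContinuousOn f (closure Ω \ {0}) := by
    intro x hx
    obtain ⟨t, ht, C, hC⟩ := hfreg x hx
    have h2 := hC.continuousOn (by simpa using hγ.1)
    exact (h2 x (mem_of_mem_nhdsWithin hx ht)).mono_of_mem_nhdsWithin ht
  set g : E N → ℝ := fun x => f x * ‖x‖ ^ (τ - μ₁) with hg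
  have hgexp : ∀ x : E N, x ≠ 0 → g x = f x * Real.exp (α * Real.log (‖x‖ ^ 2)) := by
    intro x hx
    have : 0 < ‖x‖ := by positivity
    simp only [hg, Real.rpow_def_of_pos this, Real.log_pow, hα]
    congr 2
    push_cast
    ring
  set r0 : ℝ := Real.exp ((s1 - 1) / 2) with hr0
  have hr0p : 0 < r0 := Real.exp_pos _
  have hr0L : Real.log (r0 ^ 2) = s1 - 1 := by
    rw [Real.log_pow, hr0, Real.log_exp]; push_cast; ring
  have hgi : IntegrableOn g (Ω \ ball 0 r0) := by
    have hcomp : IsCompact (closure Ω \ ball (0 : E N) r0) :=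
      (hΩb.isCompact_closure).diff isOpen_ball
    refine IntegrableOn.mono_set (ContinuousOn.integrableOn_compact hcomp ?_)
      (sdiff_subset_sdiff_left subset_closure)
    have hne : ∀ x ∈ closure Ω \ ball (0 : E N) r0, x ≠ 0 := by
      rintro x hx rfl
      exact hx.2 (mem_ball_self hr0p)
    refine (hfc.mono fun x hx => ⟨hx.1, by simpa using hne x hx⟩).mul ?_
    exact continuous_norm.continuousOn.rpow_const fun x hx => Or.inl (by simpa using hne x hx)
  -- the fixed majorant
  set A : Set (E N) := {x | ‖x‖ ^ 2 ∈ Icc (Real.exp (s1 - 1)) (Real.exp s1)} with hA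
  have hAcl : IsClosed A := isClosed_Icc.preimage (by fun_prop : Continuous fun x : E N => ‖x‖ ^ 2)
  have hAne : ∀ x ∈ A, x ≠ 0 := by
    rintro x hx rfl
    have := hx.1
    simp at this
    linarith [Real.exp_pos (s1 - 1)]
  have hAL : ∀ x : E N, x ≠ 0 → (Real.log (‖x‖ ^ 2) ∈ Icc (s1 - 1) s1 ↔ x ∈ A) := by
    intro x hx
    have : 0 < ‖x‖ ^ 2 := by positivity
    simp only [hA, mem_Icc, mem_ofPred_eq, Real.le_log_iff_exp_le this,
      Real.log_le_iff_le_exp this]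
  have hAU : A ⊆ U := fun x hx => hLU x (hAne x hx) ((hAL x (hAne x hx)).2 hx).2
  have hAc : IsCompact A :=
    Metric.isCompact_of_isClosed_isBounded hAcl (hΩb.subset fun x hx => (hAU hx).1)
  set m : E N → ℝ := A.indicator fun x => K * u x *
    (Real.exp (α * Real.log (‖x‖ ^ 2)) * Real.exp (-Real.log (‖x‖ ^ 2))) with hm
  have hmn : ∀ x, 0 ≤ m x := by
    intro x
    refine indicator_nonneg (fun x hx => ?_) x
    have := hun x (hAU hx)
    positivity
  have hmi : Integrable m := by
    rw [hm, integrable_indicator_iff hAcl.measurableSet]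
    refine ContinuousOn.integrableOn_compact hAc ?_
    have hlc : ContinuousOn (fun x : E N => Real.log (‖x‖ ^ 2)) A :=
      ContinuousOn.log (by fun_prop) fun x hx => by have := hAne x hx; positivity
    have huc : ContinuousOn u A := hu.continuousOn.mono hAU
    fun_prop
  have hclaim : ∀ r : ℝ, 0 < r → ∫ x in Ω \ ball (0 : E N) r, g x ≤
      8 * (∫ x, m x) + ∫ x in Ω \ ball (0 : E N) r0, g x := by
    intro r hr
    set ℓ : ℝ := |Real.log (r ^ 2)| with hℓ
    have hℓ0 : 0 ≤ ℓ := abs_nonneg _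
    have hεp : 0 < 1 / (2 * ℓ + 1) := by positivity
    have hε1 : 1 / (2 * ℓ + 1) ≤ 1 := by
      rw [div_le_one (by positivity)]; linarith
    have hεℓ : 1 / (2 * ℓ + 1) * ℓ ≤ 1 / 2 := by
      rw [div_mul_eq_mul_div, div_le_iff₀ (by positivity)]; linarith
    set ε : ℝ := 1 / (2 * ℓ + 1) with hε
    obtain ⟨p, dp, q, dq, hp, hq, hpc, hqc, hp0, hq0, hrel, hpn, hpe, hin, hout⟩ := htest ε hεp hε1
    obtain ⟨D, hDi, hD0, hDz, hDe⟩ := green U hUo hU0 u hu p dp q dq hp hq hpc hqc (-1 / ε) s1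
      hp0 hq0 (fun x hx h => hLU x hx h.2)
    have hmain : ∀ x ∈ U, f x * p (Real.log (‖x‖ ^ 2)) ≤ m x - D x := by
      intro x hx
      have hx0 := hUne x hx
      have ht : 0 < ‖x‖ ^ 2 := by positivity
      have hex : Real.exp (-Real.log (‖x‖ ^ 2)) = 1 / ‖x‖ ^ 2 := by
        rw [Real.exp_neg, Real.exp_log ht, one_div]
      have hr1 := hrel (Real.log (‖x‖ ^ 2))
      have hfx := hue x hx
      have hux := hun x hx
      set s := Real.log (‖x‖ ^ 2) with hs
      have hid : f x * p s = u x * (N * q s + 2 * dq s + μ₂ * p s * Real.exp (-s)) - D x := by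
        rw [hDe x hx, ← hfx, ckn, ← hs]
        rw [hex] at hr1 ⊢
        linear_combination (fderiv ℝ u x x) * hr1
      rw [hid]
      have : u x * (N * q s + 2 * dq s + μ₂ * p s * Real.exp (-s)) ≤ m x := by
        by_cases hxA : x ∈ A
        · have h3 := hin s ((hAL x hx0).2 hxA)
          have h4 := mul_le_mul_of_nonneg_left h3 hux
          simp only [hm, indicator_of_mem hxA]
          rw [← hs]
          linarith
        · have h3 := hout s (fun h => hxA ((hAL x hx0).1 h))
          have h4 := mul_nonpos_of_nonneg_of_nonpos hux h3
          linarith [hmn x]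
      linarith
    have hfU : ∀ x ∈ U, 0 ≤ f x := fun x hx => hfpos x ⟨subset_closure hx.1, hx.2⟩
    have hmD : ∀ x, 0 ≤ m x - D x := by
      intro x
      by_cases hx : x ∈ U
      · exact (mul_nonneg (hfU x hx) (hpn _)).trans (hmain x hx)
      · rw [hDz x hx]; linarith [hmn x]
    have hnU : ∀ ρ : ℝ, 0 < ρ → ∀ x ∈ Ω \ ball (0 : E N) ρ, x ∈ U := by
      intro ρ hρ x hx
      refine ⟨hx.1, ?_⟩
      rintro rfl
      exact hx.2 (mem_ball_self hρ)
    have hgn : ∀ x ∈ U, 0 ≤ g x := fun x hx =>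
      mul_nonneg (hfU x hx) (Real.rpow_nonneg (norm_nonneg x) _)
    have hms : ∀ ρ : ℝ, MeasurableSet (Ω \ ball (0 : E N) ρ) := fun ρ =>
      hΩo.measurableSet.diff measurableSet_ball
    have hgind : Integrable ((Ω \ ball (0 : E N) r0).indicator g) :=
      (integrable_indicator_iff (hms r0)).2 hgi
    have hmDi : Integrable (fun x => 8 * (m x - D x)) := (hmi.sub hDi).const_mul 8
    have hle : ∫ x, (Ω \ ball (0 : E N) r).indicator g x ≤
        ∫ x, (8 * (m x - D x) + (Ω \ ball (0 : E N) r0).indicator g x) := by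
      refine integral_mono_of_nonneg (Eventually.of_forall fun x => ?_) (hmDi.add hgind)
        (Eventually.of_forall fun x => ?_)
      · exact indicator_nonneg (fun x hx => hgn x (hnU r hr x hx)) x
      · have hi0 : 0 ≤ (Ω \ ball (0 : E N) r0).indicator g x :=
          indicator_nonneg (fun x hx => hgn x (hnU r0 hr0p x hx)) x
        have := hmD x
        by_cases hx : x ∈ Ω \ ball (0 : E N) r
        · have hxU := hnU r hr x hx
          have hx0 := hUne x hxU
          simp only [indicator_of_mem hx]
          by_cases hxr : x ∈ ball (0 : E N) r0
          · have hxrr : ‖x‖ < r0 := by simpa using hxr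
            have hrx : r ≤ ‖x‖ := by simpa using hx.2
            have hl1 : Real.log (‖x‖ ^ 2) ≤ s1 - 1 := by
              rw [← hr0L]
              exact Real.log_le_log (by positivity) (by gcongr)
            have hl2 : -ℓ ≤ Real.log (‖x‖ ^ 2) :=
              (neg_abs_le _).trans (Real.log_le_log (by positivity) (by gcongr))
            have h3 := hmain x hxU
            rw [hpe _ hl1] at h3
            rw [hgexp x hx0]
            have hhalf : (1 / 2 : ℝ) ≤ max (1 + ε * Real.log (‖x‖ ^ 2)) 0 := by
              refine le_max_of_le_left ?_
              have := mul_le_mul_of_nonneg_left hl2 hεp.le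
              linarith
            have hcube : (1 / 8 : ℝ) ≤ max (1 + ε * Real.log (‖x‖ ^ 2)) 0 ^ 3 := by
              have := pow_le_pow_left₀ (by norm_num) hhalf 3
              linarith
            have hfe : 0 ≤ f x * Real.exp (α * Real.log (‖x‖ ^ 2)) :=
              mul_nonneg (hfU x hxU) (Real.exp_pos _).le
            have h5 := mul_le_mul_of_nonneg_left hcube hfe
            linarith
          · have : x ∈ Ω \ ball (0 : E N) r0 := ⟨hx.1, hxr⟩
            simp only [indicator_of_mem this]
            linarith
        · simp only [indicator_of_notMem hx]
          linarith
    rw [integral_indicator (hms r), integral_add hmDi hgind, integral_indicator (hms r0),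
      integral_const_mul, integral_sub hmi hDi, hD0, sub_zero] at hle
    exact hle
  have hev := (hfblow.eventually (eventually_gt_atTop
    (8 * (∫ x, m x) + ∫ x in Ω \ ball (0 : E N) r0, g x))).and self_mem_nhdsWithin
  obtain ⟨r, hr1, hr2⟩ := hev.exists
  exact absurd (hclaim r hr2) (not_le.2 hr1)
end
end

section
/- Let N ≥ 2, μ₁ ∈ ℝ and μ₂ < -(N-2-μ₁)²/4. Let Ω ⊂ ℝ^N be a bounded smooth domain containing the origin and let f ∈ C^γ_loc(Ω̄ \ {0}) for some γ ∈ (0,1) be nonnegative and not identically zero. Then there is no nonnegative classical solution u ∈ C²(Ω \ {0}) of ℒ_{μ₁,μ₂}u = f in Ω \ {0} with u = 0 on ∂Ω. -/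
open MeasureTheory Filter Metric Set Topology

noncomputable section

lemma second_nonneg {g g' : ℝ → ℝ} {c : ℝ} (h1 : ∀ᶠ t in 𝓝 (0:ℝ), HasDerivAt g (g' t) t)
    (h2 : HasDerivAt g' c 0) (hm : IsLocalMin g 0) : 0 ≤ c := by
  by_contra hc
  push Not at hc
  have e1 : deriv g =ᶠ[𝓝 0] g' := h1.mono fun t ht => ht.deriv
  have e2 : deriv (deriv g) 0 = c := by rw [e1.deriv_eq]; exact h2.deriv
  have hM : IsLocalMax g 0 := isLocalMax_of_deriv_deriv_neg (by rw [e2]; exact hc)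
    hm.deriv_eq_zero h1.self_of_nhds.continuousAt
  have e3 : g =ᶠ[𝓝 0] fun _ => g 0 := by
    filter_upwards [hM, hm] with t ht1 ht2 using le_antisymm ht1 ht2
  have e4 : deriv g =ᶠ[𝓝 0] fun _ => 0 := by
    have := e3.deriv
    simpa using this
  rw [e4.deriv_eq] at e2
  simp at e2
  linarith

lemma touch_s5 {N : ℕ} {u φ : E N → ℝ} {z : E N} (hu : ContDiffAt ℝ 2 u z)
    (hφ : ContDiffAt ℝ 2 φ z) (hm : IsLocalMin (fun x => u x - φ x) z) :
    fderiv ℝ u z = fderiv ℝ φ z ∧ lap N φ z ≤ lap N u z := by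
  have key : ∀ {v : E N → ℝ}, ContDiffAt ℝ 2 v z → (∀ᶠ y in 𝓝 z, DifferentiableAt ℝ v y) ∧
      ∀ e : E N, DifferentiableAt ℝ (fun y => fderiv ℝ v y e) z := by
    intro v hv
    refine ⟨?_, fun e => ?_⟩
    · filter_upwards [hv.eventually (by simp)] with y hy
      exact hy.differentiableAt (by simp)
    · have h := hv.fderiv_right (m := 1) (by norm_num)
      exact (h.differentiableAt (by simp)).clm_apply (differentiableAt_const e)
  obtain ⟨u1, u2⟩ := key hu
  obtain ⟨p1, p2⟩ := key hφ
  constructor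
  · have := hm.fderiv_eq_zero
    rw [fderiv_fun_sub u1.self_of_nhds p1.self_of_nhds] at this
    exact sub_eq_zero.mp this
  · unfold lap
    apply Finset.sum_le_sum
    intro i _
    set e : E N := EuclideanSpace.single i 1
    have hl : ∀ t : ℝ, HasDerivAt (fun t : ℝ => z + t • e) e t := by
      intro t
      simpa using ((hasDerivAt_id t).smul_const e).const_add z
    have hc : Tendsto (fun t : ℝ => z + t • e) (𝓝 0) (𝓝 z) := by
      have := (hl 0).continuousAt.tendsto
      simpa using this
    have := second_nonneg (g := fun t => u (z + t • e) - φ (z + t • e))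
      (g' := fun t => fderiv ℝ u (z + t • e) e - fderiv ℝ φ (z + t • e) e)
      (c := fderiv ℝ (fun y => fderiv ℝ u y e) z e - fderiv ℝ (fun y => fderiv ℝ φ y e) z e)
      ?_ ?_ ?_
    · linarith
    · filter_upwards [hc.eventually u1, hc.eventually p1] with t h1 h2
      exact (h1.hasFDerivAt.comp_hasDerivAt t (hl t)).sub (h2.hasFDerivAt.comp_hasDerivAt t (hl t))
    · have h1 : HasFDerivAt (fun y => fderiv ℝ u y e) (fderiv ℝ (fun y => fderiv ℝ u y e) z)
        (z + (0:ℝ) • e) := by simpa using (u2 e).hasFDerivAt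
      have h2 : HasFDerivAt (fun y => fderiv ℝ φ y e) (fderiv ℝ (fun y => fderiv ℝ φ y e) z)
        (z + (0:ℝ) • e) := by simpa using (p2 e).hasFDerivAt
      exact (h1.comp_hasDerivAt 0 (hl 0)).sub (h2.comp_hasDerivAt 0 (hl 0))
    · have := hc.eventually hm
      simpa [IsLocalMin, IsMinFilter] using this

lemma radial {N : ℕ} {G G' : ℝ → ℝ} {c : ℝ} {y z : E N}
    (h1 : ∀ᶠ s in 𝓝 (‖z - y‖ ^ 2), HasDerivAt G (G' s) s)
    (h2 : HasDerivAt G' c (‖z - y‖ ^ 2)) :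
    (∀ v, fderiv ℝ (fun x => G (‖x - y‖ ^ 2)) z v = 2 * G' (‖z - y‖ ^ 2) * inner ℝ (z - y) v) ∧
    lap N (fun x => G (‖x - y‖ ^ 2)) z = 2 * N * G' (‖z - y‖ ^ 2) + 4 * ‖z - y‖ ^ 2 * c := by
  have hs : ∀ x : E N, HasFDerivAt (fun x : E N => ‖x - y‖ ^ 2) (2 • (innerSL ℝ (x - y))) x := by
    intro x
    simpa using ((hasFDerivAt_id x).sub_const y).norm_sq
  have hc : Tendsto (fun x : E N => ‖x - y‖ ^ 2) (𝓝 z) (𝓝 (‖z - y‖ ^ 2)) :=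
    (hs z).continuousAt.tendsto
  have hd : ∀ᶠ x in 𝓝 z, ∀ v, fderiv ℝ (fun x => G (‖x - y‖ ^ 2)) x v
      = 2 * G' (‖x - y‖ ^ 2) * inner ℝ (x - y) v := by
    filter_upwards [hc.eventually h1] with x hx v
    have := (hx.comp_hasFDerivAt x (hs x)).fderiv
    rw [show (fun x => G (‖x - y‖ ^ 2)) = G ∘ (fun x : E N => ‖x - y‖ ^ 2) from rfl, this]
    simp [inner_sub_left]
    ring
  refine ⟨hd.self_of_nhds, ?_⟩
  unfold lap
  have hi : ∀ i : Fin N, fderiv ℝ (fun x => fderiv ℝ (fun x => G (‖x - y‖ ^ 2)) x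
      (EuclideanSpace.single i 1)) z (EuclideanSpace.single i 1)
      = 2 * G' (‖z - y‖ ^ 2) + 4 * c * ((z - y) i) ^ 2 := by
    intro i
    set e : E N := EuclideanSpace.single i 1 with he
    have e1 : (fun x => fderiv ℝ (fun x => G (‖x - y‖ ^ 2)) x e) =ᶠ[𝓝 z]
      fun x => 2 * G' (‖x - y‖ ^ 2) * inner ℝ (x - y) e := hd.mono fun x hx => hx e
    rw [e1.fderiv_eq]
    have a1 : HasFDerivAt (fun x : E N => 2 * G' (‖x - y‖ ^ 2)) _ z :=
      (h2.comp_hasFDerivAt z (hs z)).const_mul 2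
    have a2 : HasFDerivAt (fun x : E N => inner ℝ (x - y) e) (innerSL ℝ e) z := by
      have : HasFDerivAt (fun x : E N => innerSL ℝ e (x - y)) (innerSL ℝ e) z := by
        have := (innerSL ℝ e).hasFDerivAt.comp z ((hasFDerivAt_id z).sub_const y)
        exact this
      refine this.congr_of_eventuallyEq (Eventually.of_forall fun x => ?_)
      simp [real_inner_comm]
    have a3 : HasFDerivAt (fun x : E N => 2 * G' (‖x - y‖ ^ 2) * inner ℝ (x - y) e) _ z := a1.mul a2
    rw [a3.fderiv]
    simp [he, EuclideanSpace.inner_single_right, EuclideanSpace.inner_single_left]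
    ring
  rw [Finset.sum_congr rfl fun i _ => hi i, Finset.sum_add_distrib, ← Finset.mul_sum,
    ← Finset.mul_sum, ← EuclideanSpace.real_norm_sq_eq]
  simp
  ring

lemma punctured {N : ℕ} (hN : 2 ≤ N) (δ : ℝ) : IsPreconnected (ball (0 : E N) δ \ {0}) := by
  have hr : 1 < Module.rank ℝ (E N) := by
    rw [← Module.finrank_eq_rank]
    simp
    omega
  have := ((isPreconnected_Ioo (a := (0:ℝ)) (b := δ)).prod
    (isPreconnected_sphere hr (0 : E N) 1)).image (fun p => p.1 • p.2)
    (by fun_prop)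
  convert this using 1
  ext x
  simp only [Set.mem_sdiff, mem_ball_zero_iff, mem_singleton_iff, mem_image, mem_prod, mem_Ioo,
    mem_sphere_zero_iff_norm, Prod.exists]
  constructor
  · rintro ⟨h1, h2⟩
    have : 0 < ‖x‖ := norm_pos_iff.mpr h2
    refine ⟨‖x‖, ‖x‖⁻¹ • x, ⟨⟨this, h1⟩, ?_⟩, ?_⟩
    · rw [norm_smul]; simp [this.ne']
    · rw [smul_smul, mul_inv_cancel₀ this.ne', one_smul]
  · rintro ⟨a, b, ⟨⟨h1, h2⟩, h3⟩, rfl⟩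
    refine ⟨by rw [norm_smul, h3]; simpa [abs_of_pos h1] using h2, ?_⟩
    rw [smul_eq_zero]
    rintro (h | h)
    · exact h1.ne' h
    · simp [h] at h3

lemma test_fun {N : ℕ} {μ₁ μ₂ : ℝ} {u : E N → ℝ} {G G' : ℝ → ℝ} {c : ℝ} {y z : E N}
    (hu : ContDiffAt ℝ 2 u z) (hG : ContDiffAt ℝ 2 G (‖z - y‖ ^ 2))
    (h1 : ∀ᶠ s in 𝓝 (‖z - y‖ ^ 2), HasDerivAt G (G' s) s)
    (h2 : HasDerivAt G' c (‖z - y‖ ^ 2))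
    (hm : IsLocalMin (fun x => u x - G (‖x - y‖ ^ 2)) z) (hL : 0 ≤ ckn N μ₁ μ₂ u z) :
    0 ≤ -(2 * N * G' (‖z - y‖ ^ 2) + 4 * ‖z - y‖ ^ 2 * c)
      + μ₁ / ‖z‖ ^ 2 * (2 * G' (‖z - y‖ ^ 2) * inner ℝ (z - y) z) + μ₂ / ‖z‖ ^ 2 * u z := by
  obtain ⟨r1, r2⟩ := radial h1 h2
  have hφ : ContDiffAt ℝ 2 (fun x : E N => G (‖x - y‖ ^ 2)) z := by
    have : ContDiffAt ℝ 2 (fun x : E N => ‖x - y‖ ^ 2) z :=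
      (contDiff_id.sub contDiff_const).norm_sq ℝ |>.contDiffAt
    exact ContDiffAt.comp z hG this
  obtain ⟨t1, t2⟩ := touch_s5 hu hφ hm
  unfold ckn at hL
  rw [t1, r1] at hL
  rw [r2] at t2
  linarith

lemma hopf {N : ℕ} {μ₁ μ₂ : ℝ} {u : E N → ℝ} {D : Set (E N)} (hμ : μ₂ ≤ 0) (hD : IsOpen D)
    (h0 : (0 : E N) ∉ D) (hu : ContDiffOn ℝ 2 u D) (hpos : ∀ x ∈ D, 0 ≤ u x)
    (hL : ∀ x ∈ D, 0 ≤ ckn N μ₁ μ₂ u x) : IsOpen {x | x ∈ D ∧ u x = 0} := by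
  by_contra hno
  rw [Metric.isOpen_iff] at hno
  push Not at hno
  obtain ⟨p, ⟨hpD, hp0⟩, hno⟩ := hno
  obtain ⟨ρ', hρ', hball⟩ := Metric.isOpen_iff.mp hD p hpD
  obtain ⟨ρ, hρ, rfl⟩ : ∃ ρ, 0 < ρ ∧ ρ' = 4 * ρ := ⟨ρ' / 4, by positivity, by ring⟩
  obtain ⟨y, hyρ, hyZ⟩ := Set.not_subset.mp (hno ρ hρ)
  rw [mem_ball] at hyρ
  have hyD : y ∈ D := hball (by rw [mem_ball]; linarith)
  have hcont : ContinuousOn u D := hu.continuousOn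
  have hcb : closedBall p (2 * ρ) ⊆ D := fun x hx => hball (by
    rw [mem_closedBall] at hx; rw [mem_ball]; linarith)
  have hKc : IsCompact (closedBall p (2 * ρ) ∩ u ⁻¹' {0}) := by
    apply (isCompact_closedBall p (2 * ρ)).of_isClosed_subset _ inter_subset_left
    exact (hcont.mono hcb).preimage_isClosed_of_isClosed isClosed_closedBall isClosed_singleton
  obtain ⟨x0, ⟨hx0b, hx0z⟩, hx0m⟩ := hKc.exists_isMinOn (f := fun x => dist x y)
    ⟨p, by simp [hρ.le, hp0]⟩ (by fun_prop)
  rw [mem_closedBall] at hx0b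
  have hx0z : u x0 = 0 := hx0z
  have hx0D : x0 ∈ D := hcb (by rwa [mem_closedBall])
  have hrρ : dist x0 y < ρ := by
    have : dist x0 y ≤ dist p y := hx0m (show p ∈ _ by simp [hρ.le, hp0])
    rw [dist_comm p y] at this
    linarith
  have hposr : ∀ x, dist x y < dist x0 y → 0 < u x := by
    intro x hx
    have hxp : dist x p ≤ 2 * ρ := by linarith [dist_triangle x y p]
    have hxD : x ∈ D := hcb (by rwa [mem_closedBall])
    refine lt_of_le_of_ne (hpos x hxD) fun h => ?_
    have : dist x0 y ≤ dist x y := hx0m ⟨by rwa [mem_closedBall], h.symm⟩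
    linarith
  have hne : x0 ≠ y := by
    rintro rfl
    exact hyZ ⟨hyD, hx0z⟩
  -- the smaller ball
  set y' : E N := y + (1 / 2 : ℝ) • (x0 - y) with hy'
  set R : ℝ := ‖x0 - y'‖ with hR
  have hd1 : y' - y = x0 - y' := by
    rw [hy']; module
  have hd2 : x0 - y = (2:ℝ) • (x0 - y') := by
    rw [hy']; module
  have hr2 : dist x0 y = 2 * R := by
    rw [dist_eq_norm, hd2, norm_smul]; simp [hR]
  have hRpos : 0 < R := by
    have : 0 < dist x0 y := dist_pos.mpr hne
    linarith
  have hposR : ∀ x, ‖x - y'‖ ≤ R → x ≠ x0 → 0 < u x := by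
    intro x hx hxne
    apply hposr
    rw [hr2, dist_eq_norm]
    have hpl := parallelogram_law_with_norm ℝ (x - y') (x0 - y')
    have e1 : x - y' + (x0 - y') = x - y := by rw [← hd1]; abel
    have e2 : x - y' - (x0 - y') = x - x0 := by abel
    rw [e1, e2] at hpl
    have : 0 < ‖x - x0‖ := norm_pos_iff.mpr (sub_ne_zero.mpr hxne)
    have h3 : ‖x - y'‖ * ‖x - y'‖ ≤ R * R := by gcongr
    rw [← hR] at hpl
    nlinarith [norm_nonneg (x - y)]
  have hB : closedBall x0 (R / 2) ⊆ D := by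
    intro x hx
    apply hball
    rw [mem_closedBall] at hx
    rw [mem_ball]
    linarith [dist_triangle x x0 p]
  have hBlow : ∀ x ∈ closedBall x0 (R / 2), R / 2 ≤ ‖x - y'‖ := by
    intro x hx
    rw [mem_closedBall, dist_eq_norm] at hx
    have := norm_sub_norm_le (x0 - y') (x0 - x)
    have e : x0 - y' - (x0 - x) = x - y' := by abel
    rw [e, norm_sub_rev x0 x] at this
    linarith
  have hn0 : ∀ x ∈ D, x ≠ 0 := fun x hx h => h0 (h ▸ hx)
  -- bound on lower-order terms
  obtain ⟨C, hC⟩ : ∃ C, ∀ x ∈ closedBall x0 (R / 2),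
      2 * N - 2 * (μ₁ / ‖x‖ ^ 2 * inner ℝ (x - y') x) ≤ C := by
    have hc : ContinuousOn (fun x : E N => 2 * (N:ℝ) - 2 * (μ₁ / ‖x‖ ^ 2 * inner ℝ (x - y') x))
        (closedBall x0 (R / 2)) := by
      have : ∀ x ∈ closedBall x0 (R / 2), ‖x‖ ^ 2 ≠ 0 := fun x hx => by
        have := norm_pos_iff.mpr (hn0 x (hB hx))
        positivity
      fun_prop (disch := assumption)
    obtain ⟨C, hC⟩ := (isCompact_closedBall x0 (R / 2)).bddAbove_image hc
    exact ⟨C, fun x hx => hC ⟨x, hx, rfl⟩⟩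
  set α : ℝ := (|C| + 1) / R ^ 2 with hα
  have hαpos : 0 < α := by positivity
  set h : ℝ → ℝ := fun s => Real.exp (-α * s) - Real.exp (-α * R ^ 2) with hh
  have hle : ∀ s, 0 ≤ s → h s ≤ 1 := by
    intro s hs
    have h1 : Real.exp (-α * s) ≤ 1 := Real.exp_le_one_iff.mpr (by nlinarith)
    have h2 := Real.exp_pos (-α * R ^ 2)
    simp only [hh]; linarith
  have hneg : ∀ s, R ^ 2 < s → h s < 0 := by
    intro s hs
    have : Real.exp (-α * s) < Real.exp (-α * R ^ 2) := Real.exp_lt_exp.mpr (by nlinarith)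
    simp only [hh]; linarith
  obtain ⟨m, hm0, hm⟩ := ((isCompact_sphere x0 (R / 2)).inter_right
      (isClosed_closedBall (x := y') (ε := R))).exists_forall_le' (f := u) (a := 0)
      (hcont.mono (inter_subset_left.trans (sphere_subset_closedBall.trans hB))) (by
        rintro x ⟨hx1, hx2⟩
        apply hposR x (by rwa [mem_closedBall, dist_eq_norm] at hx2)
        rintro rfl
        simp at hx1
        linarith)
  set ε : ℝ := m / 2 with hε
  have hεpos : 0 < ε := by positivity
  have hhc : Continuous h := by fun_prop
  obtain ⟨z, hzB, hzm⟩ := (isCompact_closedBall x0 (R / 2)).exists_isMinOn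
    (f := fun x => u x - ε * h (‖x - y'‖ ^ 2)) ⟨x0, by simp; positivity⟩ (by
      apply (hcont.mono hB).sub
      apply Continuous.continuousOn
      fun_prop)
  have hzle : u z - ε * h (‖z - y'‖ ^ 2) ≤ 0 := by
    have : u z - ε * h (‖z - y'‖ ^ 2) ≤ u x0 - ε * h (‖x0 - y'‖ ^ 2) :=
      hzm (show x0 ∈ closedBall x0 (R / 2) by simp; positivity)
    rw [hx0z, ← hR] at this
    simpa [hh] using this
  have hzD := hB hzB
  have hzint : z ∈ ball x0 (R / 2) := by
    rw [mem_ball]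
    refine lt_of_le_of_ne (mem_closedBall.mp hzB) fun hzs => ?_
    by_cases hzR : ‖z - y'‖ ≤ R
    · have := hm z ⟨hzs, by rwa [mem_closedBall, dist_eq_norm]⟩
      have h2 := hle (‖z - y'‖ ^ 2) (by positivity)
      nlinarith
    · push Not at hzR
      have := hneg (‖z - y'‖ ^ 2) (by gcongr)
      have := hpos z hzD
      nlinarith
  have hloc : IsLocalMin (fun x => u x - ε * h (‖x - y'‖ ^ 2)) z :=
    hzm.isLocalMin (mem_of_superset (isOpen_ball.mem_nhds hzint) ball_subset_closedBall)
  have hexp : ∀ s, HasDerivAt (fun s : ℝ => Real.exp (-α * s)) (-α * Real.exp (-α * s)) s := by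
    intro s
    have := ((hasDerivAt_id s).const_mul (-α)).exp
    simpa [mul_comm] using this
  have key := test_fun (μ₁ := μ₁) (μ₂ := μ₂) (G := fun s => ε * h s)
    (G' := fun s => ε * (-α * Real.exp (-α * s)))
    (c := ε * (-α * (-α * Real.exp (-α * ‖z - y'‖ ^ 2))))
    (hu.contDiffAt (hD.mem_nhds hzD)) (by
      have : ContDiff ℝ 2 (fun s => ε * h s) := by fun_prop
      exact this.contDiffAt)
    (Eventually.of_forall fun s => ((hexp s).sub_const _).const_mul ε)
    (((hexp _).const_mul (-α)).const_mul ε) hloc (hL z hzD)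
  have hlow := hBlow z hzB
  have hCz := hC z hzB
  have hs : R ^ 2 ≤ 4 * ‖z - y'‖ ^ 2 := by nlinarith
  have hαs : |C| + 1 ≤ 4 * α * ‖z - y'‖ ^ 2 := by
    have : α * R ^ 2 = |C| + 1 := by rw [hα]; field_simp
    nlinarith
  have hlast : μ₂ / ‖z‖ ^ 2 * u z ≤ 0 :=
    mul_nonpos_of_nonpos_of_nonneg (div_nonpos_of_nonpos_of_nonneg hμ (by positivity)) (hpos z hzD)
  have hX := Real.exp_pos (-α * ‖z - y'‖ ^ 2)
  set X := Real.exp (-α * ‖z - y'‖ ^ 2)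
  have hfac : 0 ≤ (ε * α * X) * ((2 * N - 2 * (μ₁ / ‖z‖ ^ 2 * inner ℝ (z - y') z))
      - 4 * α * ‖z - y'‖ ^ 2) := by
    linarith
  have hp : 0 < ε * α * X := by positivity
  have := nonneg_of_mul_nonneg_right hfac hp
  linarith [le_abs_self C]

lemma osc {N : ℕ} (hN : 2 ≤ N) {μ₁ μ₂ : ℝ} {u : E N → ℝ} {D : Set (E N)} {δ : ℝ} (hδ : 0 < δ)
    (hμ₂ : μ₂ < -((N : ℝ) - 2 - μ₁) ^ 2 / 4) (hD : IsOpen D)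
    (hsub : ball (0 : E N) δ \ {0} ⊆ D) (hu : ContDiffOn ℝ 2 u D) (hpos : ∀ x ∈ D, 0 ≤ u x)
    (hL : ∀ x ∈ D, 0 ≤ ckn N μ₁ μ₂ u x) : ∃ x ∈ ball (0 : E N) δ \ {0}, u x = 0 := by
  by_contra hno
  push Not at hno
  have hup : ∀ x ∈ ball (0 : E N) δ \ {0}, 0 < u x := fun x hx =>
    lt_of_le_of_ne (hpos x (hsub hx)) (hno x hx).symm
  set p : ℝ := (2 - N + μ₁) / 4 with hp
  set d : ℝ := -(((N : ℝ) - 2 - μ₁) ^ 2 / 4 + μ₂) with hd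
  have hdpos : 0 < d := by rw [hd]; linarith
  set q : ℝ := Real.sqrt (d / 8) with hq
  have hqpos : 0 < q := Real.sqrt_pos.mpr (by positivity)
  have hq2 : q ^ 2 = d / 8 := Real.sq_sqrt (by positivity)
  set s2 : ℝ := (δ / 2) ^ 2 with hs2
  have hs2pos : 0 < s2 := by positivity
  set c : ℝ := Real.pi - q * Real.log s2 with hc
  set s1 : ℝ := Real.exp (Real.log s2 - Real.pi / q) with hs1
  have hs1pos : 0 < s1 := Real.exp_pos _
  have hl1 : q * Real.log s1 + c = 0 := by
    rw [hs1, Real.log_exp, hc]; field_simp; ring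
  have hl2 : q * Real.log s2 + c = Real.pi := by rw [hc]; ring
  set G : ℝ → ℝ := fun s => Real.exp (p * Real.log s) * Real.sin (q * Real.log s + c) with hG
  set A : Set (E N) := {x | s1 ≤ ‖x‖ ^ 2 ∧ ‖x‖ ^ 2 ≤ s2} with hA
  have hAsub : A ⊆ ball (0 : E N) δ \ {0} := by
    rintro x ⟨h1, h2⟩
    refine ⟨?_, ?_⟩
    · rw [mem_ball_zero_iff]
      have := abs_le_of_sq_le_sq h2 (by positivity)
      rw [abs_of_nonneg (norm_nonneg _)] at this
      linarith
    · rintro rfl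
      simp at h1
      linarith
  have hAc : IsCompact A := by
    apply (isCompact_closedBall (0 : E N) δ).of_isClosed_subset
    · have hn : Continuous fun x : E N => ‖x‖ ^ 2 := by fun_prop
      exact (isClosed_le continuous_const hn).inter (isClosed_le hn continuous_const)
    · exact hAsub.trans (sdiff_subset.trans ball_subset_closedBall)
  -- a point of the annulus where `G > 0`
  obtain ⟨a, haA, haG⟩ : ∃ a ∈ A, 0 < G (‖a‖ ^ 2) := by
    set sm : ℝ := Real.exp (Real.log s2 - Real.pi / q / 2) with hsm
    have hn : ‖(EuclideanSpace.single (⟨0, by omega⟩ : Fin N) (Real.sqrt sm) : E N)‖ ^ 2 = sm := by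
      rw [EuclideanSpace.norm_single, Real.norm_of_nonneg (Real.sqrt_nonneg _),
        Real.sq_sqrt (Real.exp_pos _).le]
    have hpq : 0 < Real.pi / q := by have := Real.pi_pos; positivity
    refine ⟨EuclideanSpace.single (⟨0, by omega⟩ : Fin N) (Real.sqrt sm), ⟨?_, ?_⟩, ?_⟩
    · rw [hn, hs1, hsm, Real.exp_le_exp]; linarith
    · rw [hn, hsm, ← Real.le_log_iff_exp_le hs2pos]; linarith
    · rw [hn]
      have : q * Real.log sm + c = Real.pi / 2 := by
        rw [hsm, Real.log_exp, hc]; field_simp; ring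
      simp only [hG, this, Real.sin_pi_div_two]
      positivity
  have hGd : ∀ s, 0 < s → HasDerivAt G (Real.exp (p * Real.log s) * s⁻¹ *
      (p * Real.sin (q * Real.log s + c) + q * Real.cos (q * Real.log s + c))) s := by
    intro s hs
    have hl := Real.hasDerivAt_log hs.ne'
    have := ((hl.const_mul p).exp).mul (((hl.const_mul q).add_const c).sin)
    refine this.congr_deriv ?_
    ring
  have hGd2 : ∀ s, 0 < s → HasDerivAt (fun s => Real.exp (p * Real.log s) * s⁻¹ *
      (p * Real.sin (q * Real.log s + c) + q * Real.cos (q * Real.log s + c)))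
      (Real.exp (p * Real.log s) * (s⁻¹) ^ 2 * ((p - 1) * (p * Real.sin (q * Real.log s + c)
        + q * Real.cos (q * Real.log s + c)) + q * (p * Real.cos (q * Real.log s + c)
        - q * Real.sin (q * Real.log s + c)))) s := by
    intro s hs
    have hl := Real.hasDerivAt_log hs.ne'
    have hθ := (hl.const_mul q).add_const c
    have := (((hl.const_mul p).exp).mul (hasDerivAt_inv hs.ne')).mul
      ((hθ.sin.const_mul p).add (hθ.cos.const_mul q))
    refine this.congr_deriv ?_
    simp only [Pi.mul_apply, Pi.add_apply]
    field_simp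
    ring
  have hApos : ∀ x ∈ A, 0 < ‖x‖ ^ 2 := fun x hx => hs1pos.trans_le hx.1
  have hAu : ∀ x ∈ A, 0 < u x := fun x hx => hup x (hAsub hx)
  obtain ⟨z, hzA, hzm⟩ := hAc.exists_isMaxOn (f := fun x => G (‖x‖ ^ 2) / u x) ⟨a, haA⟩ (by
    apply ContinuousOn.div
    · intro x hx
      apply ContinuousAt.continuousWithinAt
      exact ContinuousAt.comp (f := fun x : E N => ‖x‖ ^ 2) (hGd _ (hApos x hx)).continuousAt
        (by fun_prop)
    · exact hu.continuousOn.mono (hAsub.trans hsub)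
    · exact fun x hx => (hAu x hx).ne')
  set M : ℝ := G (‖z‖ ^ 2) / u z with hM
  have huz := hAu z hzA
  have hMpos : 0 < M := lt_of_lt_of_le (div_pos haG (hAu a haA)) (hzm haA)
  have hGz : G (‖z‖ ^ 2) = M * u z := by rw [hM]; field_simp
  have hGzpos : 0 < G (‖z‖ ^ 2) := by rw [hGz]; positivity
  have hne1 : ‖z‖ ^ 2 ≠ s1 := by
    intro h
    rw [h] at hGzpos
    simp [hG, hl1] at hGzpos
  have hne2 : ‖z‖ ^ 2 ≠ s2 := by
    intro h
    rw [h] at hGzpos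
    simp [hG, hl2] at hGzpos
  have hAnhds : A ∈ 𝓝 z := by
    have ho : IsOpen {x : E N | s1 < ‖x‖ ^ 2 ∧ ‖x‖ ^ 2 < s2} := by
      have hn : Continuous fun x : E N => ‖x‖ ^ 2 := by fun_prop
      exact (isOpen_lt continuous_const hn).inter (isOpen_lt hn continuous_const)
    refine mem_of_superset (ho.mem_nhds ⟨lt_of_le_of_ne hzA.1 hne1.symm,
      lt_of_le_of_ne hzA.2 hne2⟩) fun x hx => ⟨hx.1.le, hx.2.le⟩
  have hzD : z ∈ D := hsub (hAsub hzA)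
  have hzpos := hApos z hzA
  have hloc : IsLocalMin (fun x => u x - M⁻¹ * G (‖x - 0‖ ^ 2)) z := by
    filter_upwards [hAnhds] with x hx
    have h1 : G (‖x‖ ^ 2) / u x ≤ M := hzm hx
    rw [div_le_iff₀ (hAu x hx)] at h1
    simp only [sub_zero]
    rw [hGz]
    have h2 : M⁻¹ * G (‖x‖ ^ 2) ≤ M⁻¹ * (M * u x) := by gcongr
    rw [inv_mul_cancel_left₀ hMpos.ne'] at h2 ⊢
    linarith
  have hGc : ContDiffAt ℝ 2 (fun s => M⁻¹ * G s) (‖z - 0‖ ^ 2) := by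
    have hl : ContDiffAt ℝ 2 Real.log (‖z - 0‖ ^ 2) := by
      rw [sub_zero]; exact Real.contDiffAt_log.mpr hzpos.ne'
    exact contDiffAt_const.mul ((contDiffAt_const.mul hl).exp.mul
      (((contDiffAt_const.mul hl).add contDiffAt_const).sin))
  have key := test_fun (μ₁ := μ₁) (μ₂ := μ₂) (hu.contDiffAt (hD.mem_nhds hzD)) hGc
    (by
      rw [sub_zero]
      filter_upwards [lt_mem_nhds hzpos] with s hs using (hGd s hs).const_mul M⁻¹)
    (by rw [sub_zero]; exact (hGd2 _ hzpos).const_mul M⁻¹) hloc (hL z hzD)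
  have huz' : u z = M⁻¹ * G (‖z‖ ^ 2) := by rw [hGz, inv_mul_cancel_left₀ hMpos.ne']
  rw [huz'] at key
  simp only [sub_zero, real_inner_self_eq_norm_sq, hG] at key
  simp only [hG] at hGzpos
  set s := ‖z‖ ^ 2
  set S := Real.sin (q * Real.log s + c)
  set K := Real.cos (q * Real.log s + c)
  set X := Real.exp (p * Real.log s)
  have hN' : (N : ℝ) = 2 + μ₁ - 4 * p := by rw [hp]; ring
  have hμ' : μ₂ = -d - 4 * p ^ 2 := by rw [hd, hp]; ring
  have e : -(2 * (N:ℝ) * (M⁻¹ * (X * s⁻¹ * (p * S + q * K))) +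
      4 * s * (M⁻¹ * (X * s⁻¹ ^ 2 * ((p - 1) * (p * S + q * K) + q * (p * K - q * S))))) +
      μ₁ / s * (2 * (M⁻¹ * (X * s⁻¹ * (p * S + q * K))) * s) + μ₂ / s * (M⁻¹ * (X * S))
      = M⁻¹ * s⁻¹ * (X * S) * (4 * q ^ 2 - d) := by
    rw [hN', hμ']
    field_simp
    ring
  rw [e, hq2] at key
  have : 0 < M⁻¹ * s⁻¹ * (X * S) := by positivity
  nlinarith

/-- nonexistence of nonnegative solutions of the Poisson problem
when `μ₂ < -(N-2-μ₁)²/4` and `f ≥ 0`, `f ≢ 0`. -/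
theorem stmt5 (N : ℕ) (hN : 2 ≤ N) (μ₁ μ₂ : ℝ)
    (hμ₂ : μ₂ < -((N : ℝ) - 2 - μ₁) ^ 2 / 4)
    (Ω : Set (E N)) (hΩo : IsOpen Ω) (hΩc : IsConnected Ω)
    (hΩb : Bornology.IsBounded Ω) (h0Ω : (0 : E N) ∈ Ω)
    (γ : ℝ) (hγ : γ ∈ Set.Ioo (0 : ℝ) 1)
    (f : E N → ℝ) (hfreg : LocHolderOn N γ f (closure Ω \ {0}))
    (hfpos : ∀ x ∈ closure Ω \ {0}, 0 ≤ f x)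
    (hfne : ∃ x ∈ closure Ω \ {0}, f x ≠ 0) :
    ¬ ∃ u : E N → ℝ, ContDiffOn ℝ 2 u (Ω \ {0}) ∧
        (∀ x ∈ Ω \ {0}, 0 ≤ u x) ∧
        (∀ x ∈ Ω \ {0}, ckn N μ₁ μ₂ u x = f x) ∧
        (∀ x ∈ frontier Ω, u x = 0) := by
  rintro ⟨u, hu, hpos, hL, -⟩
  have hμ : μ₂ ≤ 0 := by nlinarith [sq_nonneg ((N : ℝ) - 2 - μ₁)]
  have hD : IsOpen (Ω \ {0}) := hΩo.sdiff isClosed_singleton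
  have hcl : ∀ x ∈ Ω \ {0}, x ∈ closure Ω \ {0} := fun x hx => ⟨subset_closure hx.1, hx.2⟩
  have hL' : ∀ x ∈ Ω \ {0}, 0 ≤ ckn N μ₁ μ₂ u x := fun x hx => by
    rw [hL x hx]; exact hfpos x (hcl x hx)
  have hZ := hopf hμ hD (by simp) hu hpos hL'
  have hP : IsOpen {x | x ∈ Ω \ {0} ∧ 0 < u x} :=
    hu.continuousOn.isOpen_inter_preimage hD isOpen_Ioi
  obtain ⟨δ, hδ, hδΩ⟩ := Metric.isOpen_iff.mp hΩo 0 h0Ω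
  have hsub : ball (0 : E N) δ \ {0} ⊆ Ω \ {0} := fun x hx => ⟨hδΩ hx.1, hx.2⟩
  obtain ⟨x1, hx1, hx1z⟩ := osc hN hδ hμ₂ hD hsub hu hpos hL'
  have hcov : ∀ x ∈ Ω \ {0}, (x ∈ Ω \ {0} ∧ u x = 0) ∨ (x ∈ Ω \ {0} ∧ 0 < u x) := by
    intro x hx
    rcases (hpos x hx).eq_or_lt with h | h
    · exact Or.inl ⟨hx, h.symm⟩
    · exact Or.inr ⟨hx, h⟩
  have hdisj : Disjoint {x | x ∈ Ω \ {0} ∧ u x = 0} {x | x ∈ Ω \ {0} ∧ 0 < u x} := by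
    rw [Set.disjoint_left]
    rintro x ⟨-, h1⟩ ⟨-, h2⟩
    linarith
  have hb : ball (0 : E N) δ \ {0} ⊆ {x | x ∈ Ω \ {0} ∧ u x = 0} :=
    (punctured hN δ).subset_left_of_subset_union hZ hP hdisj (fun x hx => hcov x (hsub hx))
      ⟨x1, hx1, hsub hx1, hx1z⟩
  have hall : Ω ⊆ {x | x ∈ Ω \ {0} ∧ u x = 0} ∪ ball 0 δ := by
    refine hΩc.isPreconnected.subset_left_of_subset_union (hZ.union isOpen_ball) hP ?_ ?_
      ⟨0, h0Ω, Or.inr (by simpa using hδ)⟩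
    · rw [Set.disjoint_left]
      rintro x (hx | hx) ⟨h2, h3⟩
      · linarith [hx.2]
      · linarith [(hb ⟨hx, h2.2⟩).2]
    · intro x hx
      by_cases h : x = 0
      · left; right; rw [h]; simpa using hδ
      · rcases hcov x ⟨hx, h⟩ with h | h
        · exact Or.inl (Or.inl h)
        · exact Or.inr h
  have hu0 : ∀ x ∈ Ω \ {0}, u x = 0 := by
    intro x hx
    rcases hall hx.1 with h | h
    · exact h.2
    · exact (hb ⟨h, hx.2⟩).2
  have hf0 : ∀ x ∈ Ω \ {0}, f x = 0 := by
    intro x hx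
    rw [← hL x hx]
    have e0 : u =ᶠ[𝓝 x] fun _ => 0 := by
      filter_upwards [hD.mem_nhds hx] with y hy using hu0 y hy
    have e1 : ∀ᶠ y in 𝓝 x, fderiv ℝ u y = 0 := by
      filter_upwards [e0.eventuallyEq_nhds] with y hy
      rw [hy.fderiv_eq]; simp
    have e2 : lap N u x = 0 := by
      unfold lap
      apply Finset.sum_eq_zero
      intro i _
      have : (fun y => fderiv ℝ u y (EuclideanSpace.single i 1)) =ᶠ[𝓝 x] fun _ => 0 := by
        filter_upwards [e1] with y hy
        rw [hy]; simp
      rw [this.fderiv_eq]; simp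
    unfold ckn
    rw [e2, e1.self_of_nhds, hu0 x hx]
    simp
  obtain ⟨x, hx, hfx⟩ := hfne
  apply hfx
  -- `f` is continuous at `x` within `closure Ω \ {0}`
  have hcont : ContinuousWithinAt f (closure Ω \ {0}) x := by
    obtain ⟨t, ht, C, hC⟩ := hfreg x hx
    have hxt : x ∈ t := mem_of_mem_nhdsWithin hx ht
    have := hC.continuousOn (by simpa using hγ.1) x hxt
    exact this.mono_of_mem_nhdsWithin ht
  have hcl2 : x ∈ closure (Ω \ {0}) := by
    rw [mem_closure_iff_nhds]
    intro t ht
    have h1 : t ∩ {0}ᶜ ∈ 𝓝 x := inter_mem ht (isOpen_compl_singleton.mem_nhds hx.2)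
    obtain ⟨y, ⟨hy1, hy2⟩, hy3⟩ := mem_closure_iff_nhds.mp hx.1 _ h1
    exact ⟨y, hy1, hy3, hy2⟩
  have hw : ContinuousWithinAt f (Ω \ {0}) x := hcont.mono hcl
  have hmem := hw.mem_closure_image hcl2
  have himg : f '' (Ω \ {0}) ⊆ {0} := by
    rintro _ ⟨y, hy, rfl⟩
    exact hf0 y hy
  have := closure_mono himg hmem
  simpa using this
end
end

section
/- Let N ≥ 2, μ₁ ∈ ℝ, μ₂ ≥ -(N-2-μ₁)²/4, r > 0, and let g ∈ C^β_loc(B_r \ {0}) for some β ∈ (0,1) be a nonnegative function such that g(x) ≥ c|x|^{τ-2} in B_r \ {0} for some constant c > 0 and some τ ∈ (τ₋, τ₊). If u ∈ C²(B_r \ {0}) is a positive function satisfying ℒ_{μ₁,μ₂}u ≥ g in B_r \ {0} and u ≥ 0 on ∂B_r, then there exists c₁ > 0 such that u(x) ≥ c₁|x|^{τ} for all x ∈ B_{r/2} \ {0}. -/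
open MeasureTheory Filter Metric Set Topology

noncomputable section

lemma second_test (f : ℝ → ℝ) (hf : IsLocalMin f 0) (hc : ContinuousAt f 0) :
    0 ≤ deriv (deriv f) 0 := by
  by_contra! h
  have h1 := isLocalMax_of_deriv_deriv_neg h hf.deriv_eq_zero hc
  have h2 : f =ᶠ[𝓝 0] fun _ => f 0 := by
    filter_upwards [hf, h1] with y a b
    exact le_antisymm b a
  have h3 := h2.deriv.deriv_eq
  simp at h3
  linarith

lemma diff_fderiv {N : ℕ} {u : E N → ℝ} {x : E N} (hu : ContDiffAt ℝ 2 u x) (e : E N) :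
    DifferentiableAt ℝ (fun y => fderiv ℝ u y e) x := by
  have h : ContDiffAt ℝ 1 (fderiv ℝ u) x := hu.fderiv_right (by norm_num)
  exact (h.differentiableAt (by norm_num)).clm_apply (differentiableAt_const e)

lemma ev_diff {N : ℕ} {u : E N → ℝ} {x : E N} (hu : ContDiffAt ℝ 2 u x) :
    ∀ᶠ y in 𝓝 x, DifferentiableAt ℝ u y := by
  filter_upwards [hu.eventually (by norm_num)] with y hy
  exact hy.differentiableAt (by norm_num)

lemma lap_nonneg {N : ℕ} {u : E N → ℝ} {x : E N} (hu : ContDiffAt ℝ 2 u x)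
    (hm : IsLocalMin u x) : 0 ≤ lap N u x := by
  unfold lap
  refine Finset.sum_nonneg fun i _ => ?_
  set e : E N := EuclideanSpace.single i 1
  have hl : ∀ t : ℝ, HasDerivAt (fun t : ℝ => x + t • e) e t := by
    intro t
    simpa using ((hasDerivAt_id t).smul_const e).const_add x
  have hl0 : Tendsto (fun t : ℝ => x + t • e) (𝓝 0) (𝓝 x) := by
    have := (hl 0).continuousAt.tendsto
    simpa using this
  have hd : deriv (fun t : ℝ => u (x + t • e)) =ᶠ[𝓝 0] fun t => fderiv ℝ u (x + t • e) e := by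
    filter_upwards [hl0.eventually (ev_diff hu)] with t ht
    exact (ht.hasFDerivAt.comp_hasDerivAt t (hl t)).deriv
  have h2 : deriv (deriv (fun t : ℝ => u (x + t • e))) 0
      = fderiv ℝ (fun y => fderiv ℝ u y e) x e := by
    rw [hd.deriv_eq]
    have hx : x + (0 : ℝ) • e = x := by simp
    have h3 : HasFDerivAt (fun y => fderiv ℝ u y e) (fderiv ℝ (fun y => fderiv ℝ u y e) x)
        (x + (0 : ℝ) • e) := by
      rw [hx]; exact (diff_fderiv hu e).hasFDerivAt
    exact (h3.comp_hasDerivAt (0 : ℝ) (hl 0)).deriv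
  rw [← h2]
  apply second_test
  · have := hl0.eventually hm
    filter_upwards [this] with t ht
    simpa using ht
  · have h4 : ContinuousAt u (x + (0 : ℝ) • e) := by simpa using hu.continuousAt
    exact ContinuousAt.comp (f := fun t : ℝ => x + t • e) (x := (0 : ℝ)) h4 (hl 0).continuousAt

lemma ckn_lin {N : ℕ} {μ₁ μ₂ : ℝ} {u v : E N → ℝ} {x : E N} (a : ℝ) (hu : ContDiffAt ℝ 2 u x)
    (hv : ContDiffAt ℝ 2 v x) :
    ckn N μ₁ μ₂ (fun y => u y + a * v y) x = ckn N μ₁ μ₂ u x + a * ckn N μ₁ μ₂ v x := by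
  have key : ∀ᶠ y in 𝓝 x, fderiv ℝ (fun y => u y + a * v y) y = fderiv ℝ u y + a • fderiv ℝ v y := by
    filter_upwards [ev_diff hu, ev_diff hv] with y h1 h2
    exact (h1.hasFDerivAt.add (h2.hasFDerivAt.const_mul a)).fderiv
  have hlap : lap N (fun y => u y + a * v y) x = lap N u x + a * lap N v x := by
    unfold lap
    rw [Finset.mul_sum, ← Finset.sum_add_distrib]
    refine Finset.sum_congr rfl fun i _ => ?_
    set e : E N := EuclideanSpace.single i 1
    have h : (fun y => fderiv ℝ (fun y => u y + a * v y) y e) =ᶠ[𝓝 x]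
        fun y => fderiv ℝ u y e + a * fderiv ℝ v y e := by
      filter_upwards [key] with y hy
      rw [hy]; simp
    have h' : HasFDerivAt (fun y => fderiv ℝ u y e + a * fderiv ℝ v y e) _ x :=
      (diff_fderiv hu e).hasFDerivAt.add ((diff_fderiv hv e).hasFDerivAt.const_mul a)
    rw [h.fderiv_eq, h'.fderiv]
    simp
  unfold ckn
  rw [hlap, key.self_of_nhds]
  simp
  ring

lemma norm_pow_c2 {N : ℕ} (s : ℝ) {x : E N} (hx : x ≠ 0) :
    ContDiffAt ℝ 2 (fun y : E N => ‖y‖ ^ s) x :=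
  (contDiffAt_norm ℝ hx).rpow_const_of_ne (norm_ne_zero_iff.2 hx)

lemma norm_pow_fderiv {N : ℕ} (s : ℝ) {x : E N} (hx : x ≠ 0) :
    HasFDerivAt (fun y : E N => ‖y‖ ^ s) ((s * ‖x‖ ^ (s - 2)) • innerSL ℝ x) x := by
  have h1 : HasFDerivAt (fun y : E N => ‖y‖ ^ 2) (2 • (innerSL ℝ x)) x :=
    (hasStrictFDerivAt_norm_sq x).hasFDerivAt
  have hn : 0 < ‖x‖ := norm_pos_iff.2 hx
  have h2 := h1.rpow_const (p := s / 2) (Or.inl (by positivity))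
  have e1 : (fun y : E N => ‖y‖ ^ s) = fun y : E N => (‖y‖ ^ 2) ^ (s / 2) := by
    funext y
    rw [← Real.rpow_natCast, ← Real.rpow_mul (norm_nonneg _)]
    congr 1
    push_cast
    ring
  rw [e1]
  convert! h2 using 1
  have e2 : (‖x‖ ^ 2) ^ (s / 2 - 1) = ‖x‖ ^ (s - 2) := by
    rw [← Real.rpow_natCast, ← Real.rpow_mul (norm_nonneg _)]
    congr 1
    push_cast
    ring
  rw [e2]
  ext y
  simp
  ring

lemma ckn_norm_pow {N : ℕ} (μ₁ μ₂ s : ℝ) {x : E N} (hx : x ≠ 0) :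
    ckn N μ₁ μ₂ (fun y : E N => ‖y‖ ^ s) x
      = (-(s * (s + N - 2)) + μ₁ * s + μ₂) * ‖x‖ ^ (s - 2) := by
  have hn : 0 < ‖x‖ := norm_pos_iff.2 hx
  have p2 : ‖x‖ ^ s = ‖x‖ ^ (s - 2) * ‖x‖ ^ 2 := by
    rw [← Real.rpow_natCast, ← Real.rpow_add hn]; congr 1; push_cast; ring
  have p4 : ‖x‖ ^ (s - 2) = ‖x‖ ^ (s - 2 - 2) * ‖x‖ ^ 2 := by
    rw [← Real.rpow_natCast, ← Real.rpow_add hn]; congr 1; push_cast; ring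
  have hlap : lap N (fun y : E N => ‖y‖ ^ s) x = s * (s + N - 2) * ‖x‖ ^ (s - 2) := by
    have term : ∀ i : Fin N, fderiv ℝ (fun y => fderiv ℝ (fun y : E N => ‖y‖ ^ s) y
        (EuclideanSpace.single i 1)) x (EuclideanSpace.single i 1)
        = s * (s - 2) * ‖x‖ ^ (s - 2 - 2) * x i ^ 2 + s * ‖x‖ ^ (s - 2) := by
      intro i
      have h : (fun y => fderiv ℝ (fun y : E N => ‖y‖ ^ s) y (EuclideanSpace.single i 1))
          =ᶠ[𝓝 x] fun y => s * (‖y‖ ^ (s - 2) * (EuclideanSpace.proj i : E N →L[ℝ] ℝ) y) := by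
        filter_upwards [isOpen_ne.mem_nhds hx] with y hy
        rw [(norm_pow_fderiv s hy).fderiv]
        simp [EuclideanSpace.inner_single_right]
        ring
      have h' : HasFDerivAt
          (fun y : E N => s * (‖y‖ ^ (s - 2) * (EuclideanSpace.proj i : E N →L[ℝ] ℝ) y)) _ x :=
        ((norm_pow_fderiv (s - 2) hx).mul
          (EuclideanSpace.proj i : E N →L[ℝ] ℝ).hasFDerivAt).const_mul s
      rw [h.fderiv_eq, h'.fderiv]
      simp [EuclideanSpace.inner_single_right]
      ring
    unfold lap
    rw [Finset.sum_congr rfl fun i _ => term i, Finset.sum_add_distrib, ← Finset.mul_sum,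
      ← EuclideanSpace.real_norm_sq_eq]
    simp
    rw [p4]
    ring
  unfold ckn
  rw [hlap, (norm_pow_fderiv s hx).fderiv]
  simp only [_root_.smul_apply, innerSL_apply_apply, real_inner_self_eq_norm_sq,
    smul_eq_mul, p2]
  field_simp

set_option maxHeartbeats 1000000 in
/-- lower bound `u ≥ c₁|x|^τ` for positive supersolutions of
`ℒ_{μ₁,μ₂} u ≥ g` with `g(x) ≥ c|x|^{τ-2}`, `τ ∈ (τ₋, τ₊)`. -/
theorem stmt7 (N : ℕ) (hN : 2 ≤ N) (μ₁ μ₂ : ℝ)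
    (hμ₂ : -((N : ℝ) - 2 - μ₁) ^ 2 / 4 ≤ μ₂)
    (r : ℝ) (hr : 0 < r) (β : ℝ) (hβ : β ∈ Set.Ioo (0 : ℝ) 1)
    (g : E N → ℝ) (hgreg : LocHolderOn N β g (ball (0 : E N) r \ {0}))
    (hgpos : ∀ x ∈ ball (0 : E N) r \ {0}, 0 ≤ g x)
    (τ : ℝ) (hτ : τ ∈ Set.Ioo (tauMinus N μ₁ μ₂) (tauPlus N μ₁ μ₂))
    (c : ℝ) (hc : 0 < c)
    (hglow : ∀ x ∈ ball (0 : E N) r \ {0}, c * ‖x‖ ^ (τ - 2) ≤ g x)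
    (u : E N → ℝ) (hu : ContDiffOn ℝ 2 u (ball (0 : E N) r \ {0}))
    (hupos : ∀ x ∈ ball (0 : E N) r \ {0}, 0 < u x)
    (hsuper : ∀ x ∈ ball (0 : E N) r \ {0}, g x ≤ ckn N μ₁ μ₂ u x)
    (hbdry : ∀ x ∈ sphere (0 : E N) r, 0 ≤ u x) :
    ∃ c₁ > (0 : ℝ), ∀ x ∈ ball (0 : E N) (r / 2) \ {0}, c₁ * ‖x‖ ^ τ ≤ u x := by
  set S := Real.sqrt ((2 - (N : ℝ) + μ₁) ^ 2 + 4 * μ₂) with hS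
  have hS2 : S ^ 2 = (2 - (N : ℝ) + μ₁) ^ 2 + 4 * μ₂ := Real.sq_sqrt (by nlinarith)
  set σ := tauMinus N μ₁ μ₂ with hσ
  have hσ' : σ = ((2 - (N : ℝ) + μ₁) - S) / 2 := rfl
  have hp' : tauPlus N μ₁ μ₂ = ((2 - (N : ℝ) + μ₁) + S) / 2 := rfl
  obtain ⟨hτ1, hτ2⟩ := hτ
  set d := -(τ * (τ + N - 2)) + μ₁ * τ + μ₂ with hd
  have hdpos : 0 < d := by
    have : d = (tauPlus N μ₁ μ₂ - τ) * (τ - σ) := by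
      rw [hp', hσ', hd]; nlinarith
    rw [this]
    exact mul_pos (by linarith) (by linarith)
  have hσ0 : -(σ * (σ + N - 2)) + μ₁ * σ + μ₂ = 0 := by
    rw [hσ']; nlinarith
  have hU : IsOpen (ball (0 : E N) r \ {0}) := isOpen_ball.sdiff isClosed_singleton
  have huC : ∀ x ∈ ball (0 : E N) r \ {0}, ContDiffAt ℝ 2 u x := fun x hx =>
    hu.contDiffAt (hU.mem_nhds hx)
  have hmem : ∀ x : E N, 0 < ‖x‖ → ‖x‖ ≤ r / 2 → x ∈ ball (0 : E N) r \ {0} := by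
    intro x h1 h2
    refine ⟨by simp; linarith, ?_⟩
    simpa using norm_pos_iff.1 h1
  obtain ⟨m, hm0, hm⟩ := (isCompact_sphere (0 : E N) (r / 2)).exists_forall_le' (f := u) (a := 0)
    (hu.continuousOn.mono (fun x hx => by
      have : ‖x‖ = r / 2 := by simpa using hx
      exact hmem x (by linarith) (by linarith)))
    (fun x hx => by
      have : ‖x‖ = r / 2 := by simpa using hx
      exact hupos x (hmem x (by linarith) (by linarith)))
  have hr2 : 0 < r / 2 := by linarith
  have hRp : 0 < (r / 2) ^ τ := Real.rpow_pos_of_pos hr2 _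
  set ε := min (c / d) (m / (r / 2) ^ τ) with hε
  have hεpos : 0 < ε := lt_min (by positivity) (by positivity)
  have hε1 : ε * d ≤ c := by
    have := min_le_left (c / d) (m / (r / 2) ^ τ)
    rwa [← hε, le_div_iff₀ hdpos] at this
  have hε2 : ε * (r / 2) ^ τ ≤ m := by
    have := min_le_right (c / d) (m / (r / 2) ^ τ)
    rwa [← hε, le_div_iff₀ hRp] at this
  have main : ∀ ρ : ℝ, 0 < ρ → ∀ x : E N, ρ ≤ ‖x‖ → ‖x‖ ≤ r / 2 →
      ε * ‖x‖ ^ τ ≤ u x + ε * ρ ^ (τ - σ) * ‖x‖ ^ σ := by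
    intro ρ hρ z hz1 hz2
    set K := ε * ρ ^ (τ - σ) with hK
    have hKpos : 0 < K := mul_pos hεpos (Real.rpow_pos_of_pos hρ _)
    set A : Set (E N) := closedBall 0 (r / 2) ∩ {x | ρ ≤ ‖x‖} with hA
    have hAc : IsCompact A :=
      (isCompact_closedBall _ _).inter_right (isClosed_le continuous_const continuous_norm)
    have hA1 : ∀ x ∈ A, ρ ≤ ‖x‖ ∧ ‖x‖ ≤ r / 2 := fun x hx => ⟨hx.2, by simpa using hx.1⟩
    have hAU : ∀ x ∈ A, x ∈ ball (0 : E N) r \ {0} := fun x hx =>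
      hmem x (by linarith [(hA1 x hx).1]) (hA1 x hx).2
    have hAn : ∀ x ∈ A, x ≠ 0 := fun x hx => by simpa using (hAU x hx).2
    have hfc : ContinuousOn (fun x => (u x + K * ‖x‖ ^ σ) / ‖x‖ ^ τ) A := by
      intro x hx
      apply ContinuousAt.continuousWithinAt
      refine ((huC x (hAU x hx)).continuousAt.add (continuousAt_const.mul
        (norm_pow_c2 σ (hAn x hx)).continuousAt)).div (norm_pow_c2 τ (hAn x hx)).continuousAt ?_
      exact (Real.rpow_pos_of_pos (norm_pos_iff.2 (hAn x hx)) _).ne'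
    have hzA : z ∈ A := ⟨by simpa using hz2, hz1⟩
    obtain ⟨x₀, hx₀, hmin⟩ := hAc.exists_isMinOn ⟨z, hzA⟩ hfc
    have hpos : ∀ x ∈ A, 0 < ‖x‖ ^ τ := fun x hx =>
      Real.rpow_pos_of_pos (norm_pos_iff.2 (hAn x hx)) _
    set t := (u x₀ + K * ‖x₀‖ ^ σ) / ‖x₀‖ ^ τ with ht
    have hmin' : ∀ x ∈ A, t * ‖x‖ ^ τ ≤ u x + K * ‖x‖ ^ σ := by
      intro x hx
      have h : t ≤ (u x + K * ‖x‖ ^ σ) / ‖x‖ ^ τ := hmin hx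
      rwa [le_div_iff₀ (hpos x hx)] at h
    have hteq : t * ‖x₀‖ ^ τ = u x₀ + K * ‖x₀‖ ^ σ := div_mul_cancel₀ _ (hpos x₀ hx₀).ne'
    suffices hεt : ε ≤ t from
      (mul_le_mul_of_nonneg_right hεt (hpos z hzA).le).trans (hmin' z hzA)
    by_contra! hlt
    have hlt' : u x₀ + K * ‖x₀‖ ^ σ < ε * ‖x₀‖ ^ τ := by
      rw [← hteq]; exact mul_lt_mul_of_pos_right hlt (hpos x₀ hx₀)
    have hn0 : 0 < ‖x₀‖ := norm_pos_iff.2 (hAn x₀ hx₀)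
    have hu0 := hupos x₀ (hAU x₀ hx₀)
    have hi1 : ρ < ‖x₀‖ := by
      refine lt_of_le_of_ne (hA1 x₀ hx₀).1 fun h => ?_
      rw [← h, hK, mul_assoc, ← Real.rpow_add hρ] at hlt'
      simp at hlt'
      linarith
    have hi2 : ‖x₀‖ < r / 2 := by
      refine lt_of_le_of_ne (hA1 x₀ hx₀).2 fun h => ?_
      have h1 := hm x₀ (by simpa using h)
      have h2 : 0 < K * ‖x₀‖ ^ σ := mul_pos hKpos (Real.rpow_pos_of_pos hn0 _)
      rw [h] at hlt' h2
      linarith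
    have hAnhds : A ∈ 𝓝 x₀ := by
      have o : IsOpen {x : E N | ρ < ‖x‖ ∧ ‖x‖ < r / 2} :=
        (isOpen_lt continuous_const continuous_norm).inter
          (isOpen_lt continuous_norm continuous_const)
      refine mem_of_superset (o.mem_nhds ⟨hi1, hi2⟩) ?_
      rintro x ⟨h1, h2⟩
      exact ⟨by simpa using h2.le, h1.le⟩
    have hx0n := hAn x₀ hx₀
    have c1 := huC x₀ (hAU x₀ hx₀)
    have c2 : ContDiffAt ℝ 2 (fun y : E N => u y + K * ‖y‖ ^ σ) x₀ :=
      c1.add (contDiffAt_const.mul (norm_pow_c2 σ hx0n))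
    have c3 : ContDiffAt ℝ 2 (fun y : E N => u y + K * ‖y‖ ^ σ + (-t) * ‖y‖ ^ τ) x₀ :=
      c2.add (contDiffAt_const.mul (norm_pow_c2 τ hx0n))
    have hL := ckn_lin (μ₁ := μ₁) (μ₂ := μ₂) (-t) c2 (norm_pow_c2 τ hx0n)
    rw [ckn_lin K c1 (norm_pow_c2 σ hx0n), ckn_norm_pow _ _ _ hx0n, ckn_norm_pow _ _ _ hx0n,
      hσ0, ← hd] at hL
    have hloc : IsLocalMin (fun y : E N => u y + K * ‖y‖ ^ σ + (-t) * ‖y‖ ^ τ) x₀ := by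
      filter_upwards [hAnhds] with y hy
      have := hmin' y hy
      linarith
    have hlap := lap_nonneg c3 hloc
    have hfd := hloc.fderiv_eq_zero
    have hz : u x₀ + K * ‖x₀‖ ^ σ + (-t) * ‖x₀‖ ^ τ = 0 := by linarith
    have hle : ckn N μ₁ μ₂ (fun y : E N => u y + K * ‖y‖ ^ σ + (-t) * ‖y‖ ^ τ) x₀ ≤ 0 := by
      unfold ckn
      rw [hfd]
      beta_reduce
      rw [hz]
      simpa using hlap
    have hs := (hglow x₀ (hAU x₀ hx₀)).trans (hsuper x₀ (hAU x₀ hx₀))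
    have hq : 0 < ‖x₀‖ ^ (τ - 2) := Real.rpow_pos_of_pos hn0 _
    have htd : t * d < ε * d := mul_lt_mul_of_pos_right hlt hdpos
    have hctd : 0 < c - t * d := by linarith
    have hfin := mul_pos hctd hq
    rw [hL] at hle
    have e3 : (c - t * d) * ‖x₀‖ ^ (τ - 2) = c * ‖x₀‖ ^ (τ - 2) - t * (d * ‖x₀‖ ^ (τ - 2)) := by
      ring
    rw [e3] at hfin
    linarith
  refine ⟨ε, hεpos, fun x hx => ?_⟩
  have hxn : 0 < ‖x‖ := norm_pos_iff.2 (by simpa using hx.2)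
  have hxr : ‖x‖ ≤ r / 2 := le_of_lt (by simpa using hx.1)
  have hlim : Tendsto (fun ρ : ℝ => u x + ε * ρ ^ (τ - σ) * ‖x‖ ^ σ) (𝓝[>] 0) (𝓝 (u x)) := by
    have h0 : ContinuousAt (fun ρ : ℝ => ρ ^ (τ - σ)) 0 :=
      Real.continuousAt_rpow_const _ _ (Or.inr (by linarith))
    have h1 : Tendsto (fun ρ : ℝ => ρ ^ (τ - σ)) (𝓝[>] 0) (𝓝 0) := by
      have := h0.tendsto
      rw [Real.zero_rpow (by linarith)] at this
      exact this.mono_left nhdsWithin_le_nhds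
    simpa using ((h1.const_mul ε).mul_const (‖x‖ ^ σ)).const_add (u x)
  refine ge_of_tendsto hlim ?_
  filter_upwards [Ioo_mem_nhdsGT hxn] with ρ hρ
  exact main ρ hρ.1 x hρ.2.le hxr
end
end
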